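/- arXiv:2202.06195 — 2 statements merged into one kernel-verified Lean document; each statement's English description precedes it below -/
import Mathlib

section
/- We have ∑_{n₁ > n₂ ≥ 0} 4^{n₁} / (binom(2n₁, n₁) · (2n₁−1)² · (2n₂+1)) = 14 β(4) − 16 · Im(∑_{n=1}^∞ ((1+i)/2)^n / n⁴) − (π (log 2)³)/12 − (3 π³ log 2)/16 + (π (log 2)²)/8 + 5π³/32 − 4 · Im(∑_{n=1}^∞ ((1+i)/2)^n / n³), where β(s) = ∑_{k=0}^∞ (−1)^k/(2k+1)^s is the Dirichlet beta function and the double sum is over integers n₁ > n₂ ≥ 0. -/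
namespace S13
noncomputable section
open Set Filter Topology

def Li (n : ℕ) (z : ℂ) : ℂ := ∑' k : ℕ, z ^ (k + 1) / ((k : ℂ) + 1) ^ n

lemma norm_term_le (n k : ℕ) : ‖((k : ℂ) + 1) ^ n‖ = ((k : ℝ) + 1) ^ n := by
  rw [norm_pow]
  congr 1
  have : ((k : ℂ) + 1) = ((k + 1 : ℕ) : ℂ) := by push_cast; ring
  rw [this, Complex.norm_natCast]; push_cast; ring

lemma one_le_term (n k : ℕ) : (1 : ℝ) ≤ ((k : ℝ) + 1) ^ n := by
  apply one_le_pow₀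
  have : (0 : ℝ) ≤ k := Nat.cast_nonneg k
  linarith

lemma Li_deriv' (n : ℕ) {z : ℂ} (hz : ‖z‖ < 1) :
    HasDerivAt (Li (n + 1)) (∑' k : ℕ, z ^ k / ((k : ℂ) + 1) ^ n) z := by
  obtain ⟨r, hr1, hr2⟩ := exists_between hz
  have hr0 : 0 ≤ r := (norm_nonneg z).trans hr1.le
  refine hasDerivAt_tsum_of_isPreconnected (u := fun k : ℕ => r ^ k) (t := Metric.ball 0 r)
    (g := fun k z => z ^ (k + 1) / ((k : ℂ) + 1) ^ (n + 1))
    (g' := fun k z => z ^ k / ((k : ℂ) + 1) ^ n) (y₀ := 0)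
    (summable_geometric_of_lt_one hr0 hr2) Metric.isOpen_ball
    (convex_ball 0 r).isPreconnected ?_ ?_ ?_ ?_ ?_
  · intro k y _
    have h := (hasDerivAt_pow (k + 1) y).div_const (((k : ℂ) + 1) ^ (n + 1))
    refine h.congr_deriv ?_
    have : ((k : ℂ) + 1) ≠ 0 := by exact_mod_cast Nat.succ_ne_zero k
    simp only [Nat.add_sub_cancel]
    push_cast
    rw [pow_succ]
    field_simp
  · intro k y hy
    rw [norm_div, norm_term_le, norm_pow]
    have hy' : ‖y‖ < r := by simpa using hy
    refine (div_le_self (by positivity) (one_le_term n k)).trans ?_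
    gcongr
  · simpa using lt_of_le_of_lt (norm_nonneg z) hr1
  · simp [summable_zero]
  · simpa using hr1

lemma Li_deriv (n : ℕ) {z : ℂ} (hz : ‖z‖ < 1) (h0 : z ≠ 0) :
    HasDerivAt (Li (n + 1)) (Li n z / z) z := by
  refine (Li_deriv' n hz).congr_deriv ?_
  rw [Li, ← tsum_div_const]
  refine tsum_congr fun k => ?_
  rw [pow_succ]; field_simp

lemma Li_zero (n : ℕ) : Li n 0 = 0 := by simp [Li]

lemma Li_one (z : ℂ) (hz : ‖z‖ < 1) : Li 1 z = -Complex.log (1 - z) := by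
  simpa [Li] using (Complex.hasSum_taylorSeries_neg_log' hz).tsum_eq

lemma summable_bound (n : ℕ) : Summable (fun k : ℕ => 1 / ((k : ℝ) + 1) ^ (n + 2)) := by
  have := (summable_nat_add_iff 1).2 (Real.summable_one_div_nat_pow.2 (by omega : 1 < n + 2))
  simpa using this

lemma Li_summable (n : ℕ) {z : ℂ} (hz : ‖z‖ ≤ 1) :
    Summable (fun k : ℕ => z ^ (k + 1) / ((k : ℂ) + 1) ^ (n + 2)) := by
  refine Summable.of_norm_bounded (summable_bound n) fun k => ?_
  rw [norm_div, norm_term_le, norm_pow]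
  have := one_le_term (n+2) k
  gcongr
  exact pow_le_one₀ (norm_nonneg _) hz

lemma Li_cont (n : ℕ) : ContinuousOn (Li (n + 2)) (Metric.closedBall 0 1) := by
  refine continuousOn_tsum (u := fun k : ℕ => 1 / ((k : ℝ) + 1) ^ (n + 2)) ?_ (summable_bound n) ?_
  · intro k; fun_prop
  · intro k z hz
    have hz' : ‖z‖ ≤ 1 := by simpa using hz
    rw [norm_div, norm_term_le, norm_pow]
    have := one_le_term (n+2) k
    gcongr
    exact pow_le_one₀ (norm_nonneg _) hz'

/-! ### paths -/
def ell (u : ℝ) : ℂ := Complex.log (1 + Complex.I * u)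
def zz (u : ℝ) : ℂ := -Complex.I * u
def AA (u : ℝ) : ℂ := Complex.I * u / (1 + Complex.I * u)
def cc (u : ℝ) : ℂ := 1 / (1 + Complex.I * u)
def aa (u : ℝ) : ℂ := (Real.log u : ℂ)
def at' (u : ℝ) : ℂ := (Real.log u : ℂ) + Complex.I * (Real.pi / 2)
def vv (u : ℝ) : ℂ := 1 / (u : ℂ)
def qq (u : ℝ) : ℂ := Complex.I / (1 + Complex.I * u)

lemma re1 (u : ℝ) : (1 + Complex.I * u).re = 1 := by simp
lemma slit1 (u : ℝ) : (1 + Complex.I * u) ∈ Complex.slitPlane := by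
  left; simp
lemma ne1 (u : ℝ) : (1 + Complex.I * u) ≠ 0 := Complex.slitPlane_ne_zero (slit1 u)

lemma norm1 (u : ℝ) : ‖(1 + Complex.I * u)‖ = √(1 + u ^ 2) := by
  rw [Complex.norm_def, Complex.normSq_apply]; simp; congr 1; ring

lemma ell_re (u : ℝ) : (ell u).re = Real.log (1 + u ^ 2) / 2 := by
  rw [ell, Complex.log_re, norm1, Real.log_sqrt (by positivity)]

lemma ell_im (u : ℝ) : (ell u).im = Real.arctan u := by
  rw [ell, Complex.log_im, Complex.arg, if_pos (by simp), norm1, Real.arctan_eq_arcsin]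
  simp

lemma norm_AA (u : ℝ) (h : 0 < u) : ‖AA u‖ < 1 := by
  rw [AA, norm_div, norm1]
  simp only [norm_mul, Complex.norm_I, one_mul, Complex.norm_real, Real.norm_eq_abs, abs_of_pos h]
  rw [div_lt_one (by positivity)]
  apply Real.lt_sqrt_of_sq_lt; linarith

lemma norm_cc_le (u : ℝ) : ‖cc u‖ ≤ 1 := by
  rw [cc, norm_div, norm1]
  simp only [norm_one]
  rw [div_le_one (by positivity)]
  apply Real.le_sqrt_of_sq_le; nlinarith [sq_nonneg u]

lemma norm_AA_le (u : ℝ) (h : 0 ≤ u) : ‖AA u‖ ≤ 1 := by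
  rcases h.eq_or_lt with h | h
  · subst h; simp [AA]
  · exact (norm_AA u h).le

lemma norm_cc (u : ℝ) (h : 0 < u) : ‖cc u‖ < 1 := by
  rw [cc, norm_div, norm1]
  simp only [norm_one]
  rw [div_lt_one (by positivity)]
  apply Real.lt_sqrt_of_sq_lt; nlinarith [sq_pos_of_pos h]

lemma norm_zz (u : ℝ) (h : 0 ≤ u) : ‖zz u‖ = u := by
  simp [zz, abs_of_nonneg h]

lemma d_ell (u : ℝ) : HasDerivAt ell (qq u) u := by
  have h : HasDerivAt (fun u : ℝ => 1 + Complex.I * (u : ℂ)) Complex.I u := by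
    simpa using ((Complex.ofRealCLM.hasDerivAt (x := u)).const_mul Complex.I).const_add 1
  exact h.clog_real (slit1 u)

lemma d_aa {u : ℝ} (h : 0 < u) : HasDerivAt aa (vv u) u := by
  have := (Real.hasDerivAt_log h.ne').ofReal_comp
  simpa [aa, vv] using! this

lemma d_at {u : ℝ} (h : 0 < u) : HasDerivAt at' (vv u) u := (d_aa h).add_const _

lemma d_one (u : ℝ) : HasDerivAt (fun u : ℝ => 1 + Complex.I * (u : ℂ)) Complex.I u := by
  simpa using ((Complex.ofRealCLM.hasDerivAt (x := u)).const_mul Complex.I).const_add 1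

lemma d_zz (n : ℕ) {u : ℝ} (h : 0 < u) (h1 : u < 1) :
    HasDerivAt (fun u => Li (n + 1) (zz u)) (Li n (zz u) * vv u) u := by
  have hz : HasDerivAt zz (-Complex.I) u := by
    have h := (Complex.ofRealCLM.hasDerivAt (x := u)).const_mul (-Complex.I)
    exact h.congr_deriv (by simp)
  have hu : (u : ℂ) ≠ 0 := by exact_mod_cast h.ne'
  have h0 : zz u ≠ 0 := by simp [zz, hu]
  refine (HasDerivAt.comp u (Li_deriv n (by rw [norm_zz u h.le]; exact h1) h0) hz).congr_deriv ?_
  rw [zz, vv]; field_simp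

lemma d_AA (n : ℕ) {u : ℝ} (h : 0 < u) :
    HasDerivAt (fun u => Li (n + 1) (AA u)) (Li n (AA u) * (vv u - qq u)) u := by
  have hn : HasDerivAt (fun u : ℝ => Complex.I * (u : ℂ)) Complex.I u := by
    simpa using ((Complex.ofRealCLM.hasDerivAt (x := u)).const_mul Complex.I)
  have hz := hn.div (d_one u) (ne1 u)
  have hu : (u : ℂ) ≠ 0 := by exact_mod_cast h.ne'
  have h0 : AA u ≠ 0 := by simp [AA, hu, ne1 u]
  refine (HasDerivAt.comp u (Li_deriv n (norm_AA u h) h0) hz).congr_deriv ?_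
  have := ne1 u
  rw [vv, qq, AA]; field_simp

lemma d_cc (n : ℕ) {u : ℝ} (h : 0 < u) :
    HasDerivAt (fun u => Li (n + 1) (cc u)) (-(Li n (cc u) * qq u)) u := by
  have hz := (hasDerivAt_const u (1:ℂ)).div (d_one u) (ne1 u)
  have hu : (u : ℂ) ≠ 0 := by exact_mod_cast h.ne'
  have h0 : cc u ≠ 0 := by simp [cc, ne1 u]
  refine (HasDerivAt.comp u (Li_deriv n (norm_cc u h) h0) hz).congr_deriv ?_
  have := ne1 u
  rw [qq, cc]; field_simp; ring

lemma Li1_AA {u : ℝ} (h : 0 < u) : Li 1 (AA u) = ell u := by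
  rw [Li_one _ (norm_AA u h), ell]
  have h1 : 1 - AA u = (1 + Complex.I * u)⁻¹ := by
    have := ne1 u
    rw [AA]; field_simp; ring
  rw [h1, Complex.log_inv, neg_neg]
  exact Complex.slitPlane_arg_ne_pi (slit1 u)

lemma Li1_zz {u : ℝ} (h : 0 < u) (h1 : u < 1) : Li 1 (zz u) = - ell u := by
  rw [Li_one _ (by rw [norm_zz u h.le]; exact h1), ell, zz]
  congr 2; ring

lemma Li1_cc {u : ℝ} (h : 0 < u) : Li 1 (cc u) = ell u - at' u := by
  rw [Li_one _ (norm_cc u h)]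
  have h1 : 1 - cc u = Complex.exp (at' u - ell u) := by
    have hne := ne1 u
    rw [Complex.exp_sub, at', ell, Complex.exp_log hne, Complex.exp_add, ← Complex.ofReal_exp,
      Real.exp_log h, mul_comm Complex.I, Complex.exp_pi_div_two_mul_I, cc]
    field_simp; ring
  have hat : (at' u).im = Real.pi / 2 := by
    simp [at', ← Complex.ofReal_ofNat]
  have hb := Real.arctan_lt_pi_div_two u
  have hb2 : 0 < Real.arctan u := Real.arctan_pos.2 h
  rw [h1, Complex.log_exp]
  · ring
  · rw [Complex.sub_im, hat, ell_im]; linarith [Real.pi_pos]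
  · rw [Complex.sub_im, hat, ell_im]; linarith [Real.pi_pos]

end
end S13

namespace S13
noncomputable section
open Set Filter Topology

lemma tendsto_logpow (k : ℕ) : Tendsto (fun u : ℝ => |Real.log u| ^ k * u) (𝓝[>] 0) (𝓝 0) := by
  have h1 : Tendsto (fun u : ℝ => - Real.log u) (𝓝[>] 0) atTop :=
    tendsto_neg_atBot_atTop.comp Real.tendsto_log_nhdsGT_zero
  have h2 := ((Real.tendsto_pow_mul_exp_neg_atTop_nhds_zero k).comp h1).abs
  rw [abs_zero] at h2
  refine h2.congr' ?_
  filter_upwards [self_mem_nhdsWithin] with u hu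
  have hu' : (0:ℝ) < u := hu
  simp [abs_mul, abs_pow, Real.exp_log hu', abs_of_pos hu']

abbrev Cn (f : ℝ → ℂ) : Prop := ContinuousOn f (Icc 0 1)

def Sm (f : ℝ → ℂ) : Prop := ∀ k : ℕ, Cn (fun u => aa u ^ k * f u)

lemma Sm.of_bound {f : ℝ → ℂ} (hf : Cn f) (C : ℝ) (hb : ∀ u ∈ Icc (0:ℝ) 1, ‖f u‖ ≤ C * u) :
    Sm f := by
  intro k u hu
  rcases hu.1.eq_or_lt with h0 | h0
  · subst h0
    have hf0 : f 0 = 0 := by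
      have := hb 0 hu
      simpa using this
    have : Tendsto (fun u => aa u ^ k * f u) (𝓝[>] 0) (𝓝 0) := by
      have h1 := (tendsto_logpow k).const_mul C
      rw [mul_zero] at h1
      apply squeeze_zero_norm' _ h1
      have : Ioc (0:ℝ) 1 ∈ 𝓝[>] (0:ℝ) := Ioc_mem_nhdsGT one_pos
      filter_upwards [this] with u hu
      have := hb u ⟨hu.1.le, hu.2⟩
      rw [norm_mul, norm_pow, aa, Complex.norm_real, Real.norm_eq_abs]
      calc _ ≤ |Real.log u| ^ k * (C * u) := by gcongr
        _ = _ := by ring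
    have h2 : ContinuousWithinAt (fun u => aa u ^ k * f u) (Ioi 0) 0 := by
      unfold ContinuousWithinAt
      simpa [hf0] using this
    have h3 : ContinuousWithinAt (fun u => aa u ^ k * f u) (Ici 0) 0 := by
      rw [← Ioi_insert]
      exact h2.insert
    exact h3.mono Icc_subset_Ici_self
  · have : ContinuousAt aa u := (d_aa h0).continuousAt
    exact (this.continuousWithinAt.pow k).mul (hf u hu)

lemma Sm.cont {f : ℝ → ℂ} (h : Sm f) : Cn f := by simpa using h 0
lemma Sm.add {f g : ℝ → ℂ} (hf : Sm f) (hg : Sm g) : Sm (fun u => f u + g u) := by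
  intro k
  refine ((hf k).add (hg k)).congr fun u _ => ?_
  simp only [Pi.add_apply]; ring
lemma Sm.mul {f g : ℝ → ℂ} (hf : Cn f) (hg : Sm g) : Sm (fun u => f u * g u) := by
  intro k
  refine (hf.mul (hg k)).congr fun u _ => ?_
  simp only [Pi.mul_apply]; ring
lemma Sm.aa {f : ℝ → ℂ} (hf : Sm f) : Sm (fun u => aa u * f u) := by
  intro k
  refine (hf (k+1)).congr fun u _ => ?_
  simp only; ring
lemma Sm.at {f : ℝ → ℂ} (hf : Sm f) : Sm (fun u => at' u * f u) := by
  have := hf.aa.add (Sm.mul (continuousOn_const (c := Complex.I * (Real.pi / 2))) hf)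
  intro k
  refine (this k).congr fun u _ => ?_
  simp only [at', S13.aa]; ring

lemma Li_bound (n : ℕ) : ∃ C : ℝ, ∀ z : ℂ, ‖z‖ ≤ 1 → ‖Li (n+2) z‖ ≤ C * ‖z‖ := by
  refine ⟨∑' k : ℕ, 1 / ((k : ℝ) + 1) ^ (n + 2), fun z hz => ?_⟩
  rw [← tsum_mul_right]
  refine tsum_of_norm_bounded ((summable_bound n).mul_right _).hasSum fun k => ?_
  rw [norm_div, norm_term_le, norm_pow, div_mul_eq_mul_div, one_mul]
  have := one_le_term (n+2) k
  gcongr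
  rw [pow_succ]
  exact mul_le_of_le_one_left (norm_nonneg _) (pow_le_one₀ (norm_nonneg _) hz)

lemma cn_zz (n : ℕ) : Cn (fun u => Li (n+2) (zz u)) := by
  refine (Li_cont n).comp (f := zz) (by unfold zz; fun_prop) fun u hu => ?_
  simpa [norm_zz u hu.1] using hu.2
lemma cn_AA (n : ℕ) : Cn (fun u => Li (n+2) (AA u)) := by
  refine (Li_cont n).comp (f := AA) ?_ fun u hu => ?_
  · unfold AA; refine ContinuousOn.div (by fun_prop) (by fun_prop) fun u _ => ne1 u
  · simpa using norm_AA_le u hu.1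
lemma cn_cc (n : ℕ) : Cn (fun u => Li (n+2) (cc u)) := by
  refine (Li_cont n).comp (f := cc) ?_ fun u hu => ?_
  · unfold cc; refine ContinuousOn.div (by fun_prop) (by fun_prop) fun u _ => ne1 u
  · simpa using norm_cc_le u
lemma cn_ell : Cn ell := fun u _ => (d_ell u).continuousAt.continuousWithinAt

lemma sm_zz (n : ℕ) : Sm (fun u => Li (n+2) (zz u)) := by
  obtain ⟨C, hC⟩ := Li_bound n
  refine Sm.of_bound (cn_zz n) C fun u hu => ?_
  have := hC (zz u) (by rw [norm_zz u hu.1]; exact hu.2)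
  rwa [norm_zz u hu.1] at this
lemma norm_AA_le' (u : ℝ) (hu : 0 ≤ u) : ‖AA u‖ ≤ u := by
  rw [AA, norm_div, norm1]
  simp only [norm_mul, Complex.norm_I, one_mul, Complex.norm_real, Real.norm_eq_abs,
    abs_of_nonneg hu]
  apply div_le_self hu
  rw [Real.one_le_sqrt]; nlinarith [sq_nonneg u]
lemma sm_AA (n : ℕ) : Sm (fun u => Li (n+2) (AA u)) := by
  obtain ⟨C, hC⟩ := Li_bound n
  have hC0 : 0 ≤ C := by
    have := hC 1 (by simp)
    simp only [norm_one, mul_one] at this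
    exact (norm_nonneg _).trans this
  refine Sm.of_bound (cn_AA n) C fun u hu => ?_
  have := hC (AA u) (norm_AA_le u hu.1)
  exact this.trans (mul_le_mul_of_nonneg_left (norm_AA_le' u hu.1) hC0)
lemma arctan_le (u : ℝ) (hu : 0 ≤ u) : Real.arctan u ≤ u := by
  have h := Real.le_tan (Real.arctan_nonneg.2 hu) (Real.arctan_lt_pi_div_two u)
  rwa [Real.tan_arctan] at h
lemma sm_ell : Sm ell := by
  refine Sm.of_bound cn_ell 2 fun u hu => ?_
  refine (Complex.norm_le_abs_re_add_abs_im _).trans ?_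
  rw [ell_re, ell_im, abs_of_nonneg, abs_of_nonneg]
  · have h1 := Real.log_le_sub_one_of_pos (show 0 < 1 + u^2 by positivity)
    have := arctan_le u hu.1
    nlinarith [hu.1, hu.2]
  · exact Real.arctan_nonneg.2 hu.1
  · have := Real.log_nonneg (show 1 ≤ 1 + u^2 by nlinarith [sq_nonneg u])
    linarith

lemma const_of_deriv {f : ℝ → ℂ} (hf : Cn f) (hd : ∀ u ∈ Ioo (0:ℝ) 1, HasDerivAt f 0 u) :
    ∀ u ∈ Icc (0:ℝ) 1, f u = f 0 := by
  intro u hu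
  have := intervalIntegral.integral_eq_sub_of_hasDerivAt_of_le (f := f) (f' := fun _ => 0) hu.1
    (hf.mono (Icc_subset_Icc_right hu.2)) (fun x hx => hd x ⟨hx.1, hx.2.trans_le hu.2⟩) (by simp)
  simp at this
  exact (sub_eq_zero.1 this.symm)

lemma ell_zero : ell 0 = 0 := by simp [ell]
lemma zz_zero : zz 0 = 0 := by simp [zz]
lemma AA_zero : AA 0 = 0 := by simp [AA]
lemma cc_zero : cc 0 = 1 := by simp [cc]

lemma landen2a : ∀ u ∈ Icc (0:ℝ) 1, Li 2 (AA u) + Li 2 (zz u) + ell u ^ 2 / 2 = 0 := by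
  intro u hu
  have := const_of_deriv (f := fun u => Li 2 (AA u) + Li 2 (zz u) + ell u ^ 2 / 2)
    (((cn_AA 0).add (cn_zz 0)).add ((cn_ell.pow 2).div_const 2)) ?_ u hu
  · simpa [ell_zero, zz_zero, AA_zero, Li_zero] using this
  · intro u hu
    refine (((d_AA 1 hu.1).add (d_zz 1 hu.1 hu.2)).add
      (((d_ell u).pow 2).div_const 2)).congr_deriv ?_
    rw [Li1_AA hu.1, Li1_zz hu.1 hu.2]; ring

lemma landen2b : ∀ u ∈ Icc (0:ℝ) 1,
    Li 2 (AA u) + Li 2 (cc u) - (at' u - ell u) * ell u = Li 2 1 := by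
  intro u hu
  have := const_of_deriv (f := fun u => Li 2 (AA u) + Li 2 (cc u) - (at' u - ell u) * ell u)
    ?_ ?_ u hu
  · simpa [ell_zero, zz_zero, AA_zero, Li_zero, cc_zero] using this
  · refine (((cn_AA 0).add (cn_cc 0)).sub (sm_ell.at.cont.sub (cn_ell.mul cn_ell))).congr
      fun u _ => ?_
    simp; ring
  · intro u hu
    refine (((d_AA 1 hu.1).add (d_cc 1 hu.1)).sub
      (((d_at hu.1).sub (d_ell u)).mul (d_ell u))).congr_deriv ?_
    rw [Li1_AA hu.1, Li1_cc hu.1]; simp; ring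

lemma landen3 : ∀ u ∈ Icc (0:ℝ) 1,
    Li 3 (AA u) + Li 3 (cc u) + Li 3 (zz u) + Li 2 1 * ell u
      + ell u ^ 2 * (at' u - ell u) / 2 + ell u ^ 3 / 6 = Li 3 1 := by
  intro u hu
  have := const_of_deriv (f := fun u => Li 3 (AA u) + Li 3 (cc u) + Li 3 (zz u) + Li 2 1 * ell u
      + ell u ^ 2 * (at' u - ell u) / 2 + ell u ^ 3 / 6)
    ?_ ?_ u hu
  · simpa [ell_zero, zz_zero, AA_zero, Li_zero, cc_zero] using this
  · refine (((((cn_AA 1).add (cn_cc 1)).add (cn_zz 1)).add (cn_ell.const_mul (Li 2 1))).add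
      (((Sm.mul cn_ell sm_ell).at.cont.sub (cn_ell.pow 3)).div_const 2) |>.add
      ((cn_ell.pow 3).div_const 6)).congr
      fun u _ => ?_
    simp; ring
  · intro u hu
    refine (((((d_AA 2 hu.1).add (d_cc 2 hu.1)).add (d_zz 2 hu.1 hu.2)).add
      ((d_ell u).const_mul (Li 2 1))).add
      ((((d_ell u).pow 2).mul ((d_at hu.1).sub (d_ell u))).div_const 2) |>.add
      (((d_ell u).pow 3).div_const 6)).congr_deriv ?_
    have h1 := landen2a u ⟨hu.1.le, hu.2.le⟩
    have h2 := landen2b u ⟨hu.1.le, hu.2.le⟩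
    simp
    linear_combination (vv u) * h1 - qq u * h2

lemma Li2_one : Li 2 1 = (Real.pi ^ 2 / 6 : ℝ) := by
  have h := (hasSum_nat_add_iff' 1).2 hasSum_zeta_two
  have h2 := (Complex.hasSum_ofReal.2 h).tsum_eq
  rw [Li]
  simp at h2
  simp
  exact h2

end
end S13

namespace S13
noncomputable section
open Set Filter Topology

def J1 (u : ℝ) : ℂ := - Li 2 (zz u)
def J2 (u : ℝ) : ℂ := -(aa u * Li 2 (zz u) - Li 3 (zz u))
def J3 (u : ℝ) : ℂ := -(aa u ^ 2 * Li 2 (zz u) - 2 * (aa u * Li 3 (zz u)) + 2 * Li 4 (zz u))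
def K2 (u : ℝ) : ℂ := -(2 * Li 3 (cc u) + 2 * (ell u * Li 2 (cc u)) + ell u ^ 2 * (ell u - at' u)
  - ell u ^ 3 / 3)
def K3 (u : ℝ) : ℂ := -(6 * Li 4 (cc u) + 6 * (ell u * Li 3 (cc u)) + 3 * (ell u ^ 2 * Li 2 (cc u))
  + ell u ^ 3 * (ell u - at' u) - ell u ^ 4 / 4)
def N0 (u : ℝ) : ℂ := Li 4 (AA u) - (at' u - ell u) * Li 3 (AA u)
  + (at' u - ell u) ^ 2 * Li 2 (AA u) / 2 - (at' u - ell u) ^ 3 * ell u / 6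
def N1 (u : ℝ) : ℂ := at' u ^ 3 * ell u - 3 / 2 * (at' u ^ 2 * ell u ^ 2) + at' u * ell u ^ 3
  - ell u ^ 4 / 4
def MM (u : ℝ) : ℂ := (-6 * N0 u - N1 u + 3 * (J3 u + Complex.I * Real.pi * J2 u
  - Real.pi ^ 2 / 4 * J1 u) + K3 u) / 3 - Complex.I * Real.pi / 2 * K2 u

lemma cn_J1 : Cn J1 := (cn_zz 0).neg
lemma cn_J2 : Cn J2 := ((sm_zz 0).aa.cont.sub (cn_zz 1)).neg
lemma cn_J3 : Cn J3 := by
  refine (((sm_zz 0).aa.aa.cont.sub ((sm_zz 1).aa.cont.const_mul 2)).add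
    ((cn_zz 2).const_mul 2)).neg.congr fun u _ => ?_
  simp [J3]; ring
lemma cn_K2 : Cn K2 := by
  refine ((((cn_cc 1).const_mul 2).add ((cn_ell.mul (cn_cc 0)).const_mul 2)).add
    ((cn_ell.pow 3).sub (Sm.mul cn_ell sm_ell).at.cont) |>.sub
      ((cn_ell.pow 3).div_const 3)).neg.congr fun u _ => ?_
  simp [K2]; ring
lemma cn_K3 : Cn K3 := by
  refine (((((cn_cc 2).const_mul 6).add ((cn_ell.mul (cn_cc 1)).const_mul 6)).add
    (((cn_ell.pow 2).mul (cn_cc 0)).const_mul 3)).add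
    ((cn_ell.pow 4).sub (Sm.mul (cn_ell.pow 2) sm_ell).at.cont) |>.sub
      ((cn_ell.pow 4).div_const 4)).neg.congr fun u _ => ?_
  simp [K3]; ring
lemma Sm.ll {f : ℝ → ℂ} (hf : Sm f) : Sm (fun u => (at' u - ell u) * f u) := by
  have := hf.at.add (Sm.mul cn_ell.neg hf)
  intro k
  refine (this k).congr fun u _ => ?_
  simp only [Pi.neg_apply]; ring
lemma cn_N0 : Cn N0 := by
  refine (((cn_AA 2).sub (sm_AA 1).ll.cont).add ((sm_AA 0).ll.ll.cont.div_const 2) |>.sub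
    (sm_ell.ll.ll.ll.cont.div_const 6)).congr fun u _ => ?_
  simp [N0]; ring
lemma cn_N1 : Cn N1 := by
  refine ((sm_ell.at.at.at.cont.sub ((Sm.mul cn_ell sm_ell).at.at.cont.const_mul (3/2))).add
    (Sm.mul (cn_ell.pow 2) sm_ell).at.cont |>.sub ((cn_ell.pow 4).div_const 4)).congr fun u _ => ?_
  simp [N1]; ring
lemma cn_MM : Cn MM :=
  ((((cn_N0.const_mul (-6)).sub cn_N1).add
    (((cn_J3.add (cn_J2.const_mul (Complex.I * Real.pi))).sub
      (cn_J1.const_mul (Real.pi ^ 2 / 4 : ℂ))).const_mul 3)).add cn_K3 |>.div_const 3).sub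
      (cn_K2.const_mul (Complex.I * Real.pi / 2))

variable {u : ℝ}
lemma d_J1 (h : 0 < u) (h1 : u < 1) : HasDerivAt J1 (ell u * vv u) u := by
  refine (d_zz 1 h h1).neg.congr_deriv ?_
  rw [Li1_zz h h1]; ring
lemma d_J2 (h : 0 < u) (h1 : u < 1) : HasDerivAt J2 (aa u * ell u * vv u) u := by
  refine (((d_aa h).mul (d_zz 1 h h1)).sub (d_zz 2 h h1)).neg.congr_deriv ?_
  rw [Li1_zz h h1]; ring
lemma d_J3 (h : 0 < u) (h1 : u < 1) : HasDerivAt J3 (aa u ^ 2 * ell u * vv u) u := by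
  refine (((((d_aa h).pow 2).mul (d_zz 1 h h1)).sub (((d_aa h).mul (d_zz 2 h h1)).const_mul 2)).add
    ((d_zz 3 h h1).const_mul 2)).neg.congr_deriv ?_
  rw [Li1_zz h h1]; simp; ring
lemma d_K2 (h : 0 < u) : HasDerivAt K2 (ell u ^ 2 * vv u) u := by
  refine (((((d_cc 2 h).const_mul 2).add (((d_ell u).mul (d_cc 1 h)).const_mul 2)).add
    (((d_ell u).pow 2).mul ((d_ell u).sub (d_at h)))).sub
      (((d_ell u).pow 3).div_const 3)).neg.congr_deriv ?_
  rw [Li1_cc h]; simp; ring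
lemma d_K3 (h : 0 < u) : HasDerivAt K3 (ell u ^ 3 * vv u) u := by
  refine ((((((d_cc 3 h).const_mul 6).add (((d_ell u).mul (d_cc 2 h)).const_mul 6)).add
    ((((d_ell u).pow 2).mul (d_cc 1 h)).const_mul 3)).add
    (((d_ell u).pow 3).mul ((d_ell u).sub (d_at h)))).sub
      (((d_ell u).pow 4).div_const 4)).neg.congr_deriv ?_
  rw [Li1_cc h]; simp; ring
lemma d_N0 (h : 0 < u) : HasDerivAt N0 (-(at' u - ell u) ^ 3 * qq u / 6) u := by
  have hL := (d_at h).sub (d_ell u)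
  refine ((((d_AA 3 h).sub (hL.mul (d_AA 2 h))).add (((hL.pow 2).mul (d_AA 1 h)).div_const 2)).sub
    (((hL.pow 3).mul (d_ell u)).div_const 6)).congr_deriv ?_
  rw [Li1_AA h]; simp; ring
lemma d_N1 (h : 0 < u) : HasDerivAt N1 ((at' u - ell u) ^ 3 * qq u
    + (3 * at' u ^ 2 * ell u - 3 * at' u * ell u ^ 2 + ell u ^ 3) * vv u) u := by
  refine (((((d_at h).pow 3).mul (d_ell u)).sub ((((d_at h).pow 2).mul ((d_ell u).pow 2)).const_mul
    (3/2))).add ((d_at h).mul ((d_ell u).pow 3)) |>.sub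
      (((d_ell u).pow 4).div_const 4)).congr_deriv ?_
  simp; ring
lemma d_MM (h : 0 < u) (h1 : u < 1) : HasDerivAt MM (aa u * ell u ^ 2 * vv u) u := by
  refine ((((((d_N0 h).const_mul (-6)).sub (d_N1 h)).add
    ((((d_J3 h h1).add ((d_J2 h h1).const_mul (Complex.I * Real.pi))).sub
      ((d_J1 h h1).const_mul (Real.pi ^ 2 / 4 : ℂ))).const_mul 3)).add (d_K3 h)).div_const 3 |>.sub
      ((d_K2 h).const_mul (Complex.I * Real.pi / 2))).congr_deriv ?_
  have : at' u = aa u + Complex.I * (Real.pi / 2) := rfl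
  rw [this]
  ring_nf
  simp only [Complex.I_sq]
  ring

def Ph (u : ℝ) : ℂ := J3 u - 2 * MM u + 4 / 3 * K3 u
  + ((Real.log 2 ^ 2 - Real.log 2 + Real.pi ^ 2 / 4 : ℝ) : ℂ) * J1 u
  + ((2 * Real.log 2 - 1 : ℝ) : ℂ) * J2 u + ((1 - 2 * Real.log 2 : ℝ) : ℂ) * K2 u
lemma cn_Ph : Cn Ph :=
  (((((cn_J3.sub (cn_MM.const_mul 2)).add (cn_K3.const_mul (4/3))).add (cn_J1.const_mul _)).add
    (cn_J2.const_mul _)).add (cn_K2.const_mul _))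
lemma d_Ph (h : 0 < u) (h1 : u < 1) : HasDerivAt Ph ((aa u ^ 2 * ell u - 2 * aa u * ell u ^ 2
    + 4 / 3 * ell u ^ 3 + ((Real.log 2 ^ 2 - Real.log 2 + Real.pi ^ 2 / 4 : ℝ) : ℂ) * ell u
    + ((2 * Real.log 2 - 1 : ℝ) : ℂ) * aa u * ell u
    + ((1 - 2 * Real.log 2 : ℝ) : ℂ) * ell u ^ 2) * vv u) u := by
  refine ((((((d_J3 h h1).sub ((d_MM h h1).const_mul 2)).add ((d_K3 h).const_mul (4/3))).add
    ((d_J1 h h1).const_mul _)).add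
    ((d_J2 h h1).const_mul _)).add ((d_K2 h).const_mul _)).congr_deriv ?_
  ring

def ss (u : ℝ) : ℝ := Real.log (2 * u / (1 + u ^ 2))

lemma ss_eq (h : 0 < u) : ss u = Real.log u + Real.log 2 - Real.log (1 + u ^ 2) := by
  rw [ss, Real.log_div (by positivity) (by positivity), Real.log_mul (by norm_num) h.ne']; ring

lemma ss_nonpos (h : 0 < u) : ss u ≤ 0 := by
  apply Real.log_nonpos (by positivity)
  rw [div_le_one (by positivity)]
  nlinarith [sq_nonneg (u - 1)]

def gV (u : ℝ) : ℝ := Real.arctan u * (ss u ^ 2 - ss u) / u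
def gT (u : ℝ) : ℝ := (Real.arctan u ^ 3 - 3 * Real.pi ^ 2 / 16 * Real.arctan u) / u

lemma d_ImPh (h : 0 < u) (h1 : u < 1) :
    HasDerivAt (fun u => (Ph u).im) (gV u - 4 / 3 * gT u) u := by
  have := (Complex.imCLM.hasFDerivAt).comp_hasDerivAt u (d_Ph h h1)
  refine this.congr_deriv ?_
  have he : ell u = ((Real.log (1 + u ^ 2) / 2 : ℝ) : ℂ) + (Real.arctan u : ℝ) * Complex.I := by
    apply Complex.ext <;> simp [ell_re, ell_im, -Complex.ofReal_arctan]
  have hv : vv u = ((1 / u : ℝ) : ℂ) := by simp [vv]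
  have h43 : (4 / 3 : ℂ) = ((4 / 3 : ℝ) : ℂ) := by norm_num
  have h2 : (2 : ℂ) = ((2 : ℝ) : ℂ) := by norm_num
  rw [he, hv, gV, gT, ss_eq h, aa, h43, h2]
  generalize Real.log u = a
  generalize Real.log (1 + u ^ 2) = p
  generalize Real.arctan u = t
  generalize Real.log 2 = l
  rw [Complex.imCLM_apply, Complex.im_mul_ofReal]
  simp only [pow_succ, pow_zero, one_mul, Complex.add_im, Complex.sub_im, Complex.mul_im,
    Complex.add_re, Complex.mul_re, Complex.ofReal_re, Complex.ofReal_im, Complex.I_re, Complex.I_im]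
  ring

lemma gV_nonneg (h : 0 < u) : 0 ≤ gV u := by
  have := ss_nonpos h
  have h3 := Real.arctan_nonneg.2 h.le
  unfold gV
  apply div_nonneg _ h.le
  apply mul_nonneg h3
  nlinarith [sq_nonneg (ss u)]

lemma arctan_le_pi4 (h1 : u ≤ 1) : Real.arctan u ≤ Real.pi / 4 := by
  rw [← Real.arctan_one]; exact Real.arctan_mono h1

lemma gT_nonpos (h : 0 < u) (h1 : u ≤ 1) : gT u ≤ 0 := by
  have h3 := Real.arctan_nonneg.2 h.le
  have h4 := arctan_le_pi4 h1
  apply div_nonpos_of_nonpos_of_nonneg _ h.le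
  have : Real.arctan u ^ 3 - 3 * Real.pi ^ 2 / 16 * Real.arctan u
    = Real.arctan u * (Real.arctan u ^ 2 - 3 * Real.pi ^ 2 / 16) := by ring
  rw [this]
  apply mul_nonpos_of_nonneg_of_nonpos h3
  nlinarith [Real.pi_pos]

open MeasureTheory in
lemma int_ImPh : IntegrableOn (fun u => gV u - 4 / 3 * gT u) (Ioc 0 1) ∧
    ∫ u in Ioc (0:ℝ) 1, (gV u - 4 / 3 * gT u) = (Ph 1).im - (Ph 0).im := by
  have hc : ContinuousOn (fun u => (Ph u).im) (Icc (0:ℝ) 1) :=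
    Complex.continuous_im.comp_continuousOn cn_Ph
  have h1 := intervalIntegral.integrableOn_deriv_of_nonneg hc (fun x hx => d_ImPh hx.1 hx.2)
    (fun x hx => by have := gV_nonneg hx.1; have := gT_nonpos hx.1 hx.2.le; linarith)
  refine ⟨h1, ?_⟩
  have h2 := intervalIntegral.integral_eq_sub_of_hasDerivAt_of_le zero_le_one hc
    (fun x hx => d_ImPh hx.1 hx.2) ((intervalIntegrable_iff_integrableOn_Ioc_of_le zero_le_one).2 h1)
  rwa [intervalIntegral.integral_of_le zero_le_one] at h2

end
end S13

namespace S13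
noncomputable section
open Set Filter Topology

def a1 : ℂ := (1 + Complex.I) / 2
def B4 : ℝ := ∑' k : ℕ, (-1 : ℝ) ^ k / (2 * (k : ℝ) + 1) ^ 4
def bet (n : ℕ) : ℝ := ∑' k : ℕ, (-1 : ℝ) ^ k / (2 * (k : ℝ) + 1) ^ n

lemma AA_one : AA 1 = a1 := by
  have := ne1 1
  simp only [Complex.ofReal_one, mul_one] at this
  simp [AA, a1]; field_simp; ring_nf; simp
lemma cc_one : cc 1 = (starRingEnd ℂ) a1 := by
  have := ne1 1
  simp only [Complex.ofReal_one, mul_one] at this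
  have h2 : (starRingEnd ℂ) 2 = 2 := Complex.conj_ofNat 2
  simp [cc, a1, h2]; field_simp; ring_nf; simp; ring
lemma Li_conj (n : ℕ) (z : ℂ) : Li n ((starRingEnd ℂ) z) = (starRingEnd ℂ) (Li n z) := by
  rw [Li, Li, Complex.conj_tsum]
  refine tsum_congr fun k => ?_
  simp
lemma ell_one : ell 1 = ((Real.log 2 / 2 : ℝ) : ℂ) + ((Real.pi / 4 : ℝ) : ℂ) * Complex.I := by
  apply Complex.ext
  · rw [ell_re, Complex.add_re, Complex.ofReal_re, Complex.re_ofReal_mul]; norm_num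
  · rw [ell_im, Complex.add_im, Complex.ofReal_im, Complex.im_ofReal_mul]; simp
lemma at_one : at' 1 = ((Real.pi / 2 : ℝ) : ℂ) * Complex.I := by simp [at']; ring
lemma aa_one : aa 1 = 0 := by simp [aa]
lemma zz_one : zz 1 = -Complex.I := by simp [zz]

lemma bet_summable (n : ℕ) : Summable (fun k : ℕ => (-1 : ℝ) ^ k / (2 * (k : ℝ) + 1) ^ (n+2)) := by
  refine Summable.of_norm_bounded (summable_bound n) fun k => ?_
  have h0 : (0:ℝ) ≤ k := Nat.cast_nonneg k
  rw [norm_div, norm_pow, norm_neg, norm_one, one_pow, Real.norm_eq_abs, abs_of_pos (by positivity)]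
  gcongr; linarith

lemma e1_aux (n k : ℕ) : ((-Complex.I) ^ (2 * k + 1) / (((2 * k : ℕ) : ℂ) + 1) ^ n).im =
      -((-1 : ℝ) ^ k / (2 * (k : ℝ) + 1) ^ n) := by
  have : (-Complex.I) ^ (2 * k + 1) / (((2 * k : ℕ) : ℂ) + 1) ^ n =
      ((-((-1 : ℝ) ^ k / (2 * (k : ℝ) + 1) ^ n) : ℝ) : ℂ) * Complex.I := by
    rw [pow_succ, pow_mul, neg_sq, Complex.I_sq]; push_cast; ring
  rw [this, Complex.im_ofReal_mul, Complex.I_im, mul_one]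

lemma e2_aux (n k : ℕ) : ((-Complex.I) ^ (2 * k + 1 + 1) / (((2 * k + 1 : ℕ) : ℂ) + 1) ^ n).im =
      0 := by
  have : (-Complex.I) ^ (2 * k + 1 + 1) / (((2 * k + 1 : ℕ) : ℂ) + 1) ^ n =
      (((-1 : ℝ) ^ (k+1) / (2 * (k : ℝ) + 1 + 1) ^ n : ℝ) : ℂ) := by
    rw [show 2 * k + 1 + 1 = 2 * (k + 1) by ring, pow_mul, neg_sq, Complex.I_sq]; push_cast; ring
  rw [this, Complex.ofReal_im]

lemma Li_negI_im (n : ℕ) : (Li (n+2) (-Complex.I)).im = - bet (n+2) := by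
  have hn : ‖-Complex.I‖ ≤ 1 := by rw [norm_neg, Complex.norm_I]
  have hs := Li_summable n hn
  have h5 : (Li (n+2) (-Complex.I)).im = _ := Complex.im_tsum hs
  have hs' : Summable (fun k : ℕ => ((-Complex.I) ^ (k + 1) / ((k : ℂ) + 1) ^ (n + 2)).im) :=
    (Complex.hasSum_im hs.hasSum).summable
  generalize hf : (fun k : ℕ => ((-Complex.I) ^ (k + 1) / ((k : ℂ) + 1) ^ (n + 2)).im) = f at *
  have h2 : Function.Injective (fun k : ℕ => 2 * k) := fun a b h => by
    simp only at h; omega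
  have h3 : Function.Injective (fun k : ℕ => 2 * k + 1) := fun a b h => by
    simp only at h; omega
  have h4 := tsum_even_add_odd (hs'.comp_injective h2) (hs'.comp_injective h3)
  have e1 : ∀ k, f (2 * k) = -((-1 : ℝ) ^ k / (2 * (k : ℝ) + 1) ^ (n+2)) := by
    intro k; rw [← hf]; exact e1_aux (n+2) k
  have e2 : ∀ k, f (2 * k + 1) = 0 := by
    intro k; rw [← hf]; exact e2_aux (n+2) k
  simp only [Function.comp_apply, e1, e2, tsum_zero, add_zero] at h4
  rw [h5, ← h4, bet, ← tsum_neg]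

lemma Li_one_im (n : ℕ) : (Li n 1).im = 0 := by
  have := Li_conj n 1
  rw [map_one] at this
  exact (Complex.conj_eq_iff_im.1 this.symm)

end
end S13

namespace S13
noncomputable section
open Set Filter Topology

lemma landen1 : 2 * (Li 3 a1).re + (Li 3 (-Complex.I)).re = (Li 3 1).re
    - (Real.pi ^ 2 / 6 * (Real.log 2 / 2)
      + ((ell 1) ^ 2 * (at' 1 - ell 1) / 2 + ell 1 ^ 3 / 6).re) := by
  have h := congrArg Complex.re (landen3 1 (by simp))
  rw [AA_one, cc_one, zz_one, Li_conj, Li2_one] at h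
  simp only [Complex.add_re, Complex.conj_re, Complex.re_ofReal_mul, ell_re] at h ⊢
  norm_num at h ⊢
  linarith

lemma Ph_zero_im : (Ph 0).im = -2 * Real.pi * (Li 3 1).re := by
  have e4 : Li 4 1 = ((Li 4 1).re : ℂ) := (Complex.conj_eq_iff_re.1 (by rw [← Li_conj, map_one])).symm
  have e3 : Li 3 1 = ((Li 3 1).re : ℂ) := (Complex.conj_eq_iff_re.1 (by rw [← Li_conj, map_one])).symm
  simp only [Ph, J3, MM, K3, J1, J2, K2, N0, N1, ell_zero, zz_zero, AA_zero, cc_zero, Li_zero]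
  rw [e4, e3]
  generalize (Li 4 1).re = x4
  generalize (Li 3 1).re = x3
  have h43 : (4 / 3 : ℂ) = ((4 / 3 : ℝ) : ℂ) := by norm_num
  have h2 : (2 : ℂ) = ((2 : ℝ) : ℂ) := by norm_num
  have h3 : (3 : ℂ) = ((3 : ℝ) : ℂ) := by norm_num
  have h6 : (6 : ℂ) = ((6 : ℝ) : ℂ) := by norm_num
  rw [h43, h2, h3, h6]
  simp only [div_eq_mul_inv, ← Complex.ofReal_inv, Complex.add_im, Complex.sub_im, Complex.mul_im,
    Complex.add_re, Complex.mul_re, Complex.ofReal_re, Complex.ofReal_im, Complex.I_re, Complex.I_im,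
    Complex.neg_im, Complex.neg_re, Complex.sub_re, Complex.zero_re, Complex.zero_im, mul_zero, zero_mul, ne_eq, OfNat.ofNat_ne_zero, not_false_eq_true, zero_pow]
  ring

lemma odd_sum {f g : ℕ → ℝ} {s : ℝ} (h : HasSum f s) (e1 : ∀ k, f (2 * k) = 0)
    (e2 : ∀ k, f (2 * k + 1) = g k) : ∑' k, g k = s := by
  have h2 : Function.Injective (fun k : ℕ => 2 * k) := fun a b h => by
    simp only at h; omega
  have h3 : Function.Injective (fun k : ℕ => 2 * k + 1) := fun a b h => by
    simp only at h; omega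
  have h4 := tsum_even_add_odd (h.summable.comp_injective h2) (h.summable.comp_injective h3)
  rw [h.tsum_eq] at h4
  simpa [e1, e2] using h4

lemma bet3 : bet 3 = Real.pi ^ 3 / 32 := by
  refine odd_sum hasSum_L_function_mod_four_eval_three ?_ ?_
  · intro k
    have : Real.pi * ((2 * k : ℕ) : ℝ) / 2 = k * Real.pi := by push_cast; ring
    rw [this, Real.sin_nat_mul_pi, mul_zero]
  · intro k
    have : Real.pi * ((2 * k + 1 : ℕ) : ℝ) / 2 = Real.pi / 2 + k * Real.pi := by push_cast; ring
    rw [this, Real.sin_add_nat_mul_pi, Real.sin_pi_div_two]; push_cast; ring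

lemma endpoint : (Ph 1).im - (Ph 0).im = -2 * bet 4 + 8 * (Li 4 a1).im
   + Real.pi * Real.log 2 ^ 3 / 24 + Real.pi ^ 3 * Real.log 2 / 32 - Real.pi ^ 3 / 64
   - Real.pi * Real.log 2 ^ 2 / 16 + 2 * (Li 3 a1).im := by
  rw [Ph_zero_im]
  have hl := landen1
  have ha := landen2a 1 (by simp)
  have hb := landen2b 1 (by simp)
  have hb3 := bet3
  rw [AA_one, zz_one] at ha
  rw [AA_one, cc_one, Li_conj, Li2_one] at hb
  have i2 := Li_negI_im 0
  have i3 := Li_negI_im 1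
  have i4 := Li_negI_im 2
  simp only [zero_add, Nat.reduceAdd] at i2 i3 i4
  simp only [Ph, J3, MM, K3, J1, J2, K2, N0, N1, zz_one, AA_one, cc_one, Li_conj, aa_one]
  rw [ell_one, at_one] at *
  have e4 : Li 4 a1 = ((Li 4 a1).re : ℂ) + ((Li 4 a1).im : ℂ) * Complex.I := (Complex.re_add_im _).symm
  have e3 : Li 3 a1 = ((Li 3 a1).re : ℂ) + ((Li 3 a1).im : ℂ) * Complex.I := (Complex.re_add_im _).symm
  have e2 : Li 2 a1 = ((Li 2 a1).re : ℂ) + ((Li 2 a1).im : ℂ) * Complex.I := (Complex.re_add_im _).symm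
  have f4 : Li 4 (-Complex.I) = ((Li 4 (-Complex.I)).re : ℂ) + ((Li 4 (-Complex.I)).im : ℂ) * Complex.I := (Complex.re_add_im _).symm
  have f3 : Li 3 (-Complex.I) = ((Li 3 (-Complex.I)).re : ℂ) + ((Li 3 (-Complex.I)).im : ℂ) * Complex.I := (Complex.re_add_im _).symm
  have f2 : Li 2 (-Complex.I) = ((Li 2 (-Complex.I)).re : ℂ) + ((Li 2 (-Complex.I)).im : ℂ) * Complex.I := (Complex.re_add_im _).symm
  generalize (Li 4 a1).re = x4 at *
  generalize (Li 3 a1).re = x3 at *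
  generalize (Li 2 a1).re = x2 at *
  generalize (Li 4 a1).im = y4 at *
  generalize (Li 3 a1).im = y3 at *
  generalize (Li 2 a1).im = y2 at *
  generalize (Li 4 (-Complex.I)).re = m4 at *
  generalize (Li 3 (-Complex.I)).re = m3 at *
  generalize (Li 2 (-Complex.I)).re = m2 at *
  rw [i4] at f4
  rw [i3] at f3
  rw [i2] at f2
  rw [e2, f2] at ha
  rw [e2] at hb
  rw [e4, e3, e2, f4, f3, f2]
  have h2 : (2 : ℂ) = ((2 : ℝ) : ℂ) := by norm_num
  have h3 : (3 : ℂ) = ((3 : ℝ) : ℂ) := by norm_num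
  have h6 : (6 : ℂ) = ((6 : ℝ) : ℂ) := by norm_num
  have h4 : (4 : ℂ) = ((4 : ℝ) : ℂ) := by norm_num
  rw [h2] at ha
  rw [h2, h6] at hl
  rw [h2, h3, h4, h6]
  have ha1 := congrArg Complex.re ha
  have ha2 := congrArg Complex.im ha
  have hb1 := congrArg Complex.re hb
  clear ha hb e4 e3 e2 f4 f3 f2 h2 h3 h4 h6 i2 i3 i4
  rw [hb3]
  simp only [pow_succ, pow_zero, one_mul, div_eq_mul_inv, ← Complex.ofReal_inv, Complex.add_im, Complex.sub_im, Complex.mul_im,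
    Complex.add_re, Complex.mul_re, Complex.ofReal_re, Complex.ofReal_im, Complex.I_re, Complex.I_im, map_add, map_mul, Complex.conj_I, Complex.conj_ofReal, mul_zero, zero_mul, sub_zero, zero_sub, add_zero, zero_add, mul_one, 
    Complex.neg_im, Complex.neg_re, Complex.sub_re, Complex.zero_re, Complex.zero_im] at ha1 ha2 hb1 hl ⊢
  ring_nf at ha1 ha2 hb1 hl ⊢
  linear_combination (-2*Real.pi) * hl + (-(Real.log 2) * Real.pi / 2 - Real.pi / 4) * hb1
    + (Real.log 2 - Real.log 2 ^ 2 - 3 * Real.pi ^ 2 / 4) * ha2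

end
end S13

namespace S13
noncomputable section
open Set Filter Topology MeasureTheory
open scoped FourierTransform

lemma sin_two_arctan (u : ℝ) : Real.sin (2 * Real.arctan u) = 2 * u / (1 + u ^ 2) := by
  rw [Real.sin_two_mul, Real.sin_arctan, Real.cos_arctan]
  have h : (0:ℝ) ≤ 1 + u ^ 2 := by positivity
  have h2 : √(1 + u ^ 2) ≠ 0 := by positivity
  field_simp
  rw [Real.sq_sqrt h]

def kk (x : ℝ) : ℝ := (x ^ 3 - 3 * Real.pi ^ 2 / 4 * x) / Real.sin x

lemma image_arctan : (fun u => 2 * Real.arctan u) '' Ioo 0 1 = Ioo 0 (Real.pi / 2) := by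
  ext x
  constructor
  · rintro ⟨u, hu, rfl⟩
    have h1 : 0 < Real.arctan u := Real.arctan_pos.2 hu.1
    have h2 : Real.arctan u < Real.pi / 4 := by
      rw [← Real.arctan_one]; exact Real.arctan_strictMono hu.2
    exact ⟨by simp only; linarith, by simp only; linarith⟩
  · intro hx
    have h3 : Real.arctan (Real.tan (x / 2)) = x / 2 :=
      Real.arctan_tan (by linarith [hx.1, Real.pi_pos]) (by linarith [hx.2, Real.pi_pos])
    refine ⟨Real.tan (x / 2), ⟨?_, ?_⟩, ?_⟩
    · rw [← Real.arctan_pos, h3]; linarith [hx.1]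
    · rw [← Real.arctan_strictMono.lt_iff_lt, h3, Real.arctan_one]; linarith [hx.2]
    · simp only [h3]; ring

lemma inj_arctan : InjOn (fun u => 2 * Real.arctan u) (Ioo 0 1) := by
  intro a _ b _ h
  apply Real.arctan_injective
  simp only at h; linarith

lemma der_arctan (u : ℝ) : HasDerivAt (fun u => 2 * Real.arctan u) (2 / (1 + u ^ 2)) u := by
  refine ((Real.hasDerivAt_arctan u).const_mul 2).congr_deriv ?_
  ring

lemma kk_arctan {u : ℝ} (hu : u ∈ Ioo (0:ℝ) 1) :
    |2 / (1 + u ^ 2)| • kk (2 * Real.arctan u) = 8 * gT u := by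
  have h0 : u ≠ 0 := hu.1.ne'
  rw [kk, sin_two_arctan, gT, abs_of_pos (by positivity), smul_eq_mul]
  field_simp
  ring

lemma kk_bound {x : ℝ} (hx : x ∈ Ioo 0 (Real.pi / 2)) : ‖kk x‖ ≤ Real.pi ^ 3 := by
  have hp := Real.pi_pos
  have h1 := Real.mul_le_sin hx.1.le hx.2.le
  have h2 : 0 < Real.sin x := Real.sin_pos_of_pos_of_lt_pi hx.1 (by linarith [hx.2])
  rw [kk, norm_div, Real.norm_eq_abs, Real.norm_eq_abs, abs_of_pos h2, div_le_iff₀ h2]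
  have h4 : x ^ 2 ≤ (Real.pi / 2) ^ 2 := by
    have := hx.1; have := hx.2; gcongr
  have h5 : |x ^ 3 - 3 * Real.pi ^ 2 / 4 * x| ≤ Real.pi ^ 2 * x := by
    rw [abs_le]; constructor <;> nlinarith [hx.1, sq_nonneg x, mul_nonneg hx.1.le (sq_nonneg x), mul_nonneg hx.1.le (sub_nonneg.2 h4), mul_nonneg hx.1.le (sq_nonneg Real.pi)]
  have h6 : Real.pi ^ 3 * (2 / Real.pi * x) = 2 * Real.pi ^ 2 * x := by field_simp
  have h7 := mul_le_mul_of_nonneg_left h1 (by positivity : 0 ≤ Real.pi ^ 3)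
  nlinarith [mul_nonneg hx.1.le (sq_nonneg Real.pi)]

lemma kk_meas : Measurable kk := by unfold kk; fun_prop

lemma kk_int : IntegrableOn kk (Ioo 0 (Real.pi / 2)) := by
  refine Measure.integrableOn_of_bounded (M := Real.pi ^ 3) (by simp) kk_meas.aestronglyMeasurable ?_
  filter_upwards [ae_restrict_mem measurableSet_Ioo] with x hx using kk_bound hx

lemma gT_int : IntegrableOn gT (Ioo 0 1) := by
  have h := (integrableOn_image_iff_integrableOn_abs_deriv_smul measurableSet_Ioo
    (fun x _ => (der_arctan x).hasDerivWithinAt) inj_arctan kk).1 (by rw [image_arctan]; exact kk_int)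
  have h2 : IntegrableOn (fun u => 8 * gT u) (Ioo 0 1) :=
    h.congr_fun (fun u hu => kk_arctan hu) measurableSet_Ioo
  have h3 := h2.const_mul (1/8)
  refine IntegrableOn.congr_fun h3 (fun u _ => by simp) measurableSet_Ioo

lemma gT_kk : ∫ x in Ioo 0 (Real.pi / 2), kk x = 8 * ∫ u in Ioo (0:ℝ) 1, gT u := by
  rw [← image_arctan, integral_image_eq_integral_abs_deriv_smul measurableSet_Ioo
    (fun x _ => (der_arctan x).hasDerivWithinAt) inj_arctan kk, ← integral_const_mul]
  exact setIntegral_congr_fun measurableSet_Ioo fun u hu => kk_arctan hu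

lemma int_sin (j : ℕ) : ∫ x in (0:ℝ)..(Real.pi / 2), (x ^ 3 - 3 * Real.pi ^ 2 / 4 * x) *
    Real.sin ((2 * j + 1) * x) = -6 * ((-1) ^ j / (2 * (j:ℝ) + 1) ^ 4) := by
  set m : ℝ := 2 * j + 1 with hm
  have hm0 : m ≠ 0 := by positivity
  set c := 3 * Real.pi ^ 2 / 4 with hc
  have hd : ∀ x : ℝ, HasDerivAt (fun x => -(x ^ 3 - c * x) * Real.cos (m * x) / m
      + (3 * x ^ 2 - c) * Real.sin (m * x) / m ^ 2 + 6 * x * Real.cos (m * x) / m ^ 3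
      - 6 * Real.sin (m * x) / m ^ 4) ((x ^ 3 - c * x) * Real.sin (m * x)) x := by
    intro x
    have hl : HasDerivAt (fun x : ℝ => m * x) m x := by simpa using (hasDerivAt_id x).const_mul m
    have hs := hl.sin
    have hcos := hl.cos
    have h1 : HasDerivAt (fun x : ℝ => -(x ^ 3 - c * x)) (-(3 * x ^ 2 - c)) x := by
      simpa using! ((hasDerivAt_pow 3 x).sub ((hasDerivAt_id x).const_mul c)).neg
    have h2 : HasDerivAt (fun x : ℝ => 3 * x ^ 2 - c) (6 * x) x := by
      refine (((hasDerivAt_pow 2 x).const_mul 3).sub_const c).congr_deriv (by simp; ring)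
    have h3 : HasDerivAt (fun x : ℝ => 6 * x) 6 x := by simpa using (hasDerivAt_id x).const_mul 6
    refine (((h1.mul hcos).div_const m).add ((h2.mul hs).div_const (m^2)) |>.add
      ((h3.mul hcos).div_const (m^3)) |>.sub ((hs.const_mul 6).div_const (m^4))).congr_deriv ?_
    field_simp
    ring
  rw [intervalIntegral.integral_eq_sub_of_hasDerivAt (fun x _ => hd x)]
  · have e : m * (Real.pi / 2) = Real.pi / 2 + j * Real.pi := by rw [hm]; ring
    rw [e, Real.sin_add_nat_mul_pi, Real.cos_add_nat_mul_pi, Real.cos_pi_div_two,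
      Real.sin_pi_div_two]
    simp only [mul_zero, Real.sin_zero, zero_div]
    have : 3 * (Real.pi / 2) ^ 2 - c = 0 := by rw [hc]; ring
    rw [this]
    ring
  · apply Continuous.intervalIntegrable; fun_prop

lemma sum_sin (N : ℕ) (x : ℝ) : ∑ j ∈ Finset.range N, 2 * Real.sin ((2 * j + 1) * x) * Real.sin x
    = 1 - Real.cos (2 * N * x) := by
  induction N with
  | zero => simp
  | succ n ih =>
    rw [Finset.sum_range_succ, ih]
    have e1 : 2 * ((n + 1 : ℕ) : ℝ) * x = (2 * n + 1) * x + x := by push_cast; ring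
    have e2 : 2 * (n : ℝ) * x = (2 * n + 1) * x - x := by ring
    rw [e1, e2, Real.cos_add, Real.cos_sub]; ring

lemma kk_cos (N : ℕ) : ∫ x in Ioo 0 (Real.pi / 2), kk x * (1 - Real.cos (2 * N * x))
    = -12 * ∑ j ∈ Finset.range N, ((-1) ^ j / (2 * (j:ℝ) + 1) ^ 4) := by
  have h1 : ∫ x in Ioo 0 (Real.pi / 2), kk x * (1 - Real.cos (2 * N * x)) =
      ∫ x in (0:ℝ)..(Real.pi / 2), ∑ j ∈ Finset.range N, 2 * ((x ^ 3 - 3 * Real.pi ^ 2 / 4 * x) *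
    Real.sin ((2 * j + 1) * x)) := by
    rw [intervalIntegral.integral_of_le (by positivity), integral_Ioc_eq_integral_Ioo]
    refine setIntegral_congr_fun measurableSet_Ioo fun x hx => ?_
    have h2 : Real.sin x ≠ 0 :=
      (Real.sin_pos_of_pos_of_lt_pi hx.1 (by linarith [hx.2, Real.pi_pos])).ne'
    rw [← sum_sin, Finset.mul_sum]
    refine Finset.sum_congr rfl fun j _ => ?_
    rw [kk]; field_simp
  rw [h1, intervalIntegral.integral_finsetSum]
  · rw [Finset.mul_sum]
    refine Finset.sum_congr rfl fun j _ => ?_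
    rw [intervalIntegral.integral_const_mul, int_sin]; ring
  · intro j _
    apply Continuous.intervalIntegrable; fun_prop

lemma kk_RL : Tendsto (fun N : ℕ => ∫ x in Ioo 0 (Real.pi / 2), kk x * Real.cos (2 * N * x)) atTop
    (𝓝 0) := by
  have h := Real.tendsto_integral_exp_smul_cocompact
    (fun x => (((Ioo 0 (Real.pi / 2)).indicator kk x : ℝ) : ℂ))
  have h2 : Tendsto (fun N : ℕ => (N : ℝ) / Real.pi) atTop (cocompact ℝ) :=
    (tendsto_natCast_atTop_atTop.atTop_div_const Real.pi_pos).mono_right atTop_le_cocompact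
  have h3 := (Complex.continuous_re.tendsto 0).comp (h.comp h2)
  rw [Complex.zero_re] at h3
  refine h3.congr fun N => ?_
  simp only [Function.comp]
  have hi : Integrable (fun x => (((Ioo 0 (Real.pi / 2)).indicator kk x : ℝ) : ℂ)) :=
    (kk_int.integrable_indicator measurableSet_Ioo).ofReal
  have hre := Complex.reCLM.integral_comp_comm
    ((Real.fourierIntegral_convergent_iff ((N : ℝ) / Real.pi)).2 hi)
  have e : ∀ x : ℝ, inner ℝ x ((N : ℝ) / Real.pi) = x * ((N : ℝ) / Real.pi) := by
    intro x; simp [mul_comm]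
  simp only [e, Complex.reCLM_apply] at hre
  rw [← hre, ← integral_indicator measurableSet_Ioo]
  congr 1
  ext x
  rw [Circle.smul_def, smul_eq_mul, Real.fourierChar_apply, Complex.re_mul_ofReal,
    Complex.exp_ofReal_mul_I_re]
  have e2 : 2 * Real.pi * -(x * (N / Real.pi)) = -(2 * N * x) := by
    have := Real.pi_ne_zero
    field_simp
  rw [e2, Real.cos_neg]
  by_cases hx : x ∈ Ioo 0 (Real.pi / 2)
  · simp [indicator_of_mem hx]; ring
  · simp [indicator_of_notMem hx]

lemma T3 : ∫ u in Ioo (0:ℝ) 1, gT u = -(3/2) * bet 4 := by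
  have h1 : ∀ N : ℕ, ∫ x in Ioo 0 (Real.pi / 2), kk x =
     -12 * ∑ j ∈ Finset.range N, ((-1) ^ j / (2 * (j:ℝ) + 1) ^ 4) +
      ∫ x in Ioo 0 (Real.pi / 2), kk x * Real.cos (2 * N * x) := by
    intro N
    have hc : IntegrableOn (fun x => kk x * Real.cos (2 * N * x)) (Ioo 0 (Real.pi / 2)) := by
      refine Integrable.mul_bdd (c := 1) kk_int (by fun_prop) ?_
      filter_upwards with x using by simpa using Real.abs_cos_le_one _
    rw [← kk_cos, ← integral_add]
    · congr 1; ext x; ring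
    · have := kk_int.sub hc
      refine this.congr ?_
      filter_upwards with x
      simp; ring
    · exact hc
  have h2 := (((bet_summable 2).hasSum.tendsto_sum_nat).const_mul (-12)).add kk_RL
  have h3 := tendsto_nhds_unique (tendsto_const_nhds.congr h1) h2
  rw [gT_kk] at h3
  have : (∑' k : ℕ, (-1 : ℝ) ^ k / (2 * (k : ℝ) + 1) ^ (2+2)) = bet 4 := rfl
  rw [this] at h3
  linarith

end
end S13

namespace S13
noncomputable section
open Set Filter Topology MeasureTheory

def VV : ℝ := (-8 * bet 4 + 16 * (Li 4 a1).im + Real.pi * Real.log 2 ^ 3 / 12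
  + Real.pi ^ 3 * Real.log 2 / 16 - Real.pi ^ 3 / 32 - Real.pi * Real.log 2 ^ 2 / 8
  + 4 * (Li 3 a1).im) / 2

lemma gV_int : IntegrableOn gV (Ioo 0 1) ∧ ∫ u in Ioo (0:ℝ) 1, gV u = VV := by
  obtain ⟨h1, h2⟩ := int_ImPh
  rw [integrableOn_Ioc_iff_integrableOn_Ioo] at h1
  rw [integral_Ioc_eq_integral_Ioo] at h2
  have h3 := gT_int.const_mul (4/3)
  have h4 := Integrable.add h1 h3
  have e : (fun u => gV u - 4 / 3 * gT u) + (fun u => 4/3 * gT u) = gV := by ext; simp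
  rw [e] at h4
  refine ⟨h4, ?_⟩
  have h5 := integral_sub h4 h3
  rw [h5, integral_const_mul, T3, endpoint] at h2
  rw [VV]; linarith

lemma ftc {a b : ℝ} (hab : a ≤ b) {g g' : ℝ → ℝ} (hc : ContinuousOn g (Icc a b))
    (hd : ∀ x ∈ Ioo a b, HasDerivAt g (g' x) x) (hn : ∀ x ∈ Ioo a b, 0 ≤ g' x) :
    IntegrableOn g' (Ioo a b) ∧ ∫ x in Ioo a b, g' x = g b - g a ∧ 0 ≤ g b - g a ∧
    ∫⁻ x in Ioo a b, ENNReal.ofReal (g' x) = ENNReal.ofReal (g b - g a) := by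
  have h1 := intervalIntegral.integrableOn_deriv_of_nonneg hc hd hn
  have h2 := intervalIntegral.integral_eq_sub_of_hasDerivAt_of_le hab hc
    hd ((intervalIntegrable_iff_integrableOn_Ioc_of_le hab).2 h1)
  rw [intervalIntegral.integral_of_le hab, integral_Ioc_eq_integral_Ioo] at h2
  rw [integrableOn_Ioc_iff_integrableOn_Ioo] at h1
  have hn' : 0 ≤ᵐ[volume.restrict (Ioo a b)] g' := by
    filter_upwards [ae_restrict_mem measurableSet_Ioo] with x hx using hn x hx
  refine ⟨h1, h2, ?_, ?_⟩
  · rw [← h2]; exact integral_nonneg_of_ae hn'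
  · rw [← h2, ofReal_integral_eq_lintegral_ofReal h1 hn']

lemma xlog_cont (k : ℕ) : ContinuousOn (fun u : ℝ => u * Real.log u ^ k) (Icc 0 1) := by
  have h : Sm (fun u : ℝ => (u : ℂ)) := by
    refine Sm.of_bound (by unfold Cn; fun_prop) 1 fun u hu => ?_
    simp [abs_of_nonneg hu.1]
  have := Complex.continuous_re.comp_continuousOn (h k)
  refine this.congr fun u _ => ?_
  simp only [Function.comp, aa]
  rw [← Complex.ofReal_pow, ← Complex.ofReal_mul, Complex.ofReal_re]; ring

lemma xlog_cont' (n k : ℕ) : ContinuousOn (fun u : ℝ => u ^ (n+1) * Real.log u ^ k) (Icc 0 1) := by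
  refine ((continuousOn_id.pow n).mul (xlog_cont k)).congr fun u _ => ?_
  simp; ring

/-- `∫ τ^{2m}(1 - log τ)` -/
lemma int_tau (m : ℕ) : ∫⁻ x in Ioo (0:ℝ) 1, ENNReal.ofReal (x ^ (2 * m) * (1 - Real.log x)) =
    ENNReal.ofReal (2 * (m + 1) / (2 * m + 1) ^ 2) := by
  set N : ℝ := 2 * m + 1 with hN
  have hN0 : N ≠ 0 := by positivity
  have h := ftc zero_le_one (g := fun x => (1 / N + 1 / N ^ 2) * x ^ (2 * m + 1)
      - x ^ (2 * m + 1) * Real.log x ^ 1 / N) (g' := fun x => x ^ (2 * m) * (1 - Real.log x))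
    (((continuousOn_id.pow _).const_mul _).sub ((xlog_cont' (2*m) 1).div_const N)) ?_ ?_
  · rw [h.2.2.2]
    congr 1
    simp
    field_simp
    rw [hN]; ring
  · intro x hx
    have h1 := hasDerivAt_pow (2 * m + 1) x
    have h2 := Real.hasDerivAt_log hx.1.ne'
    refine ((h1.const_mul _).sub ((h1.mul (h2.pow 1)).div_const N)).congr_deriv ?_
    have := hx.1.ne'
    have e : ((2 * m + 1 : ℕ) : ℝ) = N := by rw [hN]; push_cast; ring
    simp only [Nat.add_sub_cancel, e, pow_zero, pow_succ, Nat.cast_one]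
    field_simp
    simp
    ring
  · intro x hx
    have := Real.log_nonpos hx.1.le hx.2.le
    have := hx.1
    have h3 : 0 ≤ 1 - Real.log x := by linarith
    positivity

def ww (m : ℕ) : ℝ := 4 ^ (m+1) / (2 * (m + 1) * Nat.choose (2 * (m + 1)) (m + 1))
def OO (n : ℕ) : ℝ := ∑ k ∈ Finset.range n, 1 / (2 * (k:ℝ) + 1)

lemma ww_succ (m : ℕ) : (2 * m + 3) * ww (m + 1) = 2 * (m + 1) * ww m := by
  have h := Nat.succ_mul_centralBinom_succ (m + 1)
  rw [Nat.centralBinom, Nat.centralBinom] at h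
  have h' : ((m:ℝ) + 1 + 1) * (Nat.choose (2 * (m + 1 + 1)) (m + 1 + 1) : ℝ)
    = 2 * (2 * ((m:ℝ) + 1) + 1) * (Nat.choose (2 * (m + 1)) (m + 1) : ℝ) := by exact_mod_cast h
  have p1 : (0:ℝ) < (Nat.choose (2 * (m + 1 + 1)) (m + 1 + 1) : ℝ) := by
    exact_mod_cast Nat.choose_pos (by omega)
  have p2 : (0:ℝ) < (Nat.choose (2 * (m + 1)) (m + 1) : ℝ) := by
    exact_mod_cast Nat.choose_pos (by omega)
  rw [ww, ww]
  push_cast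
  set X : ℝ := (Nat.choose (2 * (m + 1 + 1)) (m + 1 + 1) : ℝ) with hX
  set Y : ℝ := (Nat.choose (2 * (m + 1)) (m + 1) : ℝ) with hY
  have e : (2 * ((m:ℝ) + 1 + 1) * X) = 4 * (2 * m + 3) * Y := by linear_combination 2 * h'
  rw [e]
  have : (2 * (m:ℝ) + 3) ≠ 0 := by positivity
  field_simp
  ring

lemma exists_H (m : ℕ) : ∃ H : ℝ → ℝ, Continuous H ∧
    (∀ x, HasDerivAt H ((1 - x ^ 2) ^ m) x) ∧ H 1 - H 0 = ww m := by
  induction m with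
  | zero => exact ⟨fun x => x, continuous_id, fun x => by simpa using hasDerivAt_id' x, by
      norm_num [ww]⟩
  | succ m ih =>
    obtain ⟨H, h1, h2, h3⟩ := ih
    have hne : (2 * (m:ℝ) + 3) ≠ 0 := by positivity
    refine ⟨fun x => (2 * (m + 1) * H x + x * (1 - x ^ 2) ^ (m + 1)) / (2 * m + 3), by fun_prop, ?_, ?_⟩
    · intro x
      have hp : HasDerivAt (fun x : ℝ => 1 - x ^ 2) (-(2 * x)) x := by
        simpa using ((hasDerivAt_pow 2 x).const_sub 1)
      refine ((((h2 x).const_mul (2 * ((m:ℝ) + 1))).add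
        ((hasDerivAt_id x).mul (hp.pow (m + 1)))).div_const _).congr_deriv ?_
      simp
      field_simp
      ring
    · have := ww_succ m
      simp
      field_simp
      linear_combination this.symm + 2 * (m + 1) * h3

lemma exists_G (m : ℕ) : ∃ G : ℝ → ℝ, ContinuousOn G (Icc 0 1) ∧
    (∀ x ∈ Ioo (0:ℝ) 1, HasDerivAt G ((1 - x ^ 2) ^ m * (-Real.log x)) x) ∧
    G 1 - G 0 = ww m * OO (m + 1) := by
  induction m with
  | zero =>
    refine ⟨fun x => x - x * Real.log x ^ 1, continuousOn_id.sub (xlog_cont 1), fun x hx => ?_, by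
      norm_num [ww, OO]⟩
    have h2 := Real.hasDerivAt_log hx.1.ne'
    refine ((hasDerivAt_id x).sub ((hasDerivAt_id x).mul (h2.pow 1))).congr_deriv ?_
    have := hx.1.ne'
    simp; field_simp; ring
  | succ m ih =>
    obtain ⟨G, h1, h2, h3⟩ := ih
    obtain ⟨H, k1, k2, k3⟩ := exists_H (m + 1)
    have hne : (2 * (m:ℝ) + 3) ≠ 0 := by positivity
    refine ⟨fun x => (2 * (m + 1) * G x + H x - (x * Real.log x ^ 1) * (1 - x ^ 2) ^ (m + 1)) / (2 * m + 3), ?_, ?_, ?_⟩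
    · exact (((h1.const_mul _).add k1.continuousOn).sub ((xlog_cont 1).mul (by fun_prop))).div_const _
    · intro x hx
      have hp : HasDerivAt (fun x : ℝ => 1 - x ^ 2) (-(2 * x)) x := by
        simpa using ((hasDerivAt_pow 2 x).const_sub 1)
      have hl := Real.hasDerivAt_log hx.1.ne'
      refine (((((h2 x hx).const_mul (2 * ((m:ℝ) + 1))).add (k2 x)).sub
        (((hasDerivAt_id x).mul (hl.pow 1)).mul (hp.pow (m + 1)))).div_const _).congr_deriv ?_
      have := hx.1.ne'
      simp
      field_simp
      ring
    · have := ww_succ m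
      rw [OO, Finset.sum_range_succ, ← OO]
      simp
      field_simp
      push_cast
      have e : (2 * ((m:ℝ) + 1) + 1) = 2 * m + 3 := by ring
      rw [e]
      field_simp
      linear_combination 2 * (m + 1) * h3 + k3 - OO (m + 1) * this

lemma int_x (m : ℕ) : ∫⁻ x in Ioo (0:ℝ) 1, ENNReal.ofReal ((1 - x ^ 2) ^ m * (-Real.log x)) =
    ENNReal.ofReal (ww m * OO (m + 1)) := by
  obtain ⟨G, h1, h2, h3⟩ := exists_G m
  rw [(ftc zero_le_one h1 h2 ?_).2.2.2, h3]
  intro x hx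
  have := Real.log_nonpos hx.1.le hx.2.le
  have : 0 ≤ 1 - x ^ 2 := by nlinarith [hx.1, hx.2]
  have : 0 ≤ -Real.log x := by linarith
  positivity

end
end S13

namespace S13
noncomputable section
open Set Filter Topology MeasureTheory

def tm (n k : ℕ) : ℝ := (4 : ℝ) ^ n / ((Nat.choose (2 * n) n : ℝ) * (2 * (n : ℝ) - 1) ^ 2 * (2 * (k : ℝ) + 1))

lemma tm_nonneg (n k : ℕ) : 0 ≤ tm n k := by unfold tm; positivity

lemma tm_sum (m : ℕ) : ∑ k ∈ Finset.range (m + 1), tm (m + 1) k =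
    ww m * OO (m + 1) * (2 * (m + 1) / (2 * m + 1) ^ 2) := by
  rw [OO, Finset.mul_sum, Finset.sum_mul]
  refine Finset.sum_congr rfl fun k _ => ?_
  have p2 : (0:ℝ) < (Nat.choose (2 * (m + 1)) (m + 1) : ℝ) := by
    exact_mod_cast Nat.choose_pos (by omega)
  rw [tm, ww]
  push_cast
  set Y : ℝ := (Nat.choose (2 * (m + 1)) (m + 1) : ℝ) with hY
  have e : (2 * ((m:ℝ) + 1) - 1) = 2 * m + 1 := by ring
  rw [e]
  field_simp

lemma sum_sub : ∑' p : {p : ℕ × ℕ // p.2 < p.1}, ENNReal.ofReal (tm p.1.1 p.1.2) =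
    ∑' m : ℕ, ENNReal.ofReal (ww m * OO (m + 1)) * ENNReal.ofReal (2 * (m + 1) / (2 * m + 1) ^ 2) := by
  have h1 := tsum_subtype {p : ℕ × ℕ | p.2 < p.1} (fun p => ENNReal.ofReal (tm p.1 p.2))
  refine h1.trans ?_
  rw [ENNReal.tsum_prod', tsum_eq_zero_add' ENNReal.summable]
  have h0 : ∑' b : ℕ, ({p : ℕ × ℕ | p.2 < p.1}.indicator (fun p => ENNReal.ofReal (tm p.1 p.2)) (0, b)) = 0 := by
    simp
  rw [h0, zero_add]
  refine tsum_congr fun m => ?_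
  rw [tsum_eq_sum (s := Finset.range (m + 1))]
  · rw [← ENNReal.ofReal_mul, ← tm_sum, ENNReal.ofReal_sum_of_nonneg (fun k _ => tm_nonneg _ _)]
    · refine Finset.sum_congr rfl fun k hk => ?_
      rw [Finset.mem_range] at hk
      simp [hk]
    · have : 0 ≤ OO (m + 1) := Finset.sum_nonneg fun k _ => by positivity
      unfold ww
      positivity
  · intro b hb
    rw [Finset.mem_range] at hb
    simp [hb]

def kap (t x : ℝ) : ℝ := 1 / (1 - t ^ 2 * (1 - x ^ 2))

lemma kap_pos {t x : ℝ} (ht : t ∈ Ioo (0:ℝ) 1) (hx : x ∈ Ioo (0:ℝ) 1) :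
    0 ≤ t ^ 2 * (1 - x ^ 2) ∧ t ^ 2 * (1 - x ^ 2) < 1 := by
  have h1 : t ^ 2 < 1 := by nlinarith [ht.1, ht.2]
  have h2 : 0 < 1 - x ^ 2 := by nlinarith [hx.1, hx.2]
  have h3 : 1 - x ^ 2 < 1 := by nlinarith [hx.1]
  have := ht.1
  exact ⟨by positivity, by nlinarith⟩

lemma f_point {t x : ℝ} (ht : t ∈ Ioo (0:ℝ) 1) (hx : x ∈ Ioo (0:ℝ) 1) :
    ENNReal.ofReal ((-Real.log x) * (1 - Real.log t) * kap t x) =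
    ∑' m : ℕ, ENNReal.ofReal ((1 - x ^ 2) ^ m * (-Real.log x)) * ENNReal.ofReal (t ^ (2 * m) * (1 - Real.log t)) := by
  have k := kap_pos ht hx
  have h2 : 0 < 1 - x ^ 2 := by nlinarith [hx.1, hx.2]
  have l1 : 0 ≤ - Real.log x := by linarith [Real.log_nonpos hx.1.le hx.2.le]
  have l2 : 0 ≤ 1 - Real.log t := by linarith [Real.log_nonpos ht.1.le ht.2.le]
  have := ht.1
  have hs := (hasSum_geometric_of_lt_one k.1 k.2).mul_left ((-Real.log x) * (1 - Real.log t))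
  have := ENNReal.ofReal_tsum_of_nonneg (fun n => by have := k.1; positivity) hs.summable
  rw [hs.tsum_eq] at this
  rw [kap, one_div, this]
  refine tsum_congr fun m => ?_
  rw [← ENNReal.ofReal_mul (by positivity)]
  congr 1
  rw [mul_pow, pow_mul]; ring

lemma S_eq : ∑' p : {p : ℕ × ℕ // p.2 < p.1}, ENNReal.ofReal (tm p.1.1 p.1.2) =
    ∫⁻ t in Ioo (0:ℝ) 1, ∫⁻ x in Ioo (0:ℝ) 1, ENNReal.ofReal ((-Real.log x) * (1 - Real.log t) * kap t x) := by
  rw [sum_sub]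
  have : ∫⁻ t in Ioo (0:ℝ) 1, ∫⁻ x in Ioo (0:ℝ) 1, ENNReal.ofReal ((-Real.log x) * (1 - Real.log t) * kap t x)
    = ∫⁻ t in Ioo (0:ℝ) 1, ∑' m : ℕ, ENNReal.ofReal (ww m * OO (m + 1)) * ENNReal.ofReal (t ^ (2 * m) * (1 - Real.log t)) := by
    refine setLIntegral_congr_fun measurableSet_Ioo fun t ht => ?_
    rw [setLIntegral_congr_fun measurableSet_Ioo fun x hx => f_point ht hx, lintegral_tsum]
    · refine tsum_congr fun m => ?_
      rw [lintegral_mul_const, int_x]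
      fun_prop
    · intro m
      fun_prop
  rw [this, lintegral_tsum]
  · refine tsum_congr fun m => ?_
    rw [lintegral_const_mul, int_tau]
    fun_prop
  · intro m
    fun_prop

/-- splitting -/
lemma fgh : (∫⁻ t in Ioo (0:ℝ) 1, ∫⁻ x in Ioo (0:ℝ) 1, ENNReal.ofReal ((-Real.log x) * (1 - Real.log t) * kap t x))
   + (∫⁻ t in Ioo (0:ℝ) 1, ∫⁻ x in Ioo (0:ℝ) 1, ENNReal.ofReal ((-Real.log t) * (1 - Real.log t) * kap t x))
   = ∫⁻ t in Ioo (0:ℝ) 1, ∫⁻ x in Ioo (0:ℝ) 1, ENNReal.ofReal ((-Real.log (t * x)) * (1 - Real.log t) * kap t x) := by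
  have mk : Measurable (fun p : ℝ × ℝ => kap p.1 p.2) := by unfold kap; fun_prop
  rw [← lintegral_add_left]
  · refine setLIntegral_congr_fun measurableSet_Ioo fun t ht => ?_
    have mk2 : Measurable (fun x => kap t x) := by unfold kap; fun_prop
    rw [← lintegral_add_left (by fun_prop)]
    refine setLIntegral_congr_fun measurableSet_Ioo fun x hx => ?_
    have k := kap_pos ht hx
    have l1 : 0 ≤ - Real.log x := by linarith [Real.log_nonpos hx.1.le hx.2.le]
    have l2 : 0 ≤ - Real.log t := by linarith [Real.log_nonpos ht.1.le ht.2.le]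
    have l3 : 0 ≤ 1 - Real.log t := by linarith
    have k0 : 0 ≤ kap t x := by unfold kap; exact one_div_nonneg.2 (by linarith)
    rw [← ENNReal.ofReal_add (by positivity) (by positivity), Real.log_mul ht.1.ne' hx.1.ne']
    congr 1; ring
  · refine Measurable.lintegral_prod_right ?_
    fun_prop

end
end S13

namespace S13
noncomputable section
open Set Filter Topology MeasureTheory

lemma g_inner {t : ℝ} (ht : t ∈ Ioo (0:ℝ) 1) :
    ∫⁻ x in Ioo (0:ℝ) 1, ENNReal.ofReal ((-Real.log t) * (1 - Real.log t) * kap t x) =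
    ENNReal.ofReal ((-Real.log t) * (1 - Real.log t) * (Real.arctan (t / √(1 - t ^ 2)) / (t * √(1 - t ^ 2)))) := by
  have hs2 : 0 < 1 - t ^ 2 := by nlinarith [ht.1, ht.2]
  set s := √(1 - t ^ 2) with hs
  have hs0 : 0 < s := Real.sqrt_pos.2 hs2
  have hss : s ^ 2 = 1 - t ^ 2 := Real.sq_sqrt hs2.le
  have ht0 := ht.1
  have l2 : 0 ≤ - Real.log t := by linarith [Real.log_nonpos ht.1.le ht.2.le]
  have l3 : 0 ≤ 1 - Real.log t := by linarith
  have := ftc zero_le_one (g := fun x => (-Real.log t) * (1 - Real.log t) * (Real.arctan (t * x / s) / (t * s)))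
    (g' := fun x => (-Real.log t) * (1 - Real.log t) * kap t x) ?_ ?_ ?_
  · rw [this.2.2.2]; simp
  · refine Continuous.continuousOn ?_
    have := Real.continuous_arctan
    fun_prop
  · intro x hx
    have h1 : HasDerivAt (fun x : ℝ => t * x / s) (t / s) x := by
      simpa using ((hasDerivAt_id x).const_mul t).div_const s
    refine ((h1.arctan.div_const (t * s)).const_mul _).congr_deriv ?_
    congr 1
    have k := kap_pos ht hx
    have : 1 - t ^ 2 * (1 - x ^ 2) = s ^ 2 + t ^ 2 * x ^ 2 := by rw [hss]; ring
    rw [kap, this]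
    field_simp
  · intro x hx
    have k := kap_pos ht hx
    have k0 : 0 ≤ kap t x := by unfold kap; exact one_div_nonneg.2 (by linarith)
    positivity

lemma phi_der (u : ℝ) : HasDerivAt (fun u : ℝ => 2 * u / (1 + u ^ 2)) (2 * (1 - u ^ 2) / (1 + u ^ 2) ^ 2) u := by
  have hp : HasDerivAt (fun x : ℝ => 1 + x ^ 2) (2 * u) u := by
    simpa using ((hasDerivAt_pow 2 u).const_add 1)
  have : 1 + u ^ 2 ≠ 0 := by positivity
  refine (((hasDerivAt_id u).const_mul 2).div hp this).congr_deriv ?_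
  simp; ring

lemma phi_inj : InjOn (fun u : ℝ => 2 * u / (1 + u ^ 2)) (Ioo 0 1) := by
  intro u hu v hv h
  simp only at h
  rw [div_eq_div_iff (by positivity) (by positivity)] at h
  have : (u - v) * (1 - u * v) = 0 := by linear_combination h / 2
  rcases mul_eq_zero.1 this with h | h
  · linarith
  · exfalso
    have := mul_lt_mul'' hu.2 hv.2 hu.1.le hv.1.le
    linarith

lemma phi_mem {u : ℝ} (hu : u ∈ Ioo (0:ℝ) 1) : 2 * u / (1 + u ^ 2) ∈ Ioo (0:ℝ) 1 := by
  have := hu.1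
  refine ⟨by positivity, ?_⟩
  rw [div_lt_one (by positivity)]
  nlinarith [hu.2]

lemma phi_image : (fun u : ℝ => 2 * u / (1 + u ^ 2)) '' Ioo 0 1 = Ioo 0 1 := by
  ext t
  constructor
  · rintro ⟨u, hu, rfl⟩; exact phi_mem hu
  · intro ht
    have hs2 : 0 < 1 - t ^ 2 := by nlinarith [ht.1, ht.2]
    set s := √(1 - t ^ 2) with hs
    have hs0 : 0 < s := Real.sqrt_pos.2 hs2
    have hss : s ^ 2 = 1 - t ^ 2 := Real.sq_sqrt hs2.le
    have ht0 := ht.1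
    have hs1 : s < 1 := by nlinarith
    refine ⟨(1 - s) / t, ⟨div_pos (by linarith) ht0, ?_⟩, ?_⟩
    · rw [div_lt_one ht0]; nlinarith
    · simp only
      have e : t ^ 2 = (1 - s) * (1 + s) := by linear_combination hss
      have h1 : 0 < 1 - s := by linarith
      have : 1 + ((1 - s) / t) ^ 2 = 2 * (1 - s) / t ^ 2 := by
        field_simp; linear_combination e
      rw [this]; field_simp

lemma g_val : ∫⁻ t in Ioo (0:ℝ) 1, ∫⁻ x in Ioo (0:ℝ) 1, ENNReal.ofReal ((-Real.log t) * (1 - Real.log t) * kap t x)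
   = ENNReal.ofReal (2 * VV) ∧ 0 ≤ VV := by
  have hn : 0 ≤ᵐ[volume.restrict (Ioo (0:ℝ) 1)] fun u => 2 * gV u := by
    filter_upwards [ae_restrict_mem measurableSet_Ioo] with x hx
    have := gV_nonneg hx.1
    simp only [Pi.zero_apply]
    positivity
  refine ⟨?_, ?_⟩
  · rw [setLIntegral_congr_fun measurableSet_Ioo fun t ht => g_inner ht]
    rw [← phi_image, lintegral_image_eq_lintegral_abs_deriv_mul measurableSet_Ioo (fun u _ => (phi_der u).hasDerivWithinAt) phi_inj]
    rw [← gV_int.2, ← integral_const_mul, ofReal_integral_eq_lintegral_ofReal (gV_int.1.const_mul 2) hn]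
    refine setLIntegral_congr_fun measurableSet_Ioo fun u hu => ?_
    rw [← ENNReal.ofReal_mul (abs_nonneg _)]
    congr 1
    have hu0 := hu.1
    have h1 : 0 < 1 - u ^ 2 := by nlinarith [hu.2]
    have e : √(1 - (2 * u / (1 + u ^ 2)) ^ 2) = (1 - u ^ 2) / (1 + u ^ 2) := by
      rw [← Real.sqrt_sq (div_nonneg h1.le (by positivity : 0 ≤ 1 + u ^ 2))]
      congr 1
      field_simp; ring
    have e2 : 2 * u / (1 + u ^ 2) / ((1 - u ^ 2) / (1 + u ^ 2)) = 2 * u / (1 - u ^ 2) := by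
      field_simp
    rw [e, e2, ← Real.two_mul_arctan (by linarith) hu.2, gV, ss, abs_of_nonneg (by positivity)]
    field_simp
    ring
  · rw [← gV_int.2]
    have := integral_nonneg_of_ae hn
    rw [integral_const_mul] at this
    linarith

end
end S13

namespace S13
noncomputable section
open Set Filter Topology MeasureTheory

def hh (t y : ℝ) : ℝ := (-Real.log y) * (1 - Real.log t) / (t * (1 + y ^ 2 - t ^ 2))

lemma h_sub {t : ℝ} (ht : t ∈ Ioo (0:ℝ) 1) :
    ∫⁻ x in Ioo (0:ℝ) 1, ENNReal.ofReal ((-Real.log (t * x)) * (1 - Real.log t) * kap t x) =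
    ∫⁻ y in Ioo (0:ℝ) t, ENNReal.ofReal (hh t y) := by
  have ht0 := ht.1
  have him : (fun x => t * x) '' Ioo (0:ℝ) 1 = Ioo 0 t := by
    rw [image_mul_left_Ioo ht0]; simp
  rw [← him, lintegral_image_eq_lintegral_abs_deriv_mul measurableSet_Ioo (f' := fun _ => t)
    (fun u _ => by simpa using ((hasDerivAt_id u).const_mul t).hasDerivWithinAt)
    (fun a _ b _ h => mul_left_cancel₀ ht0.ne' h)]
  refine setLIntegral_congr_fun measurableSet_Ioo fun x hx => ?_
  have k := kap_pos ht hx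
  rw [← ENNReal.ofReal_mul (abs_nonneg _), abs_of_pos ht0]
  congr 1
  rw [hh, kap]
  have e : 1 + (t * x) ^ 2 - t ^ 2 = 1 - t ^ 2 * (1 - x ^ 2) := by ring
  rw [e]
  have : 1 - t ^ 2 * (1 - x ^ 2) ≠ 0 := by linarith
  field_simp

lemma h_swap : ∫⁻ t in Ioo (0:ℝ) 1, ∫⁻ y in Ioo (0:ℝ) t, ENNReal.ofReal (hh t y) =
    ∫⁻ y in Ioo (0:ℝ) 1, ∫⁻ t in Ioo y 1, ENNReal.ofReal (hh t y) := by
  have mk : Measurable (fun p : ℝ × ℝ => hh p.1 p.2) := by unfold hh; fun_prop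
  have ms : MeasurableSet {p : ℝ × ℝ | p.2 < p.1} := measurableSet_lt measurable_snd measurable_fst
  set f : ℝ → ℝ → ENNReal := fun t y => {p : ℝ × ℝ | p.2 < p.1}.indicator (fun p => ENNReal.ofReal (hh p.1 p.2)) (t, y) with hf
  have mf : Measurable (fun p : ℝ × ℝ => f p.1 p.2) := by
    exact (Measurable.indicator (by fun_prop) ms)
  have h1 : ∀ t ∈ Ioo (0:ℝ) 1, ∫⁻ y in Ioo (0:ℝ) t, ENNReal.ofReal (hh t y) = ∫⁻ y in Ioo (0:ℝ) 1, f t y := by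
    intro t ht
    have : ∀ y, f t y = (Iio t).indicator (fun y => ENNReal.ofReal (hh t y)) y := by
      intro y; simp [hf, indicator]
    simp only [this]
    rw [setLIntegral_indicator measurableSet_Iio]
    congr 2
    ext y; simp; grind
  have h2 : ∀ y ∈ Ioo (0:ℝ) 1, ∫⁻ t in Ioo y 1, ENNReal.ofReal (hh t y) = ∫⁻ t in Ioo (0:ℝ) 1, f t y := by
    intro y hy
    have : ∀ t, f t y = (Ioi y).indicator (fun t => ENNReal.ofReal (hh t y)) t := by
      intro t; simp [hf, indicator]
    simp only [this]
    rw [setLIntegral_indicator measurableSet_Ioi]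
    congr 2
    ext t; simp; grind
  rw [setLIntegral_congr_fun measurableSet_Ioo h1, setLIntegral_congr_fun measurableSet_Ioo h2,
    lintegral_lintegral_swap mf.aemeasurable]

def li2 (x : ℝ) : ℝ := (Li 2 x).re

lemma li2_deriv {x : ℝ} (h0 : 0 < x) (h1 : x < 1) : HasDerivAt li2 (-Real.log (1 - x) / x) x := by
  have hz : ‖(x:ℂ)‖ < 1 := by simpa [abs_of_pos h0] using h1
  have h := Li_deriv 1 hz (by exact_mod_cast h0.ne')
  have h2 := h.real_of_complex
  refine h2.congr_deriv ?_
  rw [Li_one _ hz]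
  have e : (-Complex.log (1 - x) / x : ℂ) = ((-Real.log (1 - x) / x : ℝ) : ℂ) := by
    push_cast
    rw [Complex.ofReal_log (by linarith)]; push_cast; rfl
  rw [e, Complex.ofReal_re]

def Ga (y t : ℝ) : ℝ := -(1/2) * Real.log t * Real.log (1 - t ^ 2 / (1 + y ^ 2)) - 1/4 * li2 (t ^ 2 / (1 + y ^ 2))

lemma wd {y t : ℝ} (ht : 0 < t) (hy : 0 < y) (h : t ≤ 1) : 0 < 1 + y ^ 2 - t ^ 2 ∧ 0 < t ^ 2 / (1 + y ^ 2) ∧ t ^ 2 / (1 + y ^ 2) < 1 := by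
  have : 0 < 1 + y ^ 2 - t ^ 2 := by nlinarith [pow_pos hy 2]
  refine ⟨this, by positivity, ?_⟩
  rw [div_lt_one (by positivity)]; linarith

lemma Ga_deriv {y t : ℝ} (ht : 0 < t) (hy : 0 < y) (h : t ≤ 1) :
    HasDerivAt (Ga y) (t * Real.log t / (1 + y ^ 2 - t ^ 2)) t := by
  obtain ⟨h1, h2, h3⟩ := wd ht hy h
  have hw : HasDerivAt (fun t : ℝ => t ^ 2 / (1 + y ^ 2)) (2 * t / (1 + y ^ 2)) t := by
    simpa using (hasDerivAt_pow 2 t).div_const (1 + y ^ 2)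
  have hl := Real.hasDerivAt_log ht.ne'
  have e : 1 - t ^ 2 / (1 + y ^ 2) = (1 + y ^ 2 - t ^ 2) / (1 + y ^ 2) := by field_simp
  have h4 := (hw.const_sub 1).log (by linarith)
  have h5 := (li2_deriv h2 h3).comp t hw
  refine (((hl.const_mul (-(1/2))).mul h4).sub (h5.const_mul (1/4))).congr_deriv ?_
  rw [e]
  field_simp
  ring

def An (y t : ℝ) : ℝ := 1 / (1 + y ^ 2) * (Real.log t - 1/2 * Real.log t ^ 2 - 1/2 * Real.log (1 + y ^ 2 - t ^ 2) - Ga y t)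

lemma An_deriv {y t : ℝ} (ht : 0 < t) (hy : 0 < y) (h : t ≤ 1) :
    HasDerivAt (An y) ((1 - Real.log t) / (t * (1 + y ^ 2 - t ^ 2))) t := by
  obtain ⟨h1, h2, h3⟩ := wd ht hy h
  have hl := Real.hasDerivAt_log ht.ne'
  have hw : HasDerivAt (fun t : ℝ => 1 + y ^ 2 - t ^ 2) (-(2 * t)) t := by
    simpa using (hasDerivAt_pow 2 t).const_sub (1 + y ^ 2)
  refine ((((hl.sub ((hl.pow 2).const_mul (1/2))).sub ((hw.log h1.ne').const_mul (1/2))).sub (Ga_deriv ht hy h)).const_mul (1 / (1 + y ^ 2))).congr_deriv ?_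
  simp
  field_simp
  ring

def Dm (y : ℝ) : ℝ := 1/2 * Real.log y ^ 2 + (-(1/4) * li2 (1 / (1 + y ^ 2)) - 1/2 * Real.log y * Real.log (1 + y ^ 2) + 1/4 * li2 (y ^ 2 / (1 + y ^ 2)))

lemma Dm_deriv {y : ℝ} (hy : 0 < y) : HasDerivAt Dm (Real.log y * (1 - y ^ 2) / (y * (1 + y ^ 2))) y := by
  have hl := Real.hasDerivAt_log hy.ne'
  have hp : HasDerivAt (fun x : ℝ => 1 + x ^ 2) (2 * y) y := by
    simpa using ((hasDerivAt_pow 2 y).const_add 1)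
  have h0 : 1 + y ^ 2 ≠ 0 := by positivity
  have p1 : 1 / (1 + y ^ 2) < 1 := by rw [div_lt_one (by positivity)]; nlinarith
  have p2 : y ^ 2 / (1 + y ^ 2) < 1 := by rw [div_lt_one (by positivity)]; linarith
  have d1 := (li2_deriv (x := 1 / (1 + y ^ 2)) (by positivity) p1).comp y ((hasDerivAt_const y 1).div hp h0)
  have d2 := (li2_deriv (x := y ^ 2 / (1 + y ^ 2)) (by positivity) p2).comp y ((hasDerivAt_pow 2 y).div hp h0)
  have e1 : 1 - 1 / (1 + y ^ 2) = y ^ 2 / (1 + y ^ 2) := by field_simp; ring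
  have e2 : 1 - y ^ 2 / (1 + y ^ 2) = 1 / (1 + y ^ 2) := by field_simp; ring
  have e3 : Real.log (y ^ 2 / (1 + y ^ 2)) = 2 * Real.log y - Real.log (1 + y ^ 2) := by
    rw [Real.log_div (by positivity) h0, Real.log_pow]; simp
  have e4 : Real.log (1 / (1 + y ^ 2)) = - Real.log (1 + y ^ 2) := by simp
  rw [e1, e3] at d1
  rw [e2, e4] at d2
  refine (((hl.pow 2).const_mul (1/2)).add (((d1.const_mul (-(1/4))).sub ((hl.const_mul (1/2)).mul (hp.log h0))).add (d2.const_mul (1/4)))).congr_deriv ?_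
  simp
  field_simp
  ring

lemma Dm_one : Dm 1 = 0 := by simp [Dm]

def hin (y : ℝ) : ℝ := (-Real.log y) / (1 + y ^ 2) * (-2 * Real.log y + Real.log y ^ 2 - Dm y)

lemma An_sub {y : ℝ} (hy : 0 < y) : An y 1 - An y y = 1 / (1 + y ^ 2) * (-2 * Real.log y + Real.log y ^ 2 - Dm y) := by
  have e2 : 1 - y ^ 2 / (1 + y ^ 2) = 1 / (1 + y ^ 2) := by field_simp; ring
  have e4 : Real.log (1 / (1 + y ^ 2)) = - Real.log (1 + y ^ 2) := by simp
  have e5 : 1 + y ^ 2 - 1 ^ 2 = y ^ 2 := by ring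
  have e6 : 1 + y ^ 2 - y ^ 2 = 1 := by ring
  rw [An, An, Ga, Ga, Dm, e2, e4, e5, e6, Real.log_pow]
  simp
  ring

lemma h_inner {y : ℝ} (hy : y ∈ Ioo (0:ℝ) 1) :
    ∫⁻ t in Ioo y 1, ENNReal.ofReal (hh t y) = ENNReal.ofReal (hin y) ∧ 0 ≤ hin y := by
  have hl : 0 ≤ -Real.log y := by linarith [Real.log_nonpos hy.1.le hy.2.le]
  have h := ftc hy.2.le (g := fun t => (-Real.log y) * An y t) (g' := fun t => hh t y) ?_ ?_ ?_
  · have e : (-Real.log y) * An y 1 - (-Real.log y) * An y y = hin y := by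
      rw [← mul_sub, An_sub hy.1, hin]; ring
    simp only [e] at h
    exact ⟨h.2.2.2, h.2.2.1⟩
  · intro t ht
    exact (((An_deriv (hy.1.trans_le ht.1) hy.1 ht.2).const_mul _).continuousAt).continuousWithinAt
  · intro t ht
    refine ((An_deriv (hy.1.trans ht.1) hy.1 ht.2.le).const_mul _).congr_deriv ?_
    rw [hh, mul_div_assoc]
  · intro t ht
    have ht0 := hy.1.trans ht.1
    have := (wd ht0 hy.1 ht.2.le).1
    have : 0 ≤ 1 - Real.log t := by linarith [Real.log_nonpos ht0.le ht.2.le]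
    unfold hh
    positivity

lemma h_val : ∫⁻ t in Ioo (0:ℝ) 1, ∫⁻ x in Ioo (0:ℝ) 1, ENNReal.ofReal ((-Real.log (t * x)) * (1 - Real.log t) * kap t x) =
    ∫⁻ y in Ioo (0:ℝ) 1, ENNReal.ofReal (hin y) := by
  rw [setLIntegral_congr_fun measurableSet_Ioo fun t ht => h_sub ht, h_swap,
    setLIntegral_congr_fun measurableSet_Ioo fun y hy => (h_inner hy).1]

end
end S13

namespace S13
noncomputable section
open Set Filter Topology MeasureTheory

lemma int_l2 (n : ℕ) : IntegrableOn (fun x : ℝ => x ^ (2 * n) * (-Real.log x) ^ 2) (Ioo 0 1) ∧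
    ∫ x in Ioo (0:ℝ) 1, x ^ (2 * n) * (-Real.log x) ^ 2 = 2 / (2 * n + 1) ^ 3 := by
  set N : ℝ := 2 * n + 1 with hN
  have hN0 : N ≠ 0 := by positivity
  have c := xlog_cont' (2 * n)
  have h := ftc zero_le_one (g := fun x => x ^ (2 * n + 1) * Real.log x ^ 2 / N
      - 2 * (x ^ (2 * n + 1) * Real.log x ^ 1) / N ^ 2 + 2 * (x ^ (2 * n + 1) * Real.log x ^ 0) / N ^ 3)
      (g' := fun x => x ^ (2 * n) * (-Real.log x) ^ 2)
    ((((c 2).div_const N).sub (((c 1).const_mul 2).div_const _)).add (((c 0).const_mul 2).div_const _)) ?_ ?_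
  · refine ⟨h.1, ?_⟩
    rw [h.2.1]
    simp
  · intro x hx
    have h1 := hasDerivAt_pow (2 * n + 1) x
    have h2 := Real.hasDerivAt_log hx.1.ne'
    refine ((((h1.mul (h2.pow 2)).div_const N).sub (((h1.mul (h2.pow 1)).const_mul 2).div_const _)).add
      (((h1.mul (h2.pow 0)).const_mul 2).div_const _)).congr_deriv ?_
    have := hx.1.ne'
    have e : ((2 * n + 1 : ℕ) : ℝ) = N := by rw [hN]; push_cast; ring
    simp only [Nat.add_sub_cancel, e]
    simp
    field_simp
    ring
  · intro x hx
    have := hx.1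
    positivity

lemma int_l3 (n : ℕ) : IntegrableOn (fun x : ℝ => x ^ (2 * n) * (-Real.log x) ^ 3) (Ioo 0 1) ∧
    ∫ x in Ioo (0:ℝ) 1, x ^ (2 * n) * (-Real.log x) ^ 3 = 6 / (2 * n + 1) ^ 4 := by
  set N : ℝ := 2 * n + 1 with hN
  have hN0 : N ≠ 0 := by positivity
  have c := xlog_cont' (2 * n)
  have h := ftc zero_le_one (g := fun x => -(x ^ (2 * n + 1) * Real.log x ^ 3 / N)
      + 3 * (x ^ (2 * n + 1) * Real.log x ^ 2) / N ^ 2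
      - 6 * (x ^ (2 * n + 1) * Real.log x ^ 1) / N ^ 3 + 6 * (x ^ (2 * n + 1) * Real.log x ^ 0) / N ^ 4)
      (g' := fun x => x ^ (2 * n) * (-Real.log x) ^ 3)
    (((((c 3).div_const N).neg.add (((c 2).const_mul 3).div_const _)).sub (((c 1).const_mul 6).div_const _)).add (((c 0).const_mul 6).div_const _)) ?_ ?_
  · refine ⟨h.1, ?_⟩
    rw [h.2.1]
    simp
  · intro x hx
    have h1 := hasDerivAt_pow (2 * n + 1) x
    have h2 := Real.hasDerivAt_log hx.1.ne'
    refine (((((h1.mul (h2.pow 3)).div_const N).neg.add (((h1.mul (h2.pow 2)).const_mul 3).div_const _)).sub (((h1.mul (h2.pow 1)).const_mul 6).div_const _)).add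
      (((h1.mul (h2.pow 0)).const_mul 6).div_const _)).congr_deriv ?_
    have := hx.1.ne'
    have e : ((2 * n + 1 : ℕ) : ℝ) = N := by rw [hN]; push_cast; ring
    simp only [Nat.add_sub_cancel, e]
    simp
    field_simp
    ring
  · intro x hx
    have := hx.1
    have : 0 ≤ -Real.log x := by linarith [Real.log_nonpos hx.1.le hx.2.le]
    positivity

lemma bdd_int {f : ℝ → ℝ} {s : Set ℝ} (hf : IntegrableOn f s) : IntegrableOn (fun x => f x / (1 + x ^ 2)) s := by
  refine Integrable.mono hf (hf.aestronglyMeasurable.mul (Measurable.aestronglyMeasurable (by fun_prop : Measurable fun x : ℝ => (1 + x ^ 2)⁻¹))) ?_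
  refine Eventually.of_forall fun x => ?_
  rw [norm_div]
  refine div_le_self (norm_nonneg _) ?_
  rw [Real.norm_of_nonneg (by positivity)]
  nlinarith [sq_nonneg x]

lemma int_gen (k : ℕ) (c : ℝ) (hk : ∀ n : ℕ, IntegrableOn (fun x : ℝ => x ^ (2 * n) * (-Real.log x) ^ (k + 2)) (Ioo 0 1) ∧
    ∫ x in Ioo (0:ℝ) 1, x ^ (2 * n) * (-Real.log x) ^ (k + 2) = c / (2 * n + 1) ^ (k + 3)) :
    IntegrableOn (fun x : ℝ => (-Real.log x) ^ (k + 2) / (1 + x ^ 2)) (Ioo 0 1) ∧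
    ∫ x in Ioo (0:ℝ) 1, (-Real.log x) ^ (k + 2) / (1 + x ^ 2) = c * bet (k + 3) := by
  constructor
  · have := (hk 0).1
    simp only [mul_zero, pow_zero, one_mul] at this
    exact bdd_int this
  have h := hasSum_integral_of_summable_integral_norm (μ := volume.restrict (Ioo (0:ℝ) 1))
    (F := fun (n : ℕ) x => (-1) ^ n * (x ^ (2 * n) * (-Real.log x) ^ (k + 2)))
    (fun n => (hk n).1.const_mul _) ?_
  · have e1 : ∀ n : ℕ, ∫ x in Ioo (0:ℝ) 1, (-1) ^ n * (x ^ (2 * n) * (-Real.log x) ^ (k + 2)) = c * ((-1) ^ n / (2 * n + 1) ^ (k + 3)) := by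
      intro n
      rw [integral_const_mul, (hk n).2]; ring
    have e2 : ∫ x in Ioo (0:ℝ) 1, ∑' n : ℕ, (-1) ^ n * (x ^ (2 * n) * (-Real.log x) ^ (k + 2)) = ∫ x in Ioo (0:ℝ) 1, (-Real.log x) ^ (k + 2) / (1 + x ^ 2) := by
      refine setIntegral_congr_fun measurableSet_Ioo fun x hx => ?_
      have hq : ‖-x ^ 2‖ < 1 := by
        rw [norm_neg, Real.norm_of_nonneg (by positivity)]
        nlinarith [hx.1, hx.2]
      have := (hasSum_geometric_of_norm_lt_one hq).mul_right ((-Real.log x) ^ (k + 2))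
      have e : ∀ n : ℕ, (-1) ^ n * (x ^ (2 * n) * (-Real.log x) ^ (k + 2)) = (-x ^ 2) ^ n * (-Real.log x) ^ (k + 2) := by
        intro n; rw [neg_pow (x ^ 2) n, ← pow_mul]; ring
      simp only [e]
      rw [this.tsum_eq, sub_neg_eq_add]; ring
    simp only [e1, e2] at h
    rw [← h.tsum_eq, tsum_mul_left, bet]
  · have e : ∀ n : ℕ, ∫ x in Ioo (0:ℝ) 1, ‖(-1) ^ n * (x ^ (2 * n) * (-Real.log x) ^ (k + 2))‖ = c * (1 / (2 * n + 1) ^ (k + 3)) := by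
      intro n
      rw [mul_one_div, ← (hk n).2]
      refine setIntegral_congr_fun measurableSet_Ioo fun x hx => ?_
      have := hx.1
      have : 0 ≤ -Real.log x := by linarith [Real.log_nonpos hx.1.le hx.2.le]
      rw [norm_mul, norm_pow, norm_neg, norm_one, one_pow, one_mul, Real.norm_of_nonneg (by positivity)]
    simp only [e]
    refine Summable.mul_left _ ?_
    refine Summable.of_nonneg_of_le (fun n => by positivity) (fun n => ?_) (summable_bound (k + 1))
    gcongr
    have : (0:ℝ) ≤ n := by positivity
    linarith

lemma I2 : IntegrableOn (fun x : ℝ => (-Real.log x) ^ 2 / (1 + x ^ 2)) (Ioo 0 1) ∧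
    ∫ x in Ioo (0:ℝ) 1, (-Real.log x) ^ 2 / (1 + x ^ 2) = 2 * bet 3 := int_gen 0 2 int_l2

lemma I3 : IntegrableOn (fun x : ℝ => (-Real.log x) ^ 3 / (1 + x ^ 2)) (Ioo 0 1) ∧
    ∫ x in Ioo (0:ℝ) 1, (-Real.log x) ^ 3 / (1 + x ^ 2) = 6 * bet 4 := int_gen 1 6 int_l3

lemma I1 : IntegrableOn (fun x : ℝ => Real.log x / (1 + x ^ 2)) (Ioo 0 1) := by
  have h := (int_l2 0).1.add (integrableOn_const (s := Ioo (0:ℝ) 1) (C := (1:ℝ)) (by simp))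
  refine bdd_int (Integrable.mono h (by fun_prop) (Eventually.of_forall fun x => ?_))
  simp only [Pi.add_apply, mul_zero, pow_zero, one_mul]
  rw [Real.norm_of_nonneg (by positivity : 0 ≤ (-Real.log x) ^ 2 + 1), Real.norm_eq_abs, neg_sq]
  rw [abs_le]; constructor <;> nlinarith [sq_nonneg (Real.log x + 1), sq_nonneg (Real.log x - 1)]

end
end S13

namespace S13
noncomputable section
open Set Filter Topology MeasureTheory

lemma inv_image : (fun y : ℝ => y⁻¹) '' Ioo 0 1 = Ioi 1 := by
  ext t
  constructor
  · rintro ⟨u, hu, rfl⟩; exact (one_lt_inv₀ hu.1).2 hu.2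
  · intro ht
    have ht1 : (1:ℝ) < t := ht
    exact ⟨t⁻¹, ⟨by positivity, inv_lt_one_of_one_lt₀ ht1⟩, inv_inv t⟩

lemma inv_sub (f : ℝ → ℝ) : (IntegrableOn f (Ioi 1) ↔ IntegrableOn (fun y => (y ^ 2)⁻¹ * f y⁻¹) (Ioo 0 1)) ∧
    ∫ y in Ioi 1, f y = ∫ y in Ioo (0:ℝ) 1, (y ^ 2)⁻¹ * f y⁻¹ := by
  have hd : ∀ x ∈ Ioo (0:ℝ) 1, HasDerivWithinAt (fun y : ℝ => y⁻¹) (-(x ^ 2)⁻¹) (Ioo 0 1) x :=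
    fun x hx => (hasDerivAt_inv hx.1.ne').hasDerivWithinAt
  have hi : InjOn (fun y : ℝ => y⁻¹) (Ioo 0 1) := inv_injective.injOn
  have e : ∀ x : ℝ, |(-(x ^ 2)⁻¹)| = (x ^ 2)⁻¹ := fun x => by rw [abs_neg, abs_of_nonneg (by positivity)]
  have h1 := integrableOn_image_iff_integrableOn_abs_deriv_smul measurableSet_Ioo hd hi f
  have h2 := integral_image_eq_integral_abs_deriv_smul measurableSet_Ioo hd hi f
  rw [inv_image] at h1 h2
  simp only [e, smul_eq_mul] at h1 h2
  exact ⟨h1, h2⟩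

lemma split_int (f : ℝ → ℝ) (h : IntegrableOn f (Ioi 0)) :
    IntegrableOn f (Ioo 0 1) ∧ IntegrableOn (fun y => (y ^ 2)⁻¹ * f y⁻¹) (Ioo 0 1) ∧
    ∫ y in Ioi 0, f y = (∫ y in Ioo (0:ℝ) 1, f y) + ∫ y in Ioo (0:ℝ) 1, (y ^ 2)⁻¹ * f y⁻¹ := by
  have h1 := h.mono_set (Ioo_subset_Ioi_self : Ioo (0:ℝ) 1 ⊆ _)
  have h2 := h.mono_set (Ioi_subset_Ioi (zero_le_one' ℝ))
  refine ⟨h1, (inv_sub f).1.1 h2, ?_⟩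
  rw [← (inv_sub f).2, ← integral_Ioc_eq_integral_Ioo, ← Ioc_union_Ioi_eq_Ioi (zero_le_one' ℝ),
    setIntegral_union (by rw [Set.disjoint_left]; intro x hx hx'; exact absurd hx.2 (not_le.2 hx')) measurableSet_Ioi _ h2]
  rw [integrableOn_Ioc_iff_integrableOn_Ioo]; exact h1

lemma join_int (f : ℝ → ℝ) (h1 : IntegrableOn f (Ioo 0 1))
    (h2 : IntegrableOn (fun y => (y ^ 2)⁻¹ * f y⁻¹) (Ioo 0 1)) : IntegrableOn f (Ioi 0) := by
  rw [← Ioc_union_Ioi_eq_Ioi (zero_le_one' ℝ)]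
  refine IntegrableOn.union ?_ ((inv_sub f).1.2 h2)
  rw [integrableOn_Ioc_iff_integrableOn_Ioo]; exact h1

lemma A2 : IntegrableOn (fun y : ℝ => Real.log y ^ 2 / (1 + y ^ 2)) (Ioi 0) ∧
    ∫ y in Ioi (0:ℝ), Real.log y ^ 2 / (1 + y ^ 2) = Real.pi ^ 3 / 8 := by
  obtain ⟨h1, h2⟩ := I2
  simp only [neg_sq] at h1 h2
  have e : EqOn (fun y : ℝ => (y ^ 2)⁻¹ * (Real.log y⁻¹ ^ 2 / (1 + y⁻¹ ^ 2))) (fun y => Real.log y ^ 2 / (1 + y ^ 2)) (Ioo 0 1) := by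
    intro y hy
    have := hy.1
    simp only [Real.log_inv]
    field_simp
    ring
  have h3 := join_int _ h1 ((integrableOn_congr_fun e measurableSet_Ioo).2 h1)
  refine ⟨h3, ?_⟩
  rw [(split_int _ h3).2.2, setIntegral_congr_fun measurableSet_Ioo e, h2, bet3]; ring

lemma A1 : IntegrableOn (fun y : ℝ => Real.log y / (1 + y ^ 2)) (Ioi 0) ∧
    ∫ y in Ioi (0:ℝ), Real.log y / (1 + y ^ 2) = 0 := by
  have h1 := I1
  have e : EqOn (fun y : ℝ => (y ^ 2)⁻¹ * (Real.log y⁻¹ / (1 + y⁻¹ ^ 2))) (fun y => -(Real.log y / (1 + y ^ 2))) (Ioo 0 1) := by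
    intro y hy
    have := hy.1
    simp only [Real.log_inv]
    field_simp
    ring
  have h3 := join_int _ h1 ((integrableOn_congr_fun e measurableSet_Ioo).2 h1.neg)
  refine ⟨h3, ?_⟩
  rw [(split_int _ h3).2.2, setIntegral_congr_fun measurableSet_Ioo e, integral_neg]; ring

def cf (v : ℝ) : ℝ := v * Real.log v / (1 + v ^ 2)

lemma cf_cont : Continuous cf := by
  unfold cf
  exact Real.continuous_mul_log.div (by fun_prop) (fun x => by positivity)

def Bf (y : ℝ) : ℝ := ∫ v in (0:ℝ)..y, cf v

lemma Bf_deriv (y : ℝ) : HasDerivAt Bf (cf y) y :=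
  cf_cont.integral_hasStrictDerivAt 0 y |>.hasDerivAt

lemma Bf_scale {y : ℝ} (hy : 0 < y) : ∫ r in Ioo (0:ℝ) 1, y * cf (y * r) = Bf y := by
  rw [← integral_Ioc_eq_integral_Ioo, ← intervalIntegral.integral_of_le zero_le_one,
    intervalIntegral.integral_const_mul, intervalIntegral.integral_comp_mul_left _ hy.ne', Bf]
  simp [hy.ne']

lemma Dm_eq {y : ℝ} (hy : 0 < y) : Dm y = Bf y⁻¹ - Bf y := by
  have h : ∀ x ∈ Ioi (0:ℝ), HasDerivAt (fun y => Dm y - (Bf y⁻¹ - Bf y)) 0 x := by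
    intro x hx
    have hx0 : 0 < x := hx
    have h2 := (Bf_deriv x⁻¹).comp x (hasDerivAt_inv hx0.ne')
    refine ((Dm_deriv hx0).sub (h2.sub (Bf_deriv x))).congr_deriv ?_
    simp only [cf, Real.log_inv]
    field_simp
    ring
  have := (convex_Ioi (0:ℝ)).is_const_of_fderivWithin_eq_zero (𝕜 := ℝ) (f := fun y => Dm y - (Bf y⁻¹ - Bf y))
    (fun x hx => (h x hx).differentiableAt.differentiableWithinAt) (fun x hx => by
      have h1 := (h x hx).hasFDerivAt.hasFDerivWithinAt (s := Ioi 0)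
      rw [h1.fderivWithin (isOpen_Ioi.uniqueDiffWithinAt hx)]
      ext; simp) hy (show (1:ℝ) ∈ Ioi 0 by simp)
  simp [Dm_one] at this
  linarith

lemma inner_y {r : ℝ} (hr : r ∈ Ioo (0:ℝ) 1) :
    ∫ y in Ioi (0:ℝ), Real.log y / (1 + y ^ 2) * (y * cf (y * r)) = Real.pi ^ 3 / 8 * (1 + r)⁻¹ := by
  have hr0 := hr.1
  have h1 : 0 < 1 - r ^ 2 := by nlinarith [hr.2]
  set φ : ℝ → ℝ := fun z => Real.log z ^ 2 / (1 + z ^ 2) - Real.log r * (Real.log z / (1 + z ^ 2)) with hφ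
  set ψ : ℝ → ℝ := fun z => Real.log z ^ 2 / (1 + z ^ 2) + Real.log r * (Real.log z / (1 + z ^ 2)) with hψ
  have iφ : IntegrableOn φ (Ioi 0) := A2.1.sub (A1.1.const_mul _)
  have iψ : IntegrableOn ψ (Ioi 0) := A2.1.add (A1.1.const_mul _)
  have vφ : ∫ z in Ioi (0:ℝ), φ z = Real.pi ^ 3 / 8 := by
    rw [hφ, integral_sub A2.1 (A1.1.const_mul _), integral_const_mul, A2.2, A1.2]; ring
  have vψ : ∫ z in Ioi (0:ℝ), ψ z = Real.pi ^ 3 / 8 := by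
    rw [hψ, integral_add A2.1 (A1.1.const_mul _), integral_const_mul, A2.2, A1.2]; ring
  have e : EqOn (fun y : ℝ => Real.log y / (1 + y ^ 2) * (y * cf (y * r))) (fun y => (r / (1 - r ^ 2)) * (φ (r * y) - ψ y)) (Ioi 0) := by
    intro y hy
    have hy0 : 0 < y := hy
    simp only [hφ, hψ, cf]
    rw [mul_comm y r, Real.log_mul hr0.ne' hy0.ne']
    field_simp
    ring
  have iφ' : IntegrableOn (fun y => φ (r * y)) (Ioi 0) := by
    rw [integrableOn_Ioi_comp_mul_left_iff φ 0 hr0, mul_zero]; exact iφ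
  rw [setIntegral_congr_fun measurableSet_Ioi e, integral_const_mul, integral_sub iφ' iψ, integral_comp_mul_left_Ioi φ 0 hr0,
    mul_zero, vφ, vψ]
  have h2 : 1 - r ^ 2 = (1 - r) * (1 + r) := by ring
  have h3 : 1 - r ≠ 0 := by linarith [hr.2]
  rw [h2, smul_eq_mul]
  field_simp

lemma log_bd {p : ℝ} (hp : 0 < p) : |Real.log p| ≤ p + p⁻¹ := by
  have h1 := Real.log_le_self hp.le
  have h2 := Real.log_le_self (inv_pos.2 hp).le
  rw [Real.log_inv] at h2
  have := inv_pos.2 hp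
  rw [abs_le]; constructor <;> linarith

lemma bound1 {p q T : ℝ} (hp : 0 < p) (hq : 0 < q) (hq1 : q < 1) (hT : T ^ 8 = 1 + (p ^ 8) ^ 2) (hT1 : 1 ≤ T)
    (hTp : p ^ 2 ≤ T) : |Real.log (p ^ 8) / (1 + (p ^ 8) ^ 2) * (p ^ 8 * cf (p ^ 8 * q ^ 8))| ≤ 256 * ((T ^ 5)⁻¹ * (q ^ 5)⁻¹) := by
  have hT0 : 0 < T := by linarith
  have l1 : |Real.log (p ^ 8)| ≤ 8 * (p + p⁻¹) := by
    rw [Real.log_pow, abs_mul]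
    have := log_bd hp
    simp
    linarith
  have l2 : |Real.log (p ^ 8 * q ^ 8)| ≤ 8 * ((p + p⁻¹) * q⁻¹) := by
    rw [← mul_pow, Real.log_pow, abs_mul]
    have h := log_bd (mul_pos hp hq)
    have h3 : p * q + (p * q)⁻¹ ≤ (p + p⁻¹) * q⁻¹ := by
      rw [mul_inv, add_mul]
      have : q ≤ q⁻¹ := by
        have := (one_lt_inv₀ hq).2 hq1
        linarith
      have := mul_le_mul_of_nonneg_left this hp.le
      linarith
    simp
    linarith
  have l3 : (p ^ 8 * (p ^ 8 * q ^ 8)) / (1 + (p ^ 8 * q ^ 8) ^ 2) ≤ p ^ 4 * (q ^ 4)⁻¹ := by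
    rw [← div_eq_mul_inv, div_le_div_iff₀ (by positivity) (by positivity)]
    have hz : 0 < p * q := by positivity
    have : (p * q) ^ 12 ≤ 1 + (p * q) ^ 16 := by
      rcases le_total (p * q) 1 with h | h
      · have := pow_le_one₀ hz.le h (n := 12)
        have : 0 ≤ (p * q) ^ 16 := by positivity
        linarith
      · have := pow_le_pow_right₀ h (show 12 ≤ 16 by norm_num)
        linarith
    calc p ^ 8 * (p ^ 8 * q ^ 8) * q ^ 4 = p ^ 4 * (p * q) ^ 12 := by ring
      _ ≤ p ^ 4 * (1 + (p * q) ^ 16) := by gcongr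
      _ = _ := by ring
  have l4 : p ^ 2 * (p ^ 2 + 1) ^ 2 ≤ 4 * T ^ 3 := by
    have a : p ^ 2 + 1 ≤ 2 * T := by linarith
    calc p ^ 2 * (p ^ 2 + 1) ^ 2 ≤ T * (2 * T) ^ 2 := by gcongr
      _ = _ := by ring
  have e : Real.log (p ^ 8) / (1 + (p ^ 8) ^ 2) * (p ^ 8 * cf (p ^ 8 * q ^ 8)) =
     Real.log (p ^ 8) * Real.log (p ^ 8 * q ^ 8) * ((p ^ 8 * (p ^ 8 * q ^ 8)) / (1 + (p ^ 8 * q ^ 8) ^ 2)) * (T ^ 8)⁻¹ := by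
    rw [cf, hT]; ring
  rw [e, abs_mul, abs_mul, abs_mul, abs_of_pos (by positivity : 0 < (T ^ 8)⁻¹),
    abs_of_pos (by positivity : 0 < (p ^ 8 * (p ^ 8 * q ^ 8)) / (1 + (p ^ 8 * q ^ 8) ^ 2))]
  calc _ ≤ (8 * (p + p⁻¹)) * (8 * ((p + p⁻¹) * q⁻¹)) * (p ^ 4 * (q ^ 4)⁻¹) * (T ^ 8)⁻¹ := by gcongr
    _ = 64 * (p ^ 2 * (p ^ 2 + 1) ^ 2) * ((T ^ 8)⁻¹ * (q ^ 5)⁻¹) := by field_simp; ring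
    _ ≤ 64 * (4 * T ^ 3) * ((T ^ 8)⁻¹ * (q ^ 5)⁻¹) := by gcongr
    _ = _ := by field_simp; ring

lemma bound2 {y r : ℝ} (hy : 0 < y) (hr : r ∈ Ioo (0:ℝ) 1) :
    ‖Real.log y / (1 + y ^ 2) * (y * cf (y * r))‖ ≤ 256 * ((1 + ‖y‖ ^ 2) ^ (-(5/4:ℝ) / 2) * r ^ (-(5/8:ℝ))) := by
  have hr0 := hr.1
  have h8 : ∀ x : ℝ, 0 < x → (x ^ (1/8:ℝ)) ^ 8 = x := by
    intro x hx
    rw [← Real.rpow_natCast, ← Real.rpow_mul hx.le]; norm_num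
  have h5 : ∀ x : ℝ, 0 < x → ((x ^ (1/8:ℝ)) ^ 5)⁻¹ = x ^ (-(5/8:ℝ)) := by
    intro x hx
    rw [← Real.rpow_natCast, ← Real.rpow_mul hx.le, ← Real.rpow_neg hx.le]; norm_num
  have hT0 : 0 < 1 + y ^ 2 := by positivity
  have := bound1 (p := y ^ (1/8:ℝ)) (q := r ^ (1/8:ℝ)) (T := (1 + y ^ 2) ^ (1/8:ℝ)) (by positivity) (by positivity)
    (Real.rpow_lt_one hr0.le hr.2 (by norm_num)) (by rw [h8 _ hT0, h8 _ hy])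
    (Real.one_le_rpow (by nlinarith) (by norm_num)) (by
      rw [← Real.rpow_natCast, ← Real.rpow_mul hy.le, mul_comm, Real.rpow_mul hy.le]
      refine Real.rpow_le_rpow (by positivity) ?_ (by norm_num)
      norm_num)
  rw [h8 _ hy, h8 _ hr0, h5 _ hT0, h5 _ hr0] at this
  rw [Real.norm_eq_abs, Real.norm_eq_abs, sq_abs]
  convert this using 4
  norm_num

lemma K_int : Integrable (Function.uncurry fun y r : ℝ => Real.log y / (1 + y ^ 2) * (y * cf (y * r)))
    ((volume.restrict (Ioi 0)).prod (volume.restrict (Ioo 0 1))) := by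
  have h1 : Integrable (fun y : ℝ => (1 + ‖y‖ ^ 2) ^ (-(5/4:ℝ) / 2)) (volume.restrict (Ioi 0)) := by
    refine Integrable.restrict ?_
    apply integrable_rpow_neg_one_add_norm_sq
    simp; norm_num
  have h2 : Integrable (fun r : ℝ => r ^ (-(5/8:ℝ))) (volume.restrict (Ioo 0 1)) := by
    have := intervalIntegral.intervalIntegrable_rpow' (a := 0) (b := 1) (r := -(5/8:ℝ)) (by norm_num)
    rw [intervalIntegrable_iff_integrableOn_Ioo_of_le zero_le_one] at this
    exact this
  have mc : Measurable cf := cf_cont.measurable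
  refine Integrable.mono' ((h1.mul_prod h2).const_mul 256) ?_ ?_
  · refine Measurable.aestronglyMeasurable ?_
    simp only [Function.uncurry_def]
    fun_prop
  · rw [Measure.prod_restrict]
    filter_upwards [ae_restrict_mem (measurableSet_Ioi.prod measurableSet_Ioo)] with z hz
    exact bound2 hz.1 hz.2

lemma int_log2 : ∫ r in Ioo (0:ℝ) 1, (1 + r)⁻¹ = Real.log 2 := by
  have := (ftc zero_le_one (g := fun r => Real.log (1 + r)) (g' := fun r => (1 + r)⁻¹) ?_ ?_ ?_).2.1
  · rw [this]; norm_num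
  · intro x hx
    have : 1 + x ≠ 0 := by linarith [hx.1]
    exact (ContinuousAt.log (by fun_prop) this).continuousWithinAt
  · intro x hx
    have : 1 + x ≠ 0 := by linarith [hx.1]
    simpa using ((hasDerivAt_id' x).const_add 1).log this
  · intro x hx
    have := hx.1
    positivity

lemma P_val : IntegrableOn (fun y => (-Real.log y) / (1 + y ^ 2) * Dm y) (Ioo 0 1) ∧
    ∫ y in Ioo (0:ℝ) 1, (-Real.log y) / (1 + y ^ 2) * Dm y = Real.pi ^ 3 * Real.log 2 / 8 := by
  have hs := integral_integral_swap K_int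
  have e1 : EqOn (fun y => ∫ r in Ioo (0:ℝ) 1, Real.log y / (1 + y ^ 2) * (y * cf (y * r)))
      (fun y => Real.log y / (1 + y ^ 2) * Bf y) (Ioi 0) := by
    intro y hy
    simp only
    rw [integral_const_mul, Bf_scale hy]
  rw [setIntegral_congr_fun measurableSet_Ioi e1, setIntegral_congr_fun measurableSet_Ioo fun r hr => inner_y hr,
    integral_const_mul, int_log2] at hs
  have hi : IntegrableOn (fun y => Real.log y / (1 + y ^ 2) * Bf y) (Ioi 0) :=
    (integrableOn_congr_fun e1 measurableSet_Ioi).1 K_int.integral_prod_left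
  obtain ⟨h1, h2, h3⟩ := split_int _ hi
  have e : EqOn (fun y => (-Real.log y) / (1 + y ^ 2) * Dm y) (fun y => Real.log y / (1 + y ^ 2) * Bf y +
      (y ^ 2)⁻¹ * (Real.log y⁻¹ / (1 + y⁻¹ ^ 2) * Bf y⁻¹)) (Ioo 0 1) := by
    intro y hy
    have := hy.1
    simp only
    rw [Dm_eq hy.1, Real.log_inv]
    field_simp
    ring
  refine ⟨(integrableOn_congr_fun e measurableSet_Ioo).2 (h1.add h2), ?_⟩
  rw [setIntegral_congr_fun measurableSet_Ioo e, integral_add h1 h2, ← h3, hs]; ring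

lemma hin_val : ∫⁻ y in Ioo (0:ℝ) 1, ENNReal.ofReal (hin y) =
    ENNReal.ofReal (4 * bet 3 + 6 * bet 4 - Real.pi ^ 3 * Real.log 2 / 8) ∧
    0 ≤ 4 * bet 3 + 6 * bet 4 - Real.pi ^ 3 * Real.log 2 / 8 := by
  have e : hin = fun y => (2 * ((-Real.log y) ^ 2 / (1 + y ^ 2)) + (-Real.log y) ^ 3 / (1 + y ^ 2)) - (-Real.log y) / (1 + y ^ 2) * Dm y := by
    ext y; rw [hin]; ring
  have i1 : IntegrableOn (fun y : ℝ => 2 * ((-Real.log y) ^ 2 / (1 + y ^ 2)) + (-Real.log y) ^ 3 / (1 + y ^ 2)) (Ioo 0 1) :=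
    (I2.1.const_mul 2).add I3.1
  have i2 : IntegrableOn hin (Ioo 0 1) := by rw [e]; exact i1.sub P_val.1
  have v : ∫ y in Ioo (0:ℝ) 1, hin y = 4 * bet 3 + 6 * bet 4 - Real.pi ^ 3 * Real.log 2 / 8 := by
    rw [e, integral_sub i1 P_val.1, integral_add (I2.1.const_mul 2) I3.1, integral_const_mul, I2.2, I3.2, P_val.2]; ring
  have hn : 0 ≤ᵐ[volume.restrict (Ioo (0:ℝ) 1)] hin := by
    filter_upwards [ae_restrict_mem measurableSet_Ioo] with x hx using (h_inner hx).2
  rw [← v]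
  exact ⟨(ofReal_integral_eq_lintegral_ofReal i2 hn).symm, integral_nonneg_of_ae hn⟩

lemma final : ∑' p : {p : ℕ × ℕ // p.2 < p.1}, tm p.1.1 p.1.2 =
    4 * bet 3 + 6 * bet 4 - Real.pi ^ 3 * Real.log 2 / 8 - 2 * VV := by
  have h := fgh
  rw [← S_eq, g_val.1, h_val, hin_val.1] at h
  have hV := g_val.2
  set S := ∑' p : {p : ℕ × ℕ // p.2 < p.1}, ENNReal.ofReal (tm p.1.1 p.1.2) with hS
  have hfin : S ≠ ⊤ := by
    intro h'
    rw [h', top_add] at h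
    exact ENNReal.ofReal_ne_top h.symm
  have h2 := congrArg ENNReal.toReal h
  rw [ENNReal.toReal_add hfin ENNReal.ofReal_ne_top, ENNReal.toReal_ofReal (by linarith), ENNReal.toReal_ofReal hin_val.2] at h2
  have h3 : S.toReal = ∑' p : {p : ℕ × ℕ // p.2 < p.1}, tm p.1.1 p.1.2 := by
    rw [hS, ENNReal.tsum_toReal_eq (fun p => ENNReal.ofReal_ne_top)]
    exact tsum_congr fun p => ENNReal.toReal_ofReal (tm_nonneg _ _)
  rw [← h3]; linarith

end
end S13


open Real Complex

/-- `∑_{n₁ > n₂ ≥ 0} 4^{n₁}/(binom(2n₁,n₁)(2n₁−1)²(2n₂+1))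
  = 14β(4) − 16 Im Li₄((1+i)/2) − π log³2/12 − 3π³ log2/16
    + π log²2/8 + 5π³/32 − 4 Im Li₃((1+i)/2)`. -/
theorem stmt13 :
    (∑' p : {p : ℕ × ℕ // p.2 < p.1},
      (4 : ℝ) ^ p.1.1 /
        ((Nat.choose (2 * p.1.1) p.1.1 : ℝ) * (2 * (p.1.1 : ℝ) - 1) ^ 2 *
          (2 * (p.1.2 : ℝ) + 1))) =
    14 * (∑' k : ℕ, (-1 : ℝ) ^ k / (2 * (k : ℝ) + 1) ^ 4) -
      16 * (∑' n : ℕ, ((1 + Complex.I) / 2) ^ (n + 1) / ((n : ℂ) + 1) ^ 4).im -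
      π * Real.log 2 ^ 3 / 12 - 3 * π ^ 3 * Real.log 2 / 16 +
      π * Real.log 2 ^ 2 / 8 + 5 * π ^ 3 / 32 -
      4 * (∑' n : ℕ, ((1 + Complex.I) / 2) ^ (n + 1) / ((n : ℂ) + 1) ^ 3).im := by
  have h := S13.final
  simp only [S13.tm] at h
  rw [h, S13.bet3, S13.VV]
  have e4 : (∑' n : ℕ, ((1 + Complex.I) / 2) ^ (n + 1) / ((n : ℂ) + 1) ^ 4) = S13.Li 4 S13.a1 := rfl
  have e3 : (∑' n : ℕ, ((1 + Complex.I) / 2) ^ (n + 1) / ((n : ℂ) + 1) ^ 3) = S13.Li 3 S13.a1 := rfl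
  have eb : (∑' k : ℕ, (-1 : ℝ) ^ k / (2 * (k : ℝ) + 1) ^ 4) = S13.bet 4 := rfl
  rw [e4, e3, eb]
  ring
end

section
/- We have ∑_{n₁ ≥ n₂ ≥ 1} 4^{n₁} / (binom(2n₁, n₁) · (2n₁+1)² · (2n₂−1)) = 3π³/16 − 8 · Im(∑_{n=1}^∞ ((1+i)/2)^n / n³) + (π (log 2)²)/4, where the double sum is over integers n₁ ≥ n₂ ≥ 1. -/
open Real Complex

section Helpers

open Filter Topology Set

noncomputable def Li (s : ℕ) (z : ℂ) : ℂ := ∑' n : ℕ, z ^ (n + 1) / ((n : ℂ) + 1) ^ s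

lemma Li_summable (s : ℕ) {z : ℂ} (hz : ‖z‖ < 1) :
    Summable fun n : ℕ => z ^ (n + 1) / ((n : ℂ) + 1) ^ s := by
  have hg : Summable fun n : ℕ => ‖z‖ ^ (n + 1) := by
    exact (summable_nat_add_iff 1).2 (summable_geometric_of_lt_one (norm_nonneg _) hz)
  refine Summable.of_norm_bounded hg fun n => ?_
  rw [norm_div, norm_pow, norm_pow]
  have h1 : ‖((n : ℂ) + 1)‖ = (n : ℝ) + 1 := by
    have := Complex.norm_natCast (n + 1)
    push_cast at this
    exact this
  rw [h1]
  apply div_le_self (by positivity)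
  apply one_le_pow₀
  have : (0 : ℝ) ≤ n := by positivity
  linarith

lemma Li_hasDerivAt (s : ℕ) {z : ℂ} (hz : ‖z‖ < 1) (h0 : z ≠ 0) :
    HasDerivAt (Li (s + 1)) (Li s z / z) z := by
  obtain ⟨r, hr, hr1⟩ := exists_between hz
  have hr0 : 0 ≤ r := (norm_nonneg z).trans hr.le
  have key := hasDerivAt_tsum_of_isPreconnected (𝕜 := ℂ) (F := ℂ)
    (g := fun (n : ℕ) (z : ℂ) => z ^ (n + 1) / ((n : ℂ) + 1) ^ (s + 1))
    (g' := fun (n : ℕ) (z : ℂ) => z ^ n / ((n : ℂ) + 1) ^ s)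
    (u := fun n => r ^ n) (t := Metric.ball 0 r) (y₀ := z) (y := z)
    (summable_geometric_of_lt_one hr0 hr1) Metric.isOpen_ball
    (convex_ball (0 : ℂ) r).isPreconnected ?_ ?_ (by simpa using hr) (Li_summable _ hz)
    (by simpa using hr)
  · have e : Li s z / z = ∑' n : ℕ, z ^ n / ((n : ℂ) + 1) ^ s := by
      rw [Li, div_eq_mul_inv, ← tsum_mul_right]
      congr 1
      ext n
      rw [pow_succ]
      field_simp
    rw [e]
    exact key
  · intro n y _
    have hn : ((n : ℂ) + 1) ≠ 0 := by exact_mod_cast Nat.succ_ne_zero n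
    have := (hasDerivAt_pow (n + 1) y).div_const (((n : ℂ) + 1) ^ (s + 1))
    refine this.congr_deriv ?_
    rw [Nat.add_sub_cancel, pow_succ]
    push_cast
    field_simp
  · intro n y hy
    rw [norm_div, norm_pow, norm_pow]
    have h1 : ‖((n : ℂ) + 1)‖ = (n : ℝ) + 1 := by
      have := Complex.norm_natCast (n + 1)
      push_cast at this
      exact this
    rw [h1]
    have hy' : ‖y‖ ≤ r := by simpa using (mem_ball_zero_iff.1 hy).le
    refine (div_le_self (by positivity) ?_).trans (pow_le_pow_left₀ (norm_nonneg _) hy' n)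
    apply one_le_pow₀
    have : (0 : ℝ) ≤ n := by positivity
    linarith

lemma Li_one {z : ℂ} (hz : ‖z‖ < 1) : Li 1 z = -Complex.log (1 - z) := by
  have h := Complex.hasSum_taylorSeries_neg_log hz
  have h2 := (hasSum_nat_add_iff' 1).2 h
  simp only [Finset.sum_range_one, Nat.cast_zero, div_zero, sub_zero] at h2
  rw [← h2.tsum_eq, Li]
  simp

lemma Li_two_deriv {z : ℂ} (hz : ‖z‖ < 1) (h0 : z ≠ 0) :
    HasDerivAt (Li 2) (-Complex.log (1 - z) / z) z := by
  have := Li_hasDerivAt 1 hz h0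
  rwa [Li_one hz] at this

lemma Li_cont (s : ℕ) : ContinuousOn (Li (s + 2)) (Metric.closedBall 0 1) := by
  have hs : Summable fun n : ℕ => 1 / ((n : ℝ) + 1) ^ 2 := by
    have := (summable_nat_add_iff 1).2 (Real.summable_one_div_nat_pow.2 (one_lt_two))
    simpa using this
  refine continuousOn_tsum (u := fun n : ℕ => 1 / ((n : ℝ) + 1) ^ 2) ?_ hs ?_
  · intro n
    fun_prop
  · intro n x hx
    have hx' : ‖x‖ ≤ 1 := by simpa using hx
    have h1 : ‖((n : ℂ) + 1)‖ = (n : ℝ) + 1 := by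
      have := Complex.norm_natCast (n + 1)
      push_cast at this
      exact this
    rw [norm_div, norm_pow, norm_pow, h1]
    have h0 : (0 : ℝ) ≤ n := by positivity
    apply div_le_div₀ (by norm_num) (pow_le_one₀ (norm_nonneg _) hx') (by positivity)
    apply pow_le_pow_right₀ (by linarith) (by omega)

lemma Li_conj (s : ℕ) (z : ℂ) : Li s ((starRingEnd ℂ) z) = (starRingEnd ℂ) (Li s z) := by
  rw [Li, Li, Complex.conj_tsum]
  congr 1
  ext n
  simp

lemma Li_zero (s : ℕ) : Li s 0 = 0 := by
  simp [Li]

lemma Li_two_one : Li 2 1 = ((π ^ 2 / 6 : ℝ) : ℂ) := by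
  have h2 := (hasSum_nat_add_iff' 1).2 hasSum_zeta_two
  have h3 := Complex.hasSum_ofReal.2 h2
  simp only [Finset.sum_range_one, Nat.cast_zero, ne_eq, OfNat.ofNat_ne_zero, not_false_eq_true,
    zero_pow, div_zero, sub_zero] at h3
  rw [← h3.tsum_eq, Li]
  simp

lemma Li_three_I : (Li 3 Complex.I).im = π ^ 3 / 32 := by
  have h := hasSum_one_div_nat_pow_mul_sin (k := 1) one_ne_zero (x := 1 / 4) (by constructor <;> norm_num)
  have h2 := (hasSum_nat_add_iff' 1).2 h
  have hs : Summable fun n : ℕ => Complex.I ^ (n + 1) / ((n : ℂ) + 1) ^ 3 := by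
    have hs : Summable fun n : ℕ => 1 / ((n : ℝ) + 1) ^ 3 := by
      have := (summable_nat_add_iff 1).2 (Real.summable_one_div_nat_pow.2 (show 1 < 3 by norm_num))
      simpa using this
    refine Summable.of_norm_bounded hs fun n => ?_
    have h1 : ‖((n : ℂ) + 1)‖ = (n : ℝ) + 1 := by
      have := Complex.norm_natCast (n + 1)
      push_cast at this
      exact this
    rw [norm_div, norm_pow, norm_pow, h1]
    simp
  have h3 := (Complex.hasSum_im hs.hasSum)
  have h4 : (fun n : ℕ => (Complex.I ^ (n + 1) / ((n : ℂ) + 1) ^ 3).im) =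
      fun n : ℕ => 1 / ((n + 1 : ℕ) : ℝ) ^ (2 * 1 + 1) * Real.sin (2 * π * (n + 1 : ℕ) * (1 / 4)) := by
    ext n
    have e1 : Complex.I ^ (n + 1) = Complex.exp (((2 * π * (n + 1 : ℕ) * (1 / 4) : ℝ) : ℂ) * Complex.I) := by
      have : Complex.I = Complex.exp ((π / 2 : ℝ) * Complex.I) := by
        rw [Complex.exp_mul_I, ← Complex.ofReal_cos, ← Complex.ofReal_sin]; simp
      conv_lhs => rw [this]
      rw [← Complex.exp_nat_mul]
      congr 1
      push_cast
      ring
    have e2 : ((n : ℂ) + 1) ^ 3 = (((n + 1 : ℕ) : ℝ) ^ 3 : ℝ) := by push_cast; ring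
    rw [e1, e2, Complex.div_ofReal_im, Complex.exp_ofReal_mul_I_im]
    ring
  rw [h4] at h3
  have := h3.unique h2
  rw [Li, this]
  simp [Polynomial.bernoulli, Finset.sum_range_succ, bernoulli_eq_bernoulli'_of_ne_one,
    bernoulli_one, Nat.factorial]
  norm_num [Nat.choose]
  ring

lemma comp_real {f : ℂ → ℂ} {v : ℝ → ℂ} {f' v' : ℂ} {u : ℝ} (hf : HasDerivAt f f' (v u))
    (hv : HasDerivAt v v' u) : HasDerivAt (fun x => f (v x)) (f' * v') u := by
  have := HasDerivAt.scomp (𝕜 := ℝ) (𝕜' := ℂ) u hf hv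
  refine this.congr_deriv ?_
  simp [mul_comm]

lemma im_deriv {f : ℝ → ℂ} {f' : ℂ} {u : ℝ} (hf : HasDerivAt f f' u) :
    HasDerivAt (fun x => (f x).im) f'.im u :=
  (Complex.imCLM.hasFDerivAt.comp_hasDerivAt u hf)

lemma re_deriv {f : ℝ → ℂ} {f' : ℂ} {u : ℝ} (hf : HasDerivAt f f' u) :
    HasDerivAt (fun x => (f x).re) f'.re u :=
  (Complex.reCLM.hasFDerivAt.comp_hasDerivAt u hf)

lemma const_lim {f : ℝ → ℝ} {l r : ℝ} (h : ∀ x ∈ Ioo (0 : ℝ) 1, HasDerivAt f 0 x)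
    (h0 : Tendsto f (𝓝[>] 0) (𝓝 l)) (h1 : Tendsto f (𝓝[<] 1) (𝓝 r)) : r = l := by
  have := intervalIntegral.integral_eq_sub_of_hasDerivAt_of_tendsto (f' := fun _ => (0 : ℝ))
    one_pos h (by simp) h0 h1
  simp at this
  linarith

noncomputable def lg (u : ℝ) : ℂ := Complex.log (1 + u * Complex.I)

lemma lg_slit (u : ℝ) : (1 + u * Complex.I) ∈ Complex.slitPlane := by
  left; simp

lemma lg_ne (u : ℝ) : (1 + u * Complex.I) ≠ 0 := Complex.slitPlane_ne_zero (lg_slit u)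

lemma lg_normSq (u : ℝ) : ‖(1 + u * Complex.I)‖ ^ 2 = 1 + u ^ 2 := by
  rw [← Complex.normSq_eq_norm_sq, Complex.normSq_apply]; simp; ring

lemma lg_re (u : ℝ) : (lg u).re = Real.log (1 + u ^ 2) / 2 := by
  rw [lg, Complex.log_re, ← lg_normSq, Real.log_pow]; push_cast; ring

lemma lg_im (u : ℝ) : (lg u).im = Real.arctan u := by
  rw [lg, Complex.log_im, Complex.arg_of_re_nonneg (by simp), Real.arctan_eq_arcsin, ← lg_normSq,
    Real.sqrt_sq (norm_nonneg _)]
  simp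

lemma lg_eq (u : ℝ) : lg u = ((Real.log (1 + u ^ 2) / 2 : ℝ) : ℂ) + (Real.arctan u : ℝ) * Complex.I := by
  rw [← lg_re, ← lg_im, Complex.re_add_im]

lemma lg_deriv (u : ℝ) : HasDerivAt lg (Complex.I / (1 + u * Complex.I)) u := by
  have h : HasDerivAt (fun x : ℝ => (1 + x * Complex.I : ℂ)) Complex.I u := by
    simpa using ((Complex.ofRealCLM.hasDerivAt (x := u)).mul_const Complex.I).const_add 1
  exact h.clog_real (lg_slit u)

noncomputable def vv (u : ℝ) : ℂ := (1 + u * Complex.I)⁻¹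

lemma vv_deriv (u : ℝ) : HasDerivAt vv (-Complex.I * vv u ^ 2) u := by
  have h : HasDerivAt (fun x : ℝ => (1 + x * Complex.I : ℂ)) Complex.I u := by
    simpa using ((Complex.ofRealCLM.hasDerivAt (x := u)).mul_const Complex.I).const_add 1
  refine (h.fun_inv (lg_ne u)).congr_deriv ?_
  rw [vv]; field_simp

lemma vv_cont : Continuous vv :=
  continuous_iff_continuousAt.2 fun u => (vv_deriv u).continuousAt

lemma lg_cont : Continuous lg :=
  continuous_iff_continuousAt.2 fun u => (lg_deriv u).continuousAt

lemma vv_normSq (u : ℝ) : ‖vv u‖ ^ 2 = (1 + u ^ 2)⁻¹ := by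
  rw [vv, norm_inv, inv_pow, lg_normSq]

lemma vv_le (u : ℝ) : ‖vv u‖ ≤ 1 := by
  have : ‖vv u‖ ^ 2 ≤ 1 := by
    rw [vv_normSq]; apply inv_le_one_of_one_le₀; nlinarith
  nlinarith [norm_nonneg (vv u)]

lemma vv_lt {u : ℝ} (hu : 0 < u) : ‖vv u‖ < 1 := by
  have : ‖vv u‖ ^ 2 < 1 := by
    rw [vv_normSq]; apply inv_lt_one_of_one_lt₀; nlinarith
  nlinarith [norm_nonneg (vv u)]

lemma vv_ne (u : ℝ) : vv u ≠ 0 := inv_ne_zero (lg_ne u)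

lemma one_sub_vv (u : ℝ) : 1 - vv u = u * Complex.I * vv u := by
  have := lg_ne u
  rw [vv]; field_simp; ring

lemma one_sub_vv_lt (u : ℝ) : ‖1 - vv u‖ < 1 := by
  have : ‖1 - vv u‖ ^ 2 < 1 := by
    rw [one_sub_vv, norm_mul, mul_pow, vv_normSq]
    simp
    rw [← div_eq_mul_inv, div_lt_one (by positivity)]
    linarith
  nlinarith [norm_nonneg (1 - vv u)]

noncomputable def mm (u : ℝ) : ℂ := (Real.log u : ℝ) + (π / 2 : ℝ) * Complex.I - lg u

lemma mm_eq {u : ℝ} (hu : 0 < u) : Complex.log (1 - vv u) = mm u := by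
  have h1 : Complex.exp (mm u) = 1 - vv u := by
    rw [mm, Complex.exp_sub, Complex.exp_add, lg, Complex.exp_log (lg_ne u), one_sub_vv,
      ← Complex.ofReal_exp, Real.exp_log hu, Complex.exp_mul_I, ← Complex.ofReal_cos,
      ← Complex.ofReal_sin, vv]
    simp
    field_simp
  have h2 : (mm u).im = π / 2 - Real.arctan u := by
    rw [mm, Complex.sub_im, lg_im]; simp
  rw [← h1, Complex.log_exp]
  · rw [h2]; linarith [Real.arctan_lt_pi_div_two u, Real.pi_pos]
  · rw [h2]; linarith [Real.neg_pi_div_two_lt_arctan u, Real.pi_pos]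

lemma mm_deriv {u : ℝ} (hu : 0 < u) :
    HasDerivAt mm ((u : ℂ)⁻¹ - Complex.I * vv u) u := by
  have h := (((Real.hasDerivAt_log hu.ne').ofReal_comp).add_const
    (((π / 2 : ℝ) : ℂ) * Complex.I)).sub (lg_deriv u)
  refine h.congr_deriv ?_
  rw [vv]; push_cast; rfl

noncomputable def cc : ℂ := ((Real.log 2 / 2 : ℝ) : ℂ)

noncomputable def DD (u : ℝ) : ℂ :=
  -(cc - lg u) ^ 3 / 3 + mm u * (cc - lg u) ^ 2 + 2 * Li 2 (vv u) * (cc - lg u) - 2 * Li 3 (vv u)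

lemma lg_deriv' (u : ℝ) : HasDerivAt lg (Complex.I * vv u) u := lg_deriv u

lemma Li2_vv_deriv {u : ℝ} (hu : 0 < u) :
    HasDerivAt (fun x => Li 2 (vv x)) (mm u * (Complex.I * vv u)) u := by
  refine (comp_real (Li_two_deriv (vv_lt hu) (vv_ne u)) (vv_deriv u)).congr_deriv ?_
  have := vv_ne u
  rw [mm_eq hu]; field_simp

lemma Li3_vv_deriv {u : ℝ} (hu : 0 < u) :
    HasDerivAt (fun x => Li 3 (vv x)) (-Li 2 (vv u) * (Complex.I * vv u)) u := by
  refine (comp_real (Li_hasDerivAt 2 (vv_lt hu) (vv_ne u)) (vv_deriv u)).congr_deriv ?_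
  have := vv_ne u
  field_simp

lemma DD_deriv {u : ℝ} (hu : 0 < u) : HasDerivAt DD ((cc - lg u) ^ 2 / u) u := by
  have hl : HasDerivAt (fun x => cc - lg x) (-(Complex.I * vv u)) u := (lg_deriv' u).const_sub cc
  have h := (((((hl.fun_pow 3).fun_neg).div_const 3).fun_add ((mm_deriv hu).fun_mul (hl.fun_pow 2))).fun_add
    (((Li2_vv_deriv hu).const_mul 2).fun_mul hl)).fun_sub ((Li3_vv_deriv hu).const_mul 2)
  refine h.congr_deriv ?_
  push_cast
  ring

lemma Livv_cont (s : ℕ) : Continuous fun u => Li (s + 2) (vv u) :=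
  (Li_cont s).comp_continuous vv_cont fun u => by simpa using vv_le u

lemma Li_one_im (s : ℕ) : (Li s 1).im = 0 := by
  have := Li_conj s 1
  rw [map_one] at this
  exact Complex.conj_eq_iff_im.1 this.symm

lemma tend_arctan_log : Tendsto (fun u : ℝ => Real.log u * Real.arctan u) (𝓝[>] 0) (𝓝 0) := by
  have h : Tendsto (fun u : ℝ => |u * Real.log u|) (𝓝[>] 0) (𝓝 0) := by
    have := (Real.continuous_mul_log.abs.tendsto 0).mono_left (nhdsWithin_le_nhds (s := Ioi 0))
    simpa using this
  refine squeeze_zero_norm' ?_ h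
  filter_upwards [self_mem_nhdsWithin] with u hu
  have hu : 0 < u := hu
  rw [Real.norm_eq_abs, abs_mul, abs_mul, mul_comm]
  gcongr
  have := Real.lt_tan (Real.arctan_pos.2 hu) (Real.arctan_lt_pi_div_two u)
  rw [Real.tan_arctan] at this
  exact this.le

lemma tend_log_log : Tendsto (fun u : ℝ => Real.log u * Real.log (1 + u ^ 2)) (𝓝[>] 0) (𝓝 0) := by
  have h : Tendsto (fun u : ℝ => |u * Real.log u| * |u|) (𝓝[>] 0) (𝓝 0) := by
    have := ((Real.continuous_mul_log.abs.fun_mul continuous_abs).tendsto 0).mono_left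
      (nhdsWithin_le_nhds (s := Ioi 0))
    simpa using this
  refine squeeze_zero_norm' ?_ h
  filter_upwards [self_mem_nhdsWithin] with u hu
  have hu : 0 < u := hu
  rw [Real.norm_eq_abs, abs_mul, abs_mul]
  have h1 : |Real.log (1 + u ^ 2)| ≤ |u| * |u| := by
    rw [abs_of_nonneg (Real.log_nonneg (by nlinarith)), abs_of_pos hu]
    have := Real.log_le_sub_one_of_pos (show 0 < 1 + u ^ 2 by positivity)
    nlinarith
  calc _ ≤ |Real.log u| * (|u| * |u|) := by gcongr
    _ = _ := by ring

lemma lg_zero : lg 0 = 0 := by simp [lg]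
lemma vv_zero : vv 0 = 1 := by simp [vv]

lemma DD_lim : Tendsto (fun u => (DD u).im) (𝓝[>] 0) (𝓝 (π * Real.log 2 ^ 2 / 8)) := by
  let D0 : ℝ → ℂ := fun u => -(cc - lg u) ^ 3 / 3 + (((π / 2 : ℝ) : ℂ) * Complex.I - lg u) * (cc - lg u) ^ 2
    + 2 * Li 2 (vv u) * (cc - lg u) - 2 * Li 3 (vv u)
  have hD0 : Continuous D0 := by
    have h1 := Livv_cont 0
    have h2 := Livv_cont 1
    have h3 := lg_cont
    simp only [zero_add, Nat.reduceAdd] at h1 h2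
    fun_prop
  have e : ∀ u, (DD u).im = (D0 u).im +
      (Real.log u * Real.arctan u) * (-(Real.log 2 - Real.log (1 + u ^ 2))) := by
    intro u
    have : DD u = D0 u + (Real.log u : ℝ) * (cc - lg u) ^ 2 := by
      simp only [DD, D0, mm]; ring
    have e2 : (((Real.log u : ℝ) : ℂ) * (cc - lg u) ^ 2).im =
        (Real.log u * Real.arctan u) * (-(Real.log 2 - Real.log (1 + u ^ 2))) := by
      rw [Complex.im_ofReal_mul, pow_two, Complex.mul_im, Complex.sub_re,
        Complex.sub_im, lg_re, lg_im, cc, Complex.ofReal_re, Complex.ofReal_im]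
      ring
    rw [this, Complex.add_im, e2]
  have h0 : (D0 0).im = π * Real.log 2 ^ 2 / 8 := by
    simp only [D0, lg_zero, vv_zero, sub_zero, cc, ← Complex.ofReal_pow, ← Complex.ofReal_neg]
    rw [Complex.sub_im, Complex.add_im, Complex.add_im, Complex.im_mul_ofReal]
    have e1 := Li_one_im 2
    have e2 := Li_one_im 3
    rw [show (2 : ℂ) = ((2 : ℝ) : ℂ) by simp, show (3 : ℂ) = ((3 : ℝ) : ℂ) by simp,
      Complex.im_ofReal_mul, Complex.im_mul_ofReal, Complex.im_ofReal_mul, Complex.im_ofReal_mul, e1, e2,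
      ← Complex.ofReal_div, Complex.ofReal_im]
    simp
    ring
  simp_rw [e]
  have hl : Tendsto (fun u : ℝ => -(Real.log 2 - Real.log (1 + u ^ 2))) (𝓝[>] 0) (𝓝 (-(Real.log 2 - Real.log (1 + 0 ^ 2)))) := by
    apply Tendsto.mono_left _ nhdsWithin_le_nhds
    apply ContinuousAt.tendsto (f := fun u : ℝ => -(Real.log 2 - Real.log (1 + u ^ 2)))
    fun_prop (disch := norm_num)
  have h1 : Tendsto (fun u => (D0 u).im) (𝓝[>] 0) (𝓝 (D0 0).im) :=
    ((Complex.continuous_im.comp hD0).tendsto 0).mono_left nhdsWithin_le_nhds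
  have := h1.add (tend_arctan_log.mul hl)
  rw [zero_mul, add_zero, h0] at this
  exact this

lemma reflect : 2 * (Li 2 (vv 1)).re = π ^ 2 / 6 - (Real.log 2 ^ 2 / 4 + π ^ 2 / 16) := by
  have hd : ∀ u ∈ Ioo (0 : ℝ) 1, HasDerivAt
      (fun u => (Li 2 (vv u) + Li 2 (1 - vv u) - mm u * lg u).re) 0 u := by
    intro u hu
    have hne : 1 - vv u ≠ 0 := by
      rw [one_sub_vv]
      have := vv_ne u
      have := hu.1.ne'
      simp [*]
    have h2 := comp_real (v := fun x => 1 - vv x) (Li_two_deriv (one_sub_vv_lt u) hne) ((vv_deriv u).const_sub 1)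
    have h := re_deriv (((Li2_vv_deriv hu.1).fun_add h2).fun_sub ((mm_deriv hu.1).fun_mul (lg_deriv' u)))
    refine h.congr_deriv ?_
    rw [← Complex.zero_re]
    congr 1
    have e1 : 1 - (1 - vv u) = vv u := by ring
    have e2 : Complex.log (vv u) = -lg u := by
      rw [vv, Complex.log_inv _ (by
        have := Complex.mem_slitPlane_iff_arg.1 (lg_slit u); exact this.1), lg]
    rw [e1, e2, one_sub_vv]
    have := vv_ne u
    have : (u : ℂ) ≠ 0 := by exact_mod_cast hu.1.ne'
    have e3 : vv u * (1 + u * Complex.I) = 1 := inv_mul_cancel₀ (lg_ne u)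
    field_simp
    linear_combination lg u * e3
  have hc : Continuous fun u => Li 2 (vv u) + Li 2 (1 - vv u) := by
    refine (Livv_cont 0).add ?_
    exact (Li_cont 0).comp_continuous (continuous_const.sub vv_cont)
      fun u => by simpa using (one_sub_vv_lt u).le
  have e : ∀ u, (Li 2 (vv u) + Li 2 (1 - vv u) - mm u * lg u).re =
      (Li 2 (vv u) + Li 2 (1 - vv u) - (((π / 2 : ℝ) : ℂ) * Complex.I - lg u) * lg u).re
        - Real.log u * Real.log (1 + u ^ 2) * (1 / 2) := by
    intro u
    rw [show Real.log u * Real.log (1 + u ^ 2) * (1 / 2) = (((Real.log u : ℝ) : ℂ) * lg u).re by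
      rw [Complex.re_ofReal_mul, lg_re]; ring, ← Complex.sub_re, mm]
    congr 1; ring
  have hc2 : Continuous fun u => (Li 2 (vv u) + Li 2 (1 - vv u) - (((π / 2 : ℝ) : ℂ) * Complex.I - lg u) * lg u).re := by
    have := lg_cont
    refine Complex.continuous_re.comp (hc.sub ?_)
    fun_prop
  have h0 : Tendsto (fun u => (Li 2 (vv u) + Li 2 (1 - vv u) - mm u * lg u).re) (𝓝[>] 0) (𝓝 (π ^ 2 / 6)) := by
    simp_rw [e]
    have := ((hc2.tendsto 0).mono_left (nhdsWithin_le_nhds (s := Ioi 0))).sub (tend_log_log.mul_const (1 / 2))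
    simp only [lg_zero, vv_zero, sub_self, Li_zero, Li_two_one, mul_zero, zero_mul, sub_zero, add_zero,
      Complex.ofReal_re] at this
    exact this
  have h1 : Tendsto (fun u => (Li 2 (vv u) + Li 2 (1 - vv u) - mm u * lg u).re) (𝓝[<] 1)
      (𝓝 ((Li 2 (vv 1) + Li 2 (1 - vv 1) - mm 1 * lg 1).re)) := by
    have hm := (mm_deriv one_pos).continuousAt
    have hl := lg_cont.continuousAt (x := 1)
    exact ((Complex.continuous_re.continuousAt.comp (hc.continuousAt.sub (hm.mul hl))).tendsto).mono_left nhdsWithin_le_nhds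
  have := const_lim hd h0 h1
  have e1 : 1 - vv 1 = (starRingEnd ℂ) (vv 1) := by
    rw [one_sub_vv, vv]
    have := lg_ne 1
    simp only [map_inv₀]
    simp only [Complex.ofReal_one, one_mul, map_add, map_one, Complex.conj_I] at *
    have h3 : (1 + -Complex.I) ≠ 0 := by
      intro h; have := congrArg Complex.re h; simp at this
    field_simp
    ring_nf
    simp
    ring
  rw [e1, Li_conj, lg_eq, mm, lg_eq] at this
  simp at this
  norm_num at this
  linarith

lemma vv_one : vv 1 = (starRingEnd ℂ) ((1 + Complex.I) / 2) := by
  rw [vv]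
  have := lg_ne 1
  simp only [Complex.ofReal_one, one_mul, map_div₀, map_add, map_one, Complex.conj_I] at *
  rw [Complex.conj_ofNat]
  field_simp
  ring_nf
  simp
  ring

lemma DD_one : (DD 1).im = 2 * (Li 3 ((1 + Complex.I) / 2)).im + π * Real.log 2 ^ 2 / 16 - 3 * π ^ 3 / 64 := by
  have hr := reflect
  have e3 : (Li 3 (vv 1)).im = - (Li 3 ((1 + Complex.I) / 2)).im := by
    rw [vv_one, Li_conj, Complex.conj_im]
  have el : cc - lg 1 = ((-(π / 4) : ℝ) : ℂ) * Complex.I := by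
    rw [lg_eq, cc]; norm_num
  have em : mm 1 = ((-(Real.log 2 / 2) : ℝ) : ℂ) + ((π / 4 : ℝ) : ℂ) * Complex.I := by
    rw [mm, lg_eq]; norm_num; ring
  have e : DD 1 = (((-(Real.log 2 / 2) * (-(π ^ 2 / 16))) : ℝ) : ℂ) + ((-(π ^ 3 / 192) - π ^ 3 / 64 : ℝ) : ℂ) * Complex.I
      + ((-(π / 2) : ℝ) : ℂ) * (Li 2 (vv 1) * Complex.I) - ((2 : ℝ) : ℂ) * Li 3 (vv 1) := by
    rw [DD, el, em, mul_pow, mul_pow, Complex.I_sq, Complex.I_pow_three]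
    push_cast
    ring
  rw [e, Complex.sub_im, Complex.add_im, Complex.im_ofReal_mul, Complex.im_ofReal_mul, Complex.mul_I_im, e3]
  simp only [Complex.add_im, Complex.ofReal_im, Complex.im_ofReal_mul, Complex.I_im]
  linear_combination (-(π / 4)) * hr

noncomputable def gg (w : ℂ) : ℂ := Complex.log (1 - w) ^ 2 - Complex.log (1 + w) ^ 2

def UU : Set ℂ := Metric.ball Complex.I (√2)

lemma mem_UU {w : ℂ} : w ∈ UU ↔ w.re ^ 2 + (w.im - 1) ^ 2 < 2 := by
  rw [UU, Metric.mem_ball, Complex.dist_eq, Real.lt_sqrt (norm_nonneg _), ← Complex.normSq_eq_norm_sq,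
    Complex.normSq_apply]
  simp
  rw [pow_two, pow_two]

lemma UU_slit {w : ℂ} (hw : w ∈ UU) : 1 - w ∈ Complex.slitPlane ∧ 1 + w ∈ Complex.slitPlane := by
  rw [mem_UU] at hw
  rw [Complex.mem_slitPlane_iff, Complex.mem_slitPlane_iff]
  by_cases h : w.im = 0
  · rw [h] at hw
    constructor <;> left <;> simp <;> nlinarith
  · constructor <;> right <;> simpa using h

lemma gg_diff : DifferentiableOn ℂ gg UU := by
  intro w hw
  obtain ⟨h1, h2⟩ := UU_slit hw
  apply DifferentiableAt.differentiableWithinAt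
  unfold gg
  fun_prop (disch := assumption)

lemma zero_mem_UU : (0 : ℂ) ∈ UU := by rw [mem_UU]; norm_num

lemma exists_P : ∃ P : ℂ → ℂ, P 0 = 0 ∧ ContinuousAt P 0 ∧
    ∀ w ∈ UU, w ≠ 0 → HasDerivAt P (gg w / w) w := by
  have h1 : DifferentiableOn ℂ (dslope gg 0) UU :=
    (Complex.differentiableOn_dslope (Metric.isOpen_ball.mem_nhds zero_mem_UU)).2 gg_diff
  obtain ⟨P, h0, hP⟩ := (h1.isExactOn_ball).with_val_at 0 0
  refine ⟨P, h0, (hP 0 zero_mem_UU).continuousAt, fun w hw hw0 => ?_⟩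
  have := hP w hw
  rw [dslope_of_ne _ hw0, slope_def_field] at this
  simpa [gg] using this

lemma log_neg_sub (u : ℝ) : Complex.log (1 - u * Complex.I) = lg (-u) := by
  rw [lg]; congr 1; push_cast; ring

lemma gg_im (u : ℝ) : (gg (u * Complex.I)).im = -2 * Real.log (1 + u ^ 2) * Real.arctan u := by
  rw [gg, log_neg_sub, ← lg, Complex.sub_im, pow_two, pow_two, Complex.mul_im, Complex.mul_im,
    lg_re, lg_im, lg_re, lg_im, Real.arctan_neg]
  ring_nf

lemma P_real {P : ℂ → ℂ} (hP0 : P 0 = 0) (hPc : ContinuousAt P 0)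
    (hP : ∀ w ∈ UU, w ≠ 0 → HasDerivAt P (gg w / w) w) {r : ℝ} (hr : 0 < r) (hr1 : r < 1) :
    (P r).im = 0 := by
  have hmem : ∀ x : ℝ, 0 < x → x ≤ 1 → ((x * r : ℝ) : ℂ) ∈ UU := by
    intro x hx hx1
    rw [mem_UU, Complex.ofReal_re, Complex.ofReal_im]
    have : x * r ≤ 1 * r := by gcongr
    have : 0 < x * r := by positivity
    nlinarith
  have hv : ∀ x : ℝ, HasDerivAt (fun x : ℝ => ((x * r : ℝ) : ℂ)) (r : ℂ) x := by
    intro x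
    simpa using ((hasDerivAt_id x).mul_const r).ofReal_comp
  have hne : ∀ x : ℝ, 0 < x → ((x * r : ℝ) : ℂ) ≠ 0 := by
    intro x hx
    exact_mod_cast (mul_pos hx hr).ne'
  have hd : ∀ x ∈ Ioo (0 : ℝ) 1, HasDerivAt (fun x : ℝ => (P ((x * r : ℝ) : ℂ)).im) 0 x := by
    intro x hx
    have h1 := im_deriv (comp_real (v := fun x : ℝ => ((x * r : ℝ) : ℂ))
      (hP _ (hmem x hx.1 hx.2.le) (hne x hx.1)) (hv x))
    refine h1.congr_deriv ?_
    have hlt : x * r < 1 := by nlinarith [hx.1, hx.2]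
    have hpos : 0 < x * r := mul_pos hx.1 hr
    have : gg ((x * r : ℝ) : ℂ) = ((Real.log (1 - x * r) ^ 2 - Real.log (1 + x * r) ^ 2 : ℝ) : ℂ) := by
      rw [gg, show (1 : ℂ) - ((x * r : ℝ) : ℂ) = ((1 - x * r : ℝ) : ℂ) by push_cast; ring,
        show (1 : ℂ) + ((x * r : ℝ) : ℂ) = ((1 + x * r : ℝ) : ℂ) by push_cast; ring,
        ← Complex.ofReal_log (by linarith), ← Complex.ofReal_log (by linarith)]
      push_cast; ring
    rw [this, ← Complex.ofReal_div, ← Complex.ofReal_mul, Complex.ofReal_im]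
  have h0 : Tendsto (fun x : ℝ => (P ((x * r : ℝ) : ℂ)).im) (𝓝[>] 0) (𝓝 0) := by
    have hc : ContinuousAt (fun x : ℝ => (P ((x * r : ℝ) : ℂ)).im) 0 := by
      refine Complex.continuous_im.continuousAt.comp (ContinuousAt.comp (g := P) ?_ (hv 0).continuousAt)
      simpa using hPc
    have := hc.tendsto.mono_left (nhdsWithin_le_nhds (s := Ioi 0))
    simpa [hP0] using this
  have h1 : Tendsto (fun x : ℝ => (P ((x * r : ℝ) : ℂ)).im) (𝓝[<] 1) (𝓝 (P r).im) := by
    have h1 := (im_deriv (comp_real (v := fun x : ℝ => ((x * r : ℝ) : ℂ))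
      (hP _ (hmem 1 one_pos le_rfl) (hne 1 one_pos)) (hv 1))).continuousAt
    have := h1.tendsto.mono_left (nhdsWithin_le_nhds (s := Iio 1))
    simpa using this
  exact const_lim hd h0 h1

lemma mulI_deriv (u : ℝ) : HasDerivAt (fun x : ℝ => (x * Complex.I : ℂ)) Complex.I u := by
  simpa using ((Complex.ofRealCLM.hasDerivAt (x := u)).mul_const Complex.I)

lemma Li2_I_deriv {u : ℝ} (hu : 0 < u) (hu1 : u < 1) :
    HasDerivAt (fun x : ℝ => (Li 2 (x * Complex.I)).im) (Real.arctan u / u) u := by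
  have hn : ‖(u * Complex.I : ℂ)‖ < 1 := by simp [abs_of_pos hu, hu1]
  have h0 : (u : ℂ) ≠ 0 := by exact_mod_cast hu.ne'
  have := im_deriv (comp_real (v := fun x : ℝ => (x * Complex.I : ℂ)) (Li_two_deriv hn (by simp [h0])) (mulI_deriv u))
  refine this.congr_deriv ?_
  rw [log_neg_sub]
  have : -lg (-u) / (u * Complex.I) * Complex.I = (-lg (-u)) / (u : ℂ) := by
    field_simp
  rw [this, Complex.div_ofReal_im, Complex.neg_im, lg_im, Real.arctan_neg]
  ring

lemma Li3_I_deriv {u : ℝ} (hu : 0 < u) (hu1 : u < 1) :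
    HasDerivAt (fun x : ℝ => (Li 3 (x * Complex.I)).im) ((Li 2 (u * Complex.I)).im / u) u := by
  have hn : ‖(u * Complex.I : ℂ)‖ < 1 := by simp [abs_of_pos hu, hu1]
  have h0 : (u : ℂ) ≠ 0 := by exact_mod_cast hu.ne'
  have := im_deriv (comp_real (v := fun x : ℝ => (x * Complex.I : ℂ)) (Li_hasDerivAt 2 hn (by simp [h0])) (mulI_deriv u))
  refine this.congr_deriv ?_
  have : Li 2 (u * Complex.I) / (u * Complex.I) * Complex.I = (Li 2 (u * Complex.I)) / (u : ℂ) := by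
    field_simp
  rw [this, Complex.div_ofReal_im]

lemma LiI_cont (s : ℕ) : ContinuousOn (fun x : ℝ => (Li (s + 2) (x * Complex.I)).im) (Icc 0 1) := by
  refine Complex.continuous_im.comp_continuousOn ((Li_cont s).comp (by fun_prop) ?_)
  intro x hx
  simpa [abs_of_nonneg hx.1] using hx.2

lemma LiI_lim0 (s : ℕ) : Tendsto (fun x : ℝ => (Li (s + 2) (x * Complex.I)).im) (𝓝[>] 0) (𝓝 0) := by
  have := (LiI_cont s 0 (by simp)).tendsto
  simp only [Complex.ofReal_zero, zero_mul, Li_zero, Complex.zero_im] at this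
  refine this.mono_left ?_
  rw [← nhdsWithin_Ioc_eq_nhdsGT (zero_lt_one' ℝ)]
  exact nhdsWithin_mono _ Ioc_subset_Icc_self

lemma LiI_lim1 (s : ℕ) : Tendsto (fun x : ℝ => (Li (s + 2) (x * Complex.I)).im) (𝓝[<] 1)
    (𝓝 (Li (s + 2) Complex.I).im) := by
  have := (LiI_cont s 1 (by simp)).tendsto
  simp only [Complex.ofReal_one, one_mul] at this
  refine this.mono_left ?_
  rw [← nhdsWithin_Ico_eq_nhdsLT (zero_lt_one' ℝ)]
  exact nhdsWithin_mono _ Ico_subset_Icc_self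

lemma DDim_deriv {u : ℝ} (hu : 0 < u) : HasDerivAt (fun x => (DD x).im)
    (-(Real.log 2 - Real.log (1 + u ^ 2)) * Real.arctan u / u) u := by
  refine (im_deriv (DD_deriv hu)).congr_deriv ?_
  rw [Complex.div_ofReal_im, pow_two, Complex.mul_im, Complex.sub_re,
        Complex.sub_im, lg_re, lg_im, cc, Complex.ofReal_re, Complex.ofReal_im]
  ring

lemma P_I {P : ℂ → ℂ} (hP0 : P 0 = 0) (hPc : ContinuousAt P 0)
    (hP : ∀ w ∈ UU, w ≠ 0 → HasDerivAt P (gg w / w) w) :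
    (P Complex.I).im + 2 * (DD 1).im + 2 * Real.log 2 * (Li 2 Complex.I).im = π * Real.log 2 ^ 2 / 4 := by
  have hmem : ∀ x : ℝ, 0 < x → x ≤ 1 → (x * Complex.I : ℂ) ∈ UU := by
    intro x hx hx1
    rw [mem_UU]
    simp
    nlinarith
  have hne : ∀ x : ℝ, 0 < x → (x * Complex.I : ℂ) ≠ 0 := by
    intro x hx
    have : (x : ℂ) ≠ 0 := by exact_mod_cast hx.ne'
    simp [this]
  have hPd : ∀ x : ℝ, 0 < x → x ≤ 1 → HasDerivAt (fun x : ℝ => (P (x * Complex.I)).im)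
      (-2 * Real.log (1 + x ^ 2) * Real.arctan x / x) x := by
    intro x hx hx1
    have h1 := im_deriv (comp_real (v := fun x : ℝ => (x * Complex.I : ℂ))
      (hP _ (hmem x hx hx1) (hne x hx)) (mulI_deriv x))
    refine h1.congr_deriv ?_
    have h0 : (x : ℂ) ≠ 0 := by exact_mod_cast hx.ne'
    have : gg (x * Complex.I) / (x * Complex.I) * Complex.I = gg (x * Complex.I) / (x : ℂ) := by
      field_simp
    rw [this, Complex.div_ofReal_im, gg_im]
  have hd : ∀ x ∈ Ioo (0 : ℝ) 1, HasDerivAt (fun x : ℝ => (P (x * Complex.I)).im + 2 * (DD x).im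
      + 2 * Real.log 2 * (Li 2 (x * Complex.I)).im) 0 x := by
    intro x hx
    refine (((hPd x hx.1 hx.2.le).fun_add ((DDim_deriv hx.1).const_mul 2)).fun_add
      ((Li2_I_deriv hx.1 hx.2).const_mul (2 * Real.log 2))).congr_deriv ?_
    ring
  have h0 : Tendsto (fun x : ℝ => (P (x * Complex.I)).im) (𝓝[>] 0) (𝓝 0) := by
    have hc : ContinuousAt (fun x : ℝ => (P (x * Complex.I)).im) 0 := by
      refine Complex.continuous_im.continuousAt.comp (ContinuousAt.comp (g := P) ?_ (mulI_deriv 0).continuousAt)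
      simpa using hPc
    have := hc.tendsto.mono_left (nhdsWithin_le_nhds (s := Ioi 0))
    simpa [hP0] using this
  have h1 : Tendsto (fun x : ℝ => (P (x * Complex.I)).im) (𝓝[<] 1) (𝓝 (P Complex.I).im) := by
    have := (hPd 1 one_pos le_rfl).continuousAt.tendsto.mono_left (nhdsWithin_le_nhds (s := Iio 1))
    simpa using this
  have hD1 : Tendsto (fun x => (DD x).im) (𝓝[<] 1) (𝓝 (DD 1).im) :=
    (DDim_deriv one_pos).continuousAt.tendsto.mono_left (nhdsWithin_le_nhds (s := Iio 1))
  have hl := (h0.add (DD_lim.const_mul 2)).add ((LiI_lim0 0).const_mul (2 * Real.log 2))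
  have hr := (h1.add (hD1.const_mul 2)).add ((LiI_lim1 0).const_mul (2 * Real.log 2))
  have := const_lim hd hl hr
  rw [zero_add] at this
  rw [this]
  ring

noncomputable def ww (φ : ℝ) : ℂ := Complex.exp (φ * Complex.I)

lemma ww_deriv (φ : ℝ) : HasDerivAt ww (ww φ * Complex.I) φ :=
  (mulI_deriv φ).cexp

lemma ww_re (φ : ℝ) : (ww φ).re = Real.cos φ := Complex.exp_ofReal_mul_I_re φ
lemma ww_im (φ : ℝ) : (ww φ).im = Real.sin φ := Complex.exp_ofReal_mul_I_im φ

lemma ww_ne (φ : ℝ) : ww φ ≠ 0 := Complex.exp_ne_zero _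

lemma ww_mem {φ : ℝ} (h0 : 0 < φ) (h1 : φ ≤ π / 2) : ww φ ∈ UU := by
  rw [mem_UU, ww_re, ww_im]
  have := Real.sin_pos_of_pos_of_lt_pi h0 (by linarith [Real.pi_pos])
  nlinarith [Real.sin_sq_add_cos_sq φ]

lemma log_add_ww {φ : ℝ} (h0 : 0 < φ) (h1 : φ ≤ π / 2) :
    Complex.log (1 + ww φ) = (Real.log (2 * Real.cos (φ / 2)) : ℝ) + ((φ / 2 : ℝ) : ℂ) * Complex.I := by
  have hc : 0 < Real.cos (φ / 2) := Real.cos_pos_of_mem_Ioo ⟨by linarith, by linarith [Real.pi_pos]⟩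
  have : 1 + ww φ = Complex.exp ((Real.log (2 * Real.cos (φ / 2)) : ℝ) + ((φ / 2 : ℝ) : ℂ) * Complex.I) := by
    rw [Complex.exp_add, ← Complex.ofReal_exp, Real.exp_log (by positivity)]
    apply Complex.ext
    · rw [Complex.re_ofReal_mul, Complex.exp_ofReal_mul_I_re, Complex.add_re, ww_re]
      have := Real.cos_two_mul (φ / 2)
      rw [show 2 * (φ / 2) = φ by ring] at this
      rw [this]; simp; ring
    · rw [Complex.im_ofReal_mul, Complex.exp_ofReal_mul_I_im, Complex.add_im, ww_im]
      have := Real.sin_two_mul (φ / 2)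
      rw [show 2 * (φ / 2) = φ by ring] at this
      rw [this]; simp; ring
  rw [this, Complex.log_exp]
  · simp; linarith [Real.pi_pos]
  · simp; linarith [Real.pi_pos]

lemma log_sub_ww {φ : ℝ} (h0 : 0 < φ) (h1 : φ ≤ π / 2) :
    Complex.log (1 - ww φ) = (Real.log (2 * Real.sin (φ / 2)) : ℝ) + ((φ / 2 - π / 2 : ℝ) : ℂ) * Complex.I := by
  have hc : 0 < Real.sin (φ / 2) := Real.sin_pos_of_pos_of_lt_pi (by linarith) (by linarith [Real.pi_pos])
  have : 1 - ww φ = Complex.exp ((Real.log (2 * Real.sin (φ / 2)) : ℝ) + ((φ / 2 - π / 2 : ℝ) : ℂ) * Complex.I) := by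
    rw [Complex.exp_add, ← Complex.ofReal_exp, Real.exp_log (by positivity)]
    apply Complex.ext
    · rw [Complex.re_ofReal_mul, Complex.exp_ofReal_mul_I_re, Complex.sub_re, ww_re, Real.cos_sub_pi_div_two]
      have := Real.cos_two_mul (φ / 2)
      rw [show 2 * (φ / 2) = φ by ring] at this
      rw [this, Complex.one_re]
      linear_combination (-2) * Real.sin_sq_add_cos_sq (φ / 2)
    · rw [Complex.im_ofReal_mul, Complex.exp_ofReal_mul_I_im, Complex.sub_im, ww_im, Real.sin_sub_pi_div_two]
      have := Real.sin_two_mul (φ / 2)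
      rw [show 2 * (φ / 2) = φ by ring] at this
      rw [this]; simp
  rw [this, Complex.log_exp]
  · simp; linarith [Real.pi_pos]
  · simp; linarith [Real.pi_pos]

lemma gg_ww_re {φ : ℝ} (h0 : 0 < φ) (h1 : φ ≤ π / 2) :
    (gg (ww φ)).re = Real.log (2 * Real.sin φ) * Real.log (Real.tan (φ / 2)) + π * φ / 2 - π ^ 2 / 4 := by
  have hs : 0 < Real.sin (φ / 2) := Real.sin_pos_of_pos_of_lt_pi (by linarith) (by linarith [Real.pi_pos])
  have hc : 0 < Real.cos (φ / 2) := Real.cos_pos_of_mem_Ioo ⟨by linarith, by linarith [Real.pi_pos]⟩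
  have e1 : Real.log (2 * Real.sin φ) = Real.log (2 * Real.sin (φ / 2)) + Real.log (2 * Real.cos (φ / 2)) := by
    rw [← Real.log_mul (by positivity) (by positivity)]
    have := Real.sin_two_mul (φ / 2)
    rw [show 2 * (φ / 2) = φ by ring] at this
    rw [this]; congr 1; ring
  have e2 : Real.log (Real.tan (φ / 2)) = Real.log (2 * Real.sin (φ / 2)) - Real.log (2 * Real.cos (φ / 2)) := by
    rw [← Real.log_div (by positivity) (by positivity), Real.tan_eq_sin_div_cos]
    congr 1; field_simp
  rw [gg, log_add_ww h0 h1, log_sub_ww h0 h1, e1, e2, Complex.sub_re, pow_two, pow_two, Complex.mul_re,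
    Complex.mul_re]
  simp only [Complex.add_re, Complex.add_im, Complex.ofReal_re, Complex.ofReal_im, Complex.re_ofReal_mul,
    Complex.im_ofReal_mul, Complex.I_re, Complex.I_im]
  ring

lemma Pww_deriv {P : ℂ → ℂ} (hP : ∀ w ∈ UU, w ≠ 0 → HasDerivAt P (gg w / w) w)
    {φ : ℝ} (h0 : 0 < φ) (h1 : φ ≤ π / 2) :
    HasDerivAt (fun x => (P (ww x)).im)
      (Real.log (2 * Real.sin φ) * Real.log (Real.tan (φ / 2)) + π * φ / 2 - π ^ 2 / 4) φ := by
  refine (im_deriv (comp_real (hP _ (ww_mem h0 h1) (ww_ne φ)) (ww_deriv φ))).congr_deriv ?_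
  rw [← gg_ww_re h0 h1]
  have := ww_ne φ
  rw [show gg (ww φ) / ww φ * (ww φ * Complex.I) = gg (ww φ) * Complex.I by field_simp, Complex.mul_I_im]

lemma norm_log_le (z : ℂ) : ‖Complex.log z‖ ≤ |Real.log ‖z‖| + π := by
  refine (Complex.norm_le_abs_re_add_abs_im _).trans ?_
  rw [Complex.log_re, Complex.log_im]
  gcongr
  exact Complex.abs_arg_le_pi z

lemma Pww_bound {P : ℂ → ℂ} (hP0 : P 0 = 0) (hPc : ContinuousAt P 0)
    (hP : ∀ w ∈ UU, w ≠ 0 → HasDerivAt P (gg w / w) w) {ε : ℝ} (h0 : 0 < ε) (h1 : ε ≤ π / 3) :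
    ‖(P (ww ε)).im‖ ≤ 2 * ((-Real.log (1 - Real.cos ε) + π) ^ 2 + (1 + π) ^ 2) * Real.sin ε := by
  have hpi := Real.pi_pos
  have hsin : 0 < Real.sin ε := Real.sin_pos_of_pos_of_lt_pi h0 (by linarith)
  have hcos : 1 / 2 ≤ Real.cos ε := by
    rw [← Real.cos_pi_div_three]
    exact Real.cos_le_cos_of_nonneg_of_le_pi h0.le (by linarith) h1
  have hsc := Real.sin_sq_add_cos_sq ε
  have hcos1 : Real.cos ε < 1 := by nlinarith
  have hmem : ∀ t ∈ Icc 0 (Real.sin ε), ((Real.cos ε : ℝ) + (t : ℝ) * Complex.I : ℂ) ∈ UU := by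
    intro t ht
    rw [mem_UU]
    simp only [Complex.add_re, Complex.add_im, Complex.ofReal_re, Complex.ofReal_im, Complex.re_ofReal_mul,
      Complex.im_ofReal_mul, Complex.I_re, Complex.I_im]
    nlinarith [ht.1, ht.2, Real.sin_le_one ε]
  have hd : ∀ t ∈ Icc 0 (Real.sin ε), HasDerivWithinAt (fun t : ℝ => P ((Real.cos ε : ℝ) + (t : ℝ) * Complex.I))
      (gg ((Real.cos ε : ℝ) + (t : ℝ) * Complex.I) / ((Real.cos ε : ℝ) + (t : ℝ) * Complex.I) * Complex.I)
      (Icc 0 (Real.sin ε)) t := by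
    intro t ht
    have hne : ((Real.cos ε : ℝ) + (t : ℝ) * Complex.I : ℂ) ≠ 0 := by
      intro h
      have := congrArg Complex.re h
      simp only [Complex.add_re, Complex.ofReal_re, Complex.re_ofReal_mul, Complex.I_re, Complex.zero_re] at this
      linarith
    exact (comp_real (v := fun t : ℝ => ((Real.cos ε : ℝ) + (t : ℝ) * Complex.I : ℂ))
      (hP _ (hmem t ht) hne) ((mulI_deriv t).const_add _)).hasDerivWithinAt
  have hb : ∀ t ∈ Icc 0 (Real.sin ε), ‖gg ((Real.cos ε : ℝ) + (t : ℝ) * Complex.I) /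
      ((Real.cos ε : ℝ) + (t : ℝ) * Complex.I) * Complex.I‖ ≤
      2 * ((-Real.log (1 - Real.cos ε) + π) ^ 2 + (1 + π) ^ 2) := by
    intro t ht
    set w : ℂ := (Real.cos ε : ℝ) + (t : ℝ) * Complex.I with hw
    have hre : w.re = Real.cos ε := by
      simp only [hw, Complex.add_re, Complex.ofReal_re, Complex.re_ofReal_mul, Complex.I_re]; ring
    have him : w.im = t := by
      simp only [hw, Complex.add_im, Complex.ofReal_im, Complex.im_ofReal_mul, Complex.I_im]; ring
    have hw1 : 1 / 2 ≤ ‖w‖ := hcos.trans (hre ▸ Complex.re_le_norm w)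
    have n1 : 1 - Real.cos ε ≤ ‖1 - w‖ := by
      have := Complex.re_le_norm (1 - w)
      rwa [Complex.sub_re, hre, Complex.one_re] at this
    have n1' : ‖1 - w‖ ≤ 1 := by
      have : ‖1 - w‖ ^ 2 ≤ 1 := by
        rw [← Complex.normSq_eq_norm_sq, Complex.normSq_apply, Complex.sub_re, Complex.sub_im, hre, him]
        simp only [Complex.one_re, Complex.one_im]
        nlinarith [ht.1, ht.2]
      nlinarith [norm_nonneg (1 - w)]
    have n2 : 1 ≤ ‖1 + w‖ := by
      have := Complex.re_le_norm (1 + w)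
      rw [Complex.add_re, hre, Complex.one_re] at this
      linarith
    have n2' : ‖1 + w‖ ≤ 2 := by
      have : ‖1 + w‖ ^ 2 ≤ 4 := by
        rw [← Complex.normSq_eq_norm_sq, Complex.normSq_apply, Complex.add_re, Complex.add_im, hre, him]
        simp only [Complex.one_re, Complex.one_im]
        nlinarith [ht.1, ht.2]
      nlinarith [norm_nonneg (1 + w)]
    have l1 : ‖Complex.log (1 - w)‖ ≤ -Real.log (1 - Real.cos ε) + π := by
      refine (norm_log_le _).trans ?_
      gcongr
      rw [abs_of_nonpos (Real.log_nonpos (norm_nonneg _) n1')]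
      have := Real.log_le_log (by linarith) n1
      linarith
    have l2 : ‖Complex.log (1 + w)‖ ≤ 1 + π := by
      refine (norm_log_le _).trans ?_
      gcongr
      rw [abs_of_nonneg (Real.log_nonneg n2)]
      have := Real.log_le_sub_one_of_pos (show 0 < ‖1 + w‖ by linarith)
      linarith
    have lg1 : ‖gg w‖ ≤ (-Real.log (1 - Real.cos ε) + π) ^ 2 + (1 + π) ^ 2 := by
      rw [gg]
      refine (norm_sub_le _ _).trans ?_
      rw [norm_pow, norm_pow]
      gcongr
    rw [norm_mul, norm_div, Complex.norm_I, mul_one, div_le_iff₀ (by linarith)]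
    have : 0 ≤ (-Real.log (1 - Real.cos ε) + π) ^ 2 + (1 + π) ^ 2 := by positivity
    nlinarith
  have hmv := (convex_Icc 0 (Real.sin ε)).norm_image_sub_le_of_norm_hasDerivWithin_le hd hb
    (left_mem_Icc.2 hsin.le) (right_mem_Icc.2 hsin.le)
  have e1 : ((Real.cos ε : ℝ) + (Real.sin ε : ℝ) * Complex.I : ℂ) = ww ε := by
    rw [← ww_re, ← ww_im, Complex.re_add_im]
  have e2 : ((Real.cos ε : ℝ) + ((0 : ℝ) : ℂ) * Complex.I : ℂ) = ((Real.cos ε : ℝ) : ℂ) := by simp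
  simp only [e1, e2] at hmv
  have hr := P_real hP0 hPc hP (show 0 < Real.cos ε by linarith) hcos1
  have h3 := Complex.abs_im_le_norm (P (ww ε) - P (Real.cos ε : ℝ))
  rw [Complex.sub_im, hr, sub_zero] at h3
  refine h3.trans (hmv.trans (le_of_eq ?_))
  rw [sub_zero, Real.norm_eq_abs, abs_of_pos hsin]

lemma tend_y : Tendsto (fun y : ℝ => 2 * ((-(Real.log 2 + 2 * Real.log y) + π) ^ 2 + (1 + π) ^ 2) * (2 * y))
    (𝓝[>] 0) (𝓝 0) := by
  have hc : Continuous fun y : ℝ => 4 * ((π - Real.log 2) ^ 2 + (1 + π) ^ 2) * y - 16 * (π - Real.log 2) * (y * Real.log y)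
     + 64 * (√y * Real.log √y) ^ 2 := by
    have h1 := Real.continuous_mul_log
    have h2 : Continuous fun y : ℝ => √y * Real.log √y := h1.comp Real.continuous_sqrt
    fun_prop
  have := (hc.tendsto 0).mono_left (nhdsWithin_le_nhds (s := Ioi 0))
  simp only [Real.sqrt_zero, zero_mul, mul_zero, sub_zero, add_zero, ne_eq, OfNat.ofNat_ne_zero, not_false_eq_true, zero_pow] at this
  refine this.congr' ?_
  filter_upwards [self_mem_nhdsWithin] with y hy
  have hy : 0 < y := hy
  rw [mul_pow, Real.sq_sqrt hy.le, Real.log_sqrt hy.le]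
  ring

lemma Pww_lim {P : ℂ → ℂ} (hP0 : P 0 = 0) (hPc : ContinuousAt P 0)
    (hP : ∀ w ∈ UU, w ≠ 0 → HasDerivAt P (gg w / w) w) :
    Tendsto (fun ε => (P (ww ε)).im) (𝓝[>] 0) (𝓝 0) := by
  have hs : Tendsto (fun ε : ℝ => Real.sin (ε / 2)) (𝓝[>] 0) (𝓝[>] 0) := by
    refine tendsto_nhdsWithin_of_tendsto_nhds_of_eventually_within _ ?_ ?_
    · have : Continuous fun ε : ℝ => Real.sin (ε / 2) := by fun_prop
      simpa using (this.tendsto 0).mono_left (nhdsWithin_le_nhds (s := Ioi 0))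
    · filter_upwards [Ioc_mem_nhdsGT (show (0 : ℝ) < π / 3 by positivity)] with ε hε
      exact Real.sin_pos_of_pos_of_lt_pi (by linarith [hε.1]) (by linarith [hε.2, Real.pi_pos])
  refine squeeze_zero_norm' ?_ (tend_y.comp hs)
  filter_upwards [Ioc_mem_nhdsGT (show (0 : ℝ) < π / 3 by positivity)] with ε hε
  have hpos : 0 < Real.sin (ε / 2) :=
    Real.sin_pos_of_pos_of_lt_pi (by linarith [hε.1]) (by linarith [hε.2, Real.pi_pos])
  refine (Pww_bound hP0 hPc hP hε.1 hε.2).trans ?_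
  have e1 : 1 - Real.cos ε = 2 * Real.sin (ε / 2) ^ 2 := by
    have := Real.cos_two_mul (ε / 2)
    rw [show 2 * (ε / 2) = ε by ring] at this
    rw [this]
    linear_combination -2 * Real.sin_sq_add_cos_sq (ε / 2)
  have e2 : Real.sin ε ≤ 2 * Real.sin (ε / 2) := by
    have := Real.sin_two_mul (ε / 2)
    rw [show 2 * (ε / 2) = ε by ring] at this
    rw [this]
    nlinarith [Real.cos_le_one (ε / 2)]
  rw [e1, Real.log_mul (by norm_num) (by positivity), Real.log_pow]
  simp only [Function.comp_apply, Nat.cast_ofNat]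
  gcongr


lemma tan_half_pos {φ : ℝ} (h0 : 0 < φ) (h1 : φ ≤ π / 2) : 0 < Real.tan (φ / 2) :=
  Real.tan_pos_of_pos_of_lt_pi_div_two (by linarith) (by linarith [Real.pi_pos])

lemma tan_half_lt {φ : ℝ} (h0 : 0 < φ) (h1 : φ < π / 2) : Real.tan (φ / 2) < 1 := by
  rw [← Real.tan_pi_div_four]
  exact Real.tan_lt_tan_of_lt_of_lt_pi_div_two (by linarith [Real.pi_pos]) (by linarith [Real.pi_pos]) (by linarith)

lemma arctan_tan_half {φ : ℝ} (h0 : 0 < φ) (h1 : φ ≤ π / 2) : Real.arctan (Real.tan (φ / 2)) = φ / 2 :=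
  Real.arctan_tan (by linarith [Real.pi_pos]) (by linarith [Real.pi_pos])

lemma tan_half_comp {φ : ℝ} (h0 : 0 < φ) (h1 : φ ≤ π / 2) {g : ℝ → ℝ} {a : ℝ}
    (hg : HasDerivAt g (a / Real.tan (φ / 2)) (Real.tan (φ / 2))) :
    HasDerivAt (fun x => g (Real.tan (x / 2))) (a / Real.sin φ) φ := by
  have hc : 0 < Real.cos (φ / 2) := Real.cos_pos_of_mem_Ioo ⟨by linarith, by linarith⟩
  have hs : 0 < Real.sin (φ / 2) := Real.sin_pos_of_pos_of_lt_pi (by linarith) (by linarith [Real.pi_pos])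
  have h2 : Real.sin φ = 2 * Real.sin (φ / 2) * Real.cos (φ / 2) := by
    rw [← Real.sin_two_mul]; congr 1; ring
  have ht := (Real.hasDerivAt_tan hc.ne').comp φ ((hasDerivAt_id φ).div_const 2)
  have := HasDerivAt.comp φ hg ht
  refine this.congr_deriv ?_
  rw [h2, Real.tan_eq_sin_div_cos]
  field_simp

lemma log_two_sin {φ : ℝ} (h0 : 0 < φ) (h1 : φ ≤ π / 2) :
    Real.log (2 * Real.sin φ) =
      2 * Real.log 2 + Real.log (Real.tan (φ / 2)) - Real.log (1 + Real.tan (φ / 2) ^ 2) := by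
  have hc : 0 < Real.cos (φ / 2) := Real.cos_pos_of_mem_Ioo ⟨by linarith, by linarith⟩
  have hs : 0 < Real.sin (φ / 2) := Real.sin_pos_of_pos_of_lt_pi (by linarith) (by linarith [Real.pi_pos])
  have h2 : Real.sin φ = 2 * Real.sin (φ / 2) * Real.cos (φ / 2) := by
    rw [← Real.sin_two_mul]; congr 1; ring
  have hu := tan_half_pos h0 h1
  have e : 2 * Real.sin φ = 2 * 2 * Real.tan (φ / 2) / (1 + Real.tan (φ / 2) ^ 2) := by
    rw [h2, Real.tan_eq_sin_div_cos]
    field_simp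
    rw [add_comm, Real.sin_sq_add_cos_sq]
  rw [e, Real.log_div (by positivity) (by positivity), Real.log_mul (by positivity) hu.ne',
    Real.log_mul (by norm_num) (by norm_num)]
  ring

noncomputable def Om (P : ℂ → ℂ) (φ : ℝ) : ℝ :=
  -φ * (Real.log (2 * Real.sin φ) * Real.log (Real.tan (φ / 2))) + (P (ww φ)).im - π * φ ^ 2 / 4
    + π ^ 2 * φ / 4 + 2 * Real.log 2 * (Li 2 ((Real.tan (φ / 2) : ℝ) * Complex.I)).im
    + 2 * ((Li 2 ((Real.tan (φ / 2) : ℝ) * Complex.I)).im * Real.log (Real.tan (φ / 2)))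
    - 2 * (Li 3 ((Real.tan (φ / 2) : ℝ) * Complex.I)).im - 2 * (DD (Real.tan (φ / 2))).im

lemma Om_deriv {P : ℂ → ℂ} (hP : ∀ w ∈ UU, w ≠ 0 → HasDerivAt P (gg w / w) w) {φ : ℝ}
    (h0 : 0 < φ) (h1 : φ < π / 2) :
    HasDerivAt (Om P) (-(φ * (Real.cos φ / Real.sin φ) * Real.log (Real.tan (φ / 2)))) φ := by
  have hu := tan_half_pos h0 h1.le
  have hu1 := tan_half_lt h0 h1
  have hs : 0 < Real.sin φ := Real.sin_pos_of_pos_of_lt_pi h0 (by linarith)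
  have dL : HasDerivAt (fun x => Real.log (Real.tan (x / 2))) (1 / Real.sin φ) φ :=
    tan_half_comp h0 h1.le (by simpa using Real.hasDerivAt_log hu.ne')
  have dl : HasDerivAt (fun x => Real.log (2 * Real.sin x)) (2 * Real.cos φ / (2 * Real.sin φ)) φ :=
    ((Real.hasDerivAt_sin φ).const_mul 2).log (by positivity)
  have d2 := tan_half_comp h0 h1.le (Li2_I_deriv hu hu1)
  have d3 := tan_half_comp h0 h1.le (Li3_I_deriv hu hu1)
  have dD := tan_half_comp h0 h1.le (DDim_deriv hu)
  have dP := Pww_deriv hP h0 h1.le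
  have := (((((((((hasDerivAt_id φ).neg.mul (dl.mul dL)).add dP).sub
    ((((hasDerivAt_id φ).pow 2).const_mul π).div_const 4)).add
    (((hasDerivAt_id φ).const_mul (π ^ 2)).div_const 4)).add
    (d2.const_mul (2 * Real.log 2))).add ((d2.mul dL).const_mul 2)).sub (d3.const_mul 2)).sub
    (dD.const_mul 2))
  refine this.congr_deriv ?_
  simp only [id, Pi.mul_apply, Pi.neg_apply]
  rw [arctan_tan_half h0 h1.le, log_two_sin h0 h1.le]
  field_simp
  ring

lemma Li2_bound : ∃ C : ℝ, 0 ≤ C ∧ ∀ u : ℝ, 0 < u → u < 1 → |(Li 2 (u * Complex.I)).im| ≤ C * u := by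
  have hs : Summable (fun n : ℕ => 1 / ((n : ℝ) + 1) ^ 2) := by
    have := (summable_nat_add_iff 1).2 (Real.summable_one_div_nat_pow.2 (by norm_num : 1 < 2))
    simpa using this
  refine ⟨∑' n : ℕ, 1 / ((n : ℝ) + 1) ^ 2, tsum_nonneg (fun n => by positivity), fun u hu hu1 => ?_⟩
  refine (Complex.abs_im_le_norm _).trans ?_
  unfold Li
  refine tsum_of_norm_bounded (hs.hasSum.mul_right u) fun n => ?_
  have e : ‖((n : ℂ) + 1)‖ = (n : ℝ) + 1 := by
    have : ((n : ℂ) + 1) = ((n + 1 : ℕ) : ℂ) := by push_cast; rfl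
    rw [this, Complex.norm_natCast]; push_cast; rfl
  rw [norm_div, norm_pow, norm_pow, e, norm_mul, Complex.norm_I, mul_one, Complex.norm_real,
    Real.norm_of_nonneg hu.le, pow_succ, div_mul_eq_mul_div]
  gcongr
  exact pow_le_one₀ hu.le hu1.le

lemma tend_u_log2 : Tendsto (fun u : ℝ => u * Real.log u ^ 2) (𝓝[>] 0) (𝓝 0) := by
  have h := tendsto_log_mul_rpow_nhdsGT_zero (r := 1 / 2) (by norm_num)
  have h2 := h.pow 2
  rw [zero_pow (by norm_num)] at h2
  refine h2.congr' ?_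
  filter_upwards [self_mem_nhdsWithin] with u hu
  rw [mul_pow, ← Real.rpow_natCast (u ^ _), ← Real.rpow_mul (le_of_lt hu)]
  norm_num; ring

lemma tend_u_log : Tendsto (fun u : ℝ => u * Real.log u) (𝓝[>] 0) (𝓝 0) := by
  have h := tendsto_log_mul_rpow_nhdsGT_zero (r := 1) (by norm_num)
  refine h.congr fun u => ?_
  rw [Real.rpow_one, mul_comm]

lemma tend_tan0 : Tendsto (fun φ : ℝ => Real.tan (φ / 2)) (𝓝[>] 0) (𝓝[>] 0) := by
  refine tendsto_nhdsWithin_iff.2 ⟨?_, ?_⟩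
  · have : ContinuousAt (fun φ : ℝ => Real.tan (φ / 2)) 0 := by
      refine ContinuousAt.comp (g := Real.tan) (f := fun x => x / 2) ?_ (by fun_prop)
      exact Real.continuousAt_tan.2 (by simp)
    have := this.tendsto
    simp only [zero_div, Real.tan_zero] at this
    exact this.mono_left nhdsWithin_le_nhds
  · filter_upwards [Ioo_mem_nhdsGT (by positivity : (0 : ℝ) < π / 2)] with φ h
    exact tan_half_pos h.1 h.2.le

lemma tend_tan1 : Tendsto (fun φ : ℝ => Real.tan (φ / 2)) (𝓝[<] (π / 2)) (𝓝[<] 1) := by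
  refine tendsto_nhdsWithin_iff.2 ⟨?_, ?_⟩
  · have : ContinuousAt (fun φ : ℝ => Real.tan (φ / 2)) (π / 2) := by
      refine ContinuousAt.comp (g := Real.tan) (f := fun x => x / 2) ?_ (by fun_prop)
      refine Real.continuousAt_tan.2 ?_
      rw [show π / 2 / 2 = π / 4 by ring, Real.cos_pi_div_four]; positivity
    have := this.tendsto
    rw [show π / 2 / 2 = π / 4 by ring, Real.tan_pi_div_four] at this
    exact this.mono_left nhdsWithin_le_nhds
  · filter_upwards [Ioo_mem_nhdsLT (by positivity : (0 : ℝ) < π / 2)] with φ h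
    exact tan_half_lt h.1 h.2

lemma tend_nhds0 : Tendsto (fun φ : ℝ => φ) (𝓝[>] 0) (𝓝 0) := tendsto_id.mono_left nhdsWithin_le_nhds

lemma tend_t1 : Tendsto (fun φ : ℝ => -φ * (Real.log (2 * Real.sin φ) * Real.log (Real.tan (φ / 2))))
    (𝓝[>] 0) (𝓝 0) := by
  have a : Tendsto (fun u : ℝ => Real.arctan u / u) (𝓝[>] 0) (𝓝 1) := by
    have := (Real.hasDerivAt_arctan 0).tendsto_slope_zero_right
    simp only [zero_add, Real.arctan_zero, sub_zero, smul_eq_mul] at this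
    norm_num at this
    refine this.congr fun u => ?_
    rw [div_eq_inv_mul]
  have l1 : Tendsto (fun u : ℝ => Real.log (1 + u ^ 2)) (𝓝[>] 0) (𝓝 0) := by
    have : ContinuousAt (fun u : ℝ => Real.log (1 + u ^ 2)) 0 :=
      ContinuousAt.log (by fun_prop) (by norm_num)
    have := this.tendsto
    norm_num at this
    exact this.mono_left nhdsWithin_le_nhds
  have m : Tendsto (fun u : ℝ => -2 * (Real.arctan u / u) * (2 * Real.log 2 * (u * Real.log u) + u * Real.log u ^ 2
      - Real.log (1 + u ^ 2) * (u * Real.log u))) (𝓝[>] 0) (𝓝 (-2 * 1 * (2 * Real.log 2 * 0 + 0 - 0 * 0))) :=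
    (a.const_mul (-2)).mul (((tend_u_log.const_mul _).add tend_u_log2).sub (l1.mul tend_u_log))
  have m2 := m.comp tend_tan0
  simp only [mul_zero, add_zero, sub_zero] at m2
  refine m2.congr' ?_
  filter_upwards [Ioo_mem_nhdsGT (by positivity : (0 : ℝ) < π / 2)] with φ h
  have hu := tan_half_pos h.1 h.2.le
  simp only [Function.comp]
  rw [log_two_sin h.1 h.2.le, arctan_tan_half h.1 h.2.le]
  field_simp

lemma tend_t2 : Tendsto (fun u : ℝ => (Li 2 (u * Complex.I)).im * Real.log u) (𝓝[>] 0) (𝓝 0) := by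
  obtain ⟨C, hC, hb⟩ := Li2_bound
  have h := (tend_u_log.abs).const_mul C
  simp only [abs_zero, mul_zero] at h
  refine squeeze_zero_norm' ?_ h
  filter_upwards [Ioo_mem_nhdsGT (by norm_num : (0 : ℝ) < 1)] with u hu
  rw [norm_mul, Real.norm_eq_abs, Real.norm_eq_abs, abs_mul, abs_of_pos hu.1, ← mul_assoc]
  gcongr
  exact hb u hu.1 hu.2

lemma Om_lim0 {P : ℂ → ℂ} (hP0 : P 0 = 0) (hPc : ContinuousAt P 0)
    (hP : ∀ w ∈ UU, w ≠ 0 → HasDerivAt P (gg w / w) w) :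
    Tendsto (Om P) (𝓝[>] 0) (𝓝 (-(π * Real.log 2 ^ 2 / 4))) := by
  have h := ((((((tend_t1.add (Pww_lim hP0 hPc hP)).sub (((tend_nhds0.pow 2).const_mul π).div_const 4)).add
    ((tend_nhds0.const_mul (π ^ 2)).div_const 4)).add
    (((LiI_lim0 0).comp tend_tan0).const_mul (2 * Real.log 2))).add ((tend_t2.comp tend_tan0).const_mul 2)).sub
    (((LiI_lim0 1).comp tend_tan0).const_mul 2)).sub ((DD_lim.comp tend_tan0).const_mul 2)
  have ev : -(π * Real.log 2 ^ 2 / 4) = 0 + 0 - π * 0 ^ 2 / 4 + π ^ 2 * 0 / 4 + 2 * Real.log 2 * 0 + 2 * 0 - 2 * 0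
      - 2 * (π * Real.log 2 ^ 2 / 8) := by ring
  rw [ev]
  exact h

lemma Om_lim1 {P : ℂ → ℂ} (hP0 : P 0 = 0) (hPc : ContinuousAt P 0)
    (hP : ∀ w ∈ UU, w ≠ 0 → HasDerivAt P (gg w / w) w) :
    Tendsto (Om P) (𝓝[<] (π / 2)) (𝓝 (-4 * (DD 1).im + π * Real.log 2 ^ 2 / 4)) := by
  have hid : Tendsto (fun φ : ℝ => φ) (𝓝[<] (π / 2)) (𝓝 (π / 2)) := tendsto_id.mono_left nhdsWithin_le_nhds
  have hl : Tendsto (fun φ : ℝ => Real.log (Real.tan (φ / 2))) (𝓝[<] (π / 2)) (𝓝 0) := by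
    have h1 := (Real.continuousAt_log (one_ne_zero)).tendsto
    rw [Real.log_one] at h1
    exact h1.comp (tend_tan1.mono_right nhdsWithin_le_nhds)
  have hl2 : Tendsto (fun φ : ℝ => Real.log (2 * Real.sin φ)) (𝓝[<] (π / 2)) (𝓝 (Real.log (2 * Real.sin (π / 2)))) := by
    have : ContinuousAt (fun φ : ℝ => Real.log (2 * Real.sin φ)) (π / 2) :=
      ContinuousAt.log (by fun_prop) (by simp)
    exact this.tendsto.mono_left nhdsWithin_le_nhds
  have hPw : Tendsto (fun φ : ℝ => (P (ww φ)).im) (𝓝[<] (π / 2)) (𝓝 (P (ww (π / 2))).im) :=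
    (Pww_deriv hP (by positivity) le_rfl).continuousAt.tendsto.mono_left nhdsWithin_le_nhds
  have hD : Tendsto (fun u : ℝ => (DD u).im) (𝓝[<] 1) (𝓝 (DD 1).im) :=
    (DDim_deriv one_pos).continuousAt.tendsto.mono_left nhdsWithin_le_nhds
  have hw : ww (π / 2) = Complex.I := by
    apply Complex.ext
    · rw [ww_re]; simp
    · rw [ww_im]; simp
  have h := (((((((hid.neg.mul (hl2.mul hl)).add hPw).sub (((hid.pow 2).const_mul π).div_const 4)).add
    ((hid.const_mul (π ^ 2)).div_const 4)).add
    (((LiI_lim1 0).comp tend_tan1).const_mul (2 * Real.log 2))).add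
     ((((LiI_lim1 0).comp tend_tan1).mul hl).const_mul 2)).sub
    (((LiI_lim1 1).comp tend_tan1).const_mul 2)).sub ((hD.comp tend_tan1).const_mul 2)
  have e := P_I hP0 hPc hP
  have e3 := Li_three_I
  rw [hw] at h
  have ev : -4 * (DD 1).im + π * Real.log 2 ^ 2 / 4 =
      -(π / 2) * (Real.log (2 * Real.sin (π / 2)) * 0) + (P Complex.I).im - π * (π / 2) ^ 2 / 4 +
                π ^ 2 * (π / 2) / 4 +
              2 * Real.log 2 * (Li 2 Complex.I).im +
            2 * ((Li 2 Complex.I).im * 0) -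
          2 * (Li 3 Complex.I).im -
        2 * (DD 1).im := by
    rw [e3]
    linear_combination -e
  rw [ev]
  exact h

lemma neg_log_tan_nonneg {φ : ℝ} (h0 : 0 < φ) (h1 : φ < π / 2) :
    0 ≤ -(φ * (Real.cos φ / Real.sin φ) * Real.log (Real.tan (φ / 2))) := by
  have hs : 0 < Real.sin φ := Real.sin_pos_of_pos_of_lt_pi h0 (by linarith)
  have hc : 0 < Real.cos φ := Real.cos_pos_of_mem_Ioo ⟨by linarith, by linarith⟩
  have : Real.log (Real.tan (φ / 2)) ≤ 0 :=
    Real.log_nonpos (tan_half_pos h0 h1.le).le (tan_half_lt h0 h1).le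
  have h : 0 < φ * (Real.cos φ / Real.sin φ) := by positivity
  nlinarith

lemma Om_int :
    MeasureTheory.IntegrableOn (fun φ : ℝ => -(φ * (Real.cos φ / Real.sin φ) * Real.log (Real.tan (φ / 2))))
      (Ioc 0 (π / 2)) ∧
    ∫ φ in (0 : ℝ)..(π / 2), -(φ * (Real.cos φ / Real.sin φ) * Real.log (Real.tan (φ / 2))) =
      3 * π ^ 3 / 16 - 8 * (Li 3 ((1 + Complex.I) / 2)).im + π * Real.log 2 ^ 2 / 4 := by
  obtain ⟨P, hP0, hPc, hP⟩ := exists_P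
  have hpi : (0 : ℝ) < π / 2 := by positivity
  have hd : ∀ x ∈ Ioo 0 (π / 2), HasDerivAt (Om P) _ x := fun x hx => Om_deriv hP hx.1 hx.2
  have l0 := Om_lim0 hP0 hPc hP
  have l1 := Om_lim1 hP0 hPc hP
  have hc := continuousOn_Icc_extendFrom_Ioo (f := Om P) (fun x hx => (hd x hx).continuousAt.continuousWithinAt) l0 l1
  have hd' : ∀ x ∈ Ioo 0 (π / 2), HasDerivAt (extendFrom (Ioo 0 (π / 2)) (Om P))
      (-(x * (Real.cos x / Real.sin x) * Real.log (Real.tan (x / 2)))) x := by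
    intro x hx
    refine (hd x hx).congr_of_eventuallyEq ?_
    filter_upwards [Ioo_mem_nhds hx.1 hx.2] with y hy
    exact extendFrom_eq (subset_closure hy) ((hd y hy).continuousAt.tendsto.mono_left nhdsWithin_le_nhds)
  have hi := intervalIntegral.integrableOn_deriv_of_nonneg hc hd' (fun x hx => neg_log_tan_nonneg hx.1 hx.2)
  refine ⟨hi, ?_⟩
  rw [intervalIntegral.integral_eq_sub_of_hasDerivAt_of_tendsto hpi hd
    ((intervalIntegrable_iff_integrableOn_Ioc_of_le hpi.le).2 hi) l0 l1, DD_one]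
  ring


lemma cos_odd_int (n : ℕ) : ∫ x in (0 : ℝ)..(π / 2), Real.cos x ^ (2 * n + 1) =
    4 ^ n / ((Nat.choose (2 * n) n : ℝ) * (2 * n + 1)) := by
  induction n with
  | zero => simp
  | succ k ih =>
    have h := integral_cos_pow (a := 0) (b := π / 2) (n := 2 * k + 1)
    rw [show 2 * (k + 1) + 1 = 2 * k + 1 + 2 by ring, h, ih]
    have hc := Nat.succ_mul_centralBinom_succ k
    simp only [Nat.centralBinom] at hc
    have hc' : ((k : ℝ) + 1) * (Nat.choose (2 * (k + 1)) (k + 1) : ℝ) = 2 * (2 * k + 1) * (Nat.choose (2 * k) k : ℝ) := by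
      exact_mod_cast hc
    have p1 : (0 : ℝ) < (Nat.choose (2 * k) k : ℝ) := by exact_mod_cast Nat.choose_pos (by omega)
    have e : (Nat.choose (2 * (k + 1)) (k + 1) : ℝ) = 2 * (2 * k + 1) * (Nat.choose (2 * k) k : ℝ) / (k + 1) := by
      field_simp; linarith
    rw [e]
    simp only [Real.cos_pi_div_two, Real.sin_zero, mul_zero, sub_zero]
    push_cast
    rw [zero_pow (by omega), zero_mul]
    field_simp
    ring

lemma term_int (n : ℕ) : ∫ x in (0 : ℝ)..(π / 2), x * Real.cos x ^ (2 * n) * Real.sin x =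
    4 ^ n / ((Nat.choose (2 * n) n : ℝ) * (2 * n + 1) ^ 2) := by
  have hd : ∀ x ∈ uIcc (0 : ℝ) (π / 2), HasDerivAt (fun x : ℝ => -(x * Real.cos x ^ (2 * n + 1)))
      ((2 * n + 1) * (x * Real.cos x ^ (2 * n) * Real.sin x) - Real.cos x ^ (2 * n + 1)) x := by
    intro x _
    have := ((hasDerivAt_id x).mul ((Real.hasDerivAt_cos x).pow (2 * n + 1))).neg
    refine this.congr_deriv ?_
    simp
    ring
  have h := intervalIntegral.integral_eq_sub_of_hasDerivAt hd
    (Continuous.intervalIntegrable (by fun_prop) _ _)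
  rw [intervalIntegral.integral_sub (Continuous.intervalIntegrable (by fun_prop) _ _)
    (Continuous.intervalIntegrable (by fun_prop) _ _), intervalIntegral.integral_const_mul, cos_odd_int] at h
  simp at h
  have p1 : (0 : ℝ) < (Nat.choose (2 * n) n : ℝ) := by exact_mod_cast Nat.choose_pos (by omega)
  have p2 : (0 : ℝ) < 2 * n + 1 := by positivity
  have e : ∀ I : ℝ, (2 * n + 1) * I - 4 ^ n / ((Nat.choose (2 * n) n : ℝ) * (2 * n + 1)) = 0 →
      I = 4 ^ n / ((Nat.choose (2 * n) n : ℝ) * (2 * n + 1) ^ 2) := by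
    intro I hI
    field_simp at hI ⊢
    linarith
  exact e _ h

def eqT : ℕ × ℕ ≃ {p : ℕ × ℕ // p.2 ≤ p.1 ∧ 1 ≤ p.2} where
  toFun q := ⟨(q.1 + q.2 + 1, q.2 + 1), by constructor <;> simp⟩
  invFun p := (p.1.1 - p.1.2, p.1.2 - 1)
  left_inv q := by ext <;> simp
  right_inv p := by
    obtain ⟨⟨a, b⟩, h1, h2⟩ := p
    simp only [Subtype.mk.injEq, Prod.mk.injEq] at *
    omega

noncomputable def FF (q : ℕ × ℕ) (x : ℝ) : ℝ :=
  x * Real.cos x ^ (2 * (q.1 + q.2 + 1)) * Real.sin x / (2 * q.2 + 1)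

lemma FF_sum {x : ℝ} (h0 : 0 < x) (h1 : x < π / 2) : HasSum (fun q => FF q x)
    (-(x * (Real.cos x / Real.sin x) * Real.log (Real.tan (x / 2)))) := by
  have hs : 0 < Real.sin x := Real.sin_pos_of_pos_of_lt_pi h0 (by linarith)
  have hc : 0 < Real.cos x := Real.cos_pos_of_mem_Ioo ⟨by linarith, by linarith⟩
  have hsc := Real.sin_sq_add_cos_sq x
  have hc1 : Real.cos x < 1 := by nlinarith
  have hg : HasSum (fun m : ℕ => (Real.cos x ^ 2) ^ m) (1 - Real.cos x ^ 2)⁻¹ :=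
    hasSum_geometric_of_lt_one (by positivity) (by nlinarith)
  have hl := Real.hasSum_log_sub_log_of_abs_lt_one (x := Real.cos x) (by rw [abs_of_pos hc]; exact hc1)
  have hm := (hg.mul hl (hg.summable.mul_of_nonneg hl.summable (fun m => by positivity) (fun k => by positivity))).mul_left
    (x * Real.cos x * Real.sin x / 2)
  have hch : 0 < Real.cos (x / 2) := Real.cos_pos_of_mem_Ioo ⟨by linarith, by linarith⟩
  have hsh : 0 < Real.sin (x / 2) := Real.sin_pos_of_pos_of_lt_pi (by linarith) (by linarith [Real.pi_pos])
  have hcx : Real.cos x = 2 * Real.cos (x / 2) ^ 2 - 1 := by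
    rw [← Real.cos_two_mul]; congr 1; ring
  have hcx' := Real.sin_sq_add_cos_sq (x / 2)
  have el : Real.log (1 + Real.cos x) - Real.log (1 - Real.cos x) = -2 * Real.log (Real.tan (x / 2)) := by
    rw [show 1 + Real.cos x = 2 * Real.cos (x / 2) ^ 2 by linarith,
      show 1 - Real.cos x = 2 * Real.sin (x / 2) ^ 2 by linarith, Real.tan_eq_sin_div_cos,
      Real.log_mul (by norm_num) (by positivity), Real.log_mul (by norm_num) (by positivity),
      Real.log_pow, Real.log_pow, Real.log_div hsh.ne' hch.ne']
    push_cast; ring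
  have e1 : (-(x * (Real.cos x / Real.sin x) * Real.log (Real.tan (x / 2)))) = x * Real.cos x * Real.sin x / 2 *
      ((1 - Real.cos x ^ 2)⁻¹ * (Real.log (1 + Real.cos x) - Real.log (1 - Real.cos x))) := by
    rw [el, show 1 - Real.cos x ^ 2 = Real.sin x ^ 2 by linarith]
    field_simp
  rw [e1]
  refine (funext fun q => ?_ : _ = fun q => FF q x) ▸ hm
  unfold FF
  field_simp
  ring

lemma FF_nonneg (q : ℕ × ℕ) {x : ℝ} (h0 : 0 < x) (h1 : x < π / 2) : 0 ≤ FF q x := by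
  have hs : 0 < Real.sin x := Real.sin_pos_of_pos_of_lt_pi h0 (by linarith)
  have hc : 0 < Real.cos x := Real.cos_pos_of_mem_Ioo ⟨by linarith, by linarith⟩
  unfold FF
  positivity

lemma FF_cont (q : ℕ × ℕ) : Continuous (FF q) := by
  unfold FF
  fun_prop

open MeasureTheory in
lemma series_int : ∑' q : ℕ × ℕ, ∫ x in (0 : ℝ)..(π / 2), FF q x =
    ∫ φ in (0 : ℝ)..(π / 2), -(φ * (Real.cos φ / Real.sin φ) * Real.log (Real.tan (φ / 2))) := by
  have hpi : (0 : ℝ) ≤ π / 2 := by positivity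
  have hi := Om_int.1.mono_set Ioo_subset_Ioc_self
  simp only [intervalIntegral.integral_of_le hpi, integral_Ioc_eq_integral_Ioo]
  rw [← integral_tsum (fun q => (FF_cont q).aestronglyMeasurable)]
  · refine setIntegral_congr_fun measurableSet_Ioo fun x hx => ?_
    exact (FF_sum hx.1 hx.2).tsum_eq
  · rw [← lintegral_tsum (fun q => (FF_cont q).measurable.enorm.aemeasurable)]
    have : ∫⁻ x in Ioo 0 (π / 2), ∑' q, ‖FF q x‖ₑ =
        ∫⁻ x in Ioo 0 (π / 2), ENNReal.ofReal (-(x * (Real.cos x / Real.sin x) * Real.log (Real.tan (x / 2)))) := by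
      refine setLIntegral_congr_fun measurableSet_Ioo fun x hx => ?_
      have hS := FF_sum hx.1 hx.2
      rw [← hS.tsum_eq, ENNReal.ofReal_tsum_of_nonneg (fun q => FF_nonneg q hx.1 hx.2) hS.summable]
      refine tsum_congr fun q => ?_
      exact Real.enorm_of_nonneg (FF_nonneg q hx.1 hx.2)
    rw [this]
    exact (hi.lintegral_lt_top).ne

end Helpers


/-- `∑_{n₁ ≥ n₂ ≥ 1} 4^{n₁}/(binom(2n₁,n₁)(2n₁+1)²(2n₂−1))
  = 3π³/16 − 8 Im Li₃((1+i)/2) + π log²2/4`. -/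
theorem stmt14 :
    (∑' p : {p : ℕ × ℕ // p.2 ≤ p.1 ∧ 1 ≤ p.2},
      (4 : ℝ) ^ p.1.1 /
        ((Nat.choose (2 * p.1.1) p.1.1 : ℝ) * (2 * (p.1.1 : ℝ) + 1) ^ 2 *
          (2 * (p.1.2 : ℝ) - 1))) =
    3 * π ^ 3 / 16 -
      8 * (∑' n : ℕ, ((1 + Complex.I) / 2) ^ (n + 1) / ((n : ℂ) + 1) ^ 3).im +
      π * Real.log 2 ^ 2 / 4 := by
  have h := series_int
  rw [Om_int.2] at h
  change _ = 3 * π ^ 3 / 16 - 8 * (Li 3 ((1 + Complex.I) / 2)).im + π * Real.log 2 ^ 2 / 4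
  rw [← h, ← eqT.tsum_eq]
  refine tsum_congr fun q => ?_
  unfold FF
  rw [intervalIntegral.integral_div, term_int]
  simp only [eqT, Equiv.coe_fn_mk]
  rw [div_div]
  congr 2
  push_cast
  ring
end
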